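/- arXiv:1411.4796 — 3 statements merged into one kernel-verified Lean document; each statement's English description precedes it below -/
import Mathlib

section
/- It is undecidable whether Attacker has a winning strategy in the weighted Word Game with words over a binary free group alphabet: the predicate on encoded instances (Attacker's finite list of pairs (u_i, x_{u_i}) ∈ F₂ × ℤ, Defender's finite list of pairs (v_j, x_{v_j}) ∈ F₂ × ℤ, and an initial word w ∈ F₂, with free group elements encoded as reduced words over the generators and their inverses) asserting that Attacker has a winning strategy is not a computable predicate. -/
/-- The free group on two generators, identified with reduced words over the binary group
alphabet `{c, d, c̄, d̄}`. -/
abbrev F2 : Type := FreeGroup Bool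

/-- A word over the binary group alphabet: a letter is a generator (`Bool`) together with a
sign (`true` for the generator, `false` for its inverse). -/
abbrev BWord : Type := List (Bool × Bool)

/-- An encoded instance of the weighted Word Game: Attacker's finite list of words with
integer weights, Defender's finite list of words with integer weights, and the initial
word. -/
abbrev WWGInstance : Type := List (BWord × ℤ) × List (BWord × ℤ) × BWord

/-- The configuration (word, counter) after `k` rounds of the weighted Word Game, starting
from `(w0, 0)`, when Defender plays the sequence of moves `δ` and Attacker follows the
strategy `st` (a function of the finite history of Defender's choices so far). -/
def wwgPos (w0 : F2) (δ : ℕ → F2 × ℤ) (st : List (F2 × ℤ) → F2 × ℤ) : ℕ → F2 × ℤ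
  | 0 => (w0, 0)
  | k + 1 =>
    let p := wwgPos w0 δ st k
    let dm := δ k
    let am := st ((List.range (k + 1)).map δ)
    (p.1 * dm.1 * am.1, p.2 + dm.2 + am.2)

/-- Attacker has a winning strategy in the weighted Word Game with Attacker's weighted word
list `A`, Defender's weighted word list `D` and initial word `w0`: there is a strategy,
choosing a move from `A` for every finite history of Defender's moves, such that every
infinite play consistent with it reaches the configuration `(1, 0)` (empty word, zero
counter) after some Attacker move. -/
def WWGAttackerWins (A D : List (F2 × ℤ)) (w0 : F2) : Prop :=
  ∃ st : List (F2 × ℤ) → F2 × ℤ,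
    (∀ hist, (∀ x ∈ hist, x ∈ D) → st hist ∈ A) ∧
    ∀ δ : ℕ → F2 × ℤ, (∀ i, δ i ∈ D) → ∃ n, wwgPos w0 δ st (n + 1) = (1, 0)


namespace WWG

/-- One full round: Defender's move `d`, then Attacker's move `a`. -/
def mv {G : Type*} [Group G] (p d a : G × ℤ) : G × ℤ :=
  (p.1 * d.1 * a.1, p.2 + d.2 + a.2)

/-- Positional winning region of Attacker (configurations after an Attacker move). -/
inductive GWin {G : Type*} [Group G] (A D : List (G × ℤ)) : G × ℤ → Prop
  | intro (p : G × ℤ) (f : G × ℤ → G × ℤ) (hf : ∀ d ∈ D, f d ∈ A)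
      (h : ∀ d ∈ D, mv p d (f d) ≠ (1, 0) → GWin A D (mv p d (f d))) : GWin A D p

theorem GWin.of_exists {G : Type*} [Group G] {A D : List (G × ℤ)} {p : G × ℤ}
    (h : ∀ d ∈ D, ∃ a ∈ A, mv p d a = (1, 0) ∨ GWin A D (mv p d a)) : GWin A D p := by
  classical
  choose! f hf using h
  exact GWin.intro p f (fun d hd => (hf d hd).1)
    (fun d hd hne => ((hf d hd).2).resolve_left hne)

/-- transport of a weighted word along a homomorphism -/
def wmap {G H : Type*} [Group G] [Group H] (φ : G →* H) (p : G × ℤ) : H × ℤ := (φ p.1, p.2)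

theorem wmap_mv {G H : Type*} [Group G] [Group H] (φ : G →* H) (p d a : G × ℤ) :
    wmap φ (mv p d a) = mv (wmap φ p) (wmap φ d) (wmap φ a) := by
  simp [wmap, mv]

theorem GWin.map {G H : Type*} [Group G] [Group H] (φ : G →* H) {A D : List (G × ℤ)}
    {p : G × ℤ} (h : GWin A D p) : GWin (A.map (wmap φ)) (D.map (wmap φ)) (wmap φ p) := by
  induction h with
  | intro p f hf _ ih =>
    refine GWin.of_exists ?_
    intro d' hd'
    obtain ⟨d, hd, rfl⟩ := List.mem_map.1 hd'
    refine ⟨wmap φ (f d), List.mem_map_of_mem (hf d hd), ?_⟩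
    rw [← wmap_mv]
    by_cases hw : mv p d (f d) = (1, 0)
    · left; rw [hw]; simp [wmap]
    · right; exact ih d hd hw

/-- positions of a play started at an arbitrary configuration -/
def gPos (p : F2 × ℤ) (δ : ℕ → F2 × ℤ) (st : List (F2 × ℤ) → F2 × ℤ) : ℕ → F2 × ℤ
  | 0 => p
  | k + 1 => mv (gPos p δ st k) (δ k) (st ((List.range (k + 1)).map δ))

theorem gPos_eq (w : F2) (δ : ℕ → F2 × ℤ) (st : List (F2 × ℤ) → F2 × ℤ) (k : ℕ) :
    wwgPos w δ st k = gPos (w, 0) δ st k := by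
  induction k with
  | zero => rfl
  | succ k ih => simp only [wwgPos, gPos, ih, mv]

theorem gPos_shift (p : F2 × ℤ) (δ : ℕ → F2 × ℤ) (st : List (F2 × ℤ) → F2 × ℤ) (k : ℕ) :
    gPos p δ st (k + 1) =
      gPos (mv p (δ 0) (st [δ 0])) (fun i => δ (i + 1)) (fun h => st (δ 0 :: h)) k := by
  induction k with
  | zero => simp [gPos]
  | succ k ih =>
    rw [gPos, ih, gPos]
    congr 2
    rw [List.range_succ_eq_map (n := k + 1)]
    simp [Function.comp_def]

theorem GWin.strategy {A D : List (F2 × ℤ)} (a0 : F2 × ℤ) (ha0 : a0 ∈ A) {p : F2 × ℤ}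
    (h : GWin A D p) :
    ∃ st : List (F2 × ℤ) → F2 × ℤ,
      (∀ hist, (∀ x ∈ hist, x ∈ D) → st hist ∈ A) ∧
      ∀ δ : ℕ → F2 × ℤ, (∀ i, δ i ∈ D) → ∃ n, gPos p δ st (n + 1) = (1, 0) := by
  classical
  induction h with
  | intro p f hf _ ih =>
    have ih' : ∀ d, ∃ st : List (F2 × ℤ) → F2 × ℤ,
        (∀ hist, (∀ x ∈ hist, x ∈ D) → st hist ∈ A) ∧
        (d ∈ D → mv p d (f d) ≠ (1, 0) → ∀ δ : ℕ → F2 × ℤ, (∀ i, δ i ∈ D) →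
          ∃ n, gPos (mv p d (f d)) δ st (n + 1) = (1, 0)) := by
      intro d
      by_cases hd : d ∈ D ∧ mv p d (f d) ≠ (1, 0)
      · obtain ⟨st, h1, h2⟩ := ih d hd.1 hd.2
        exact ⟨st, h1, fun _ _ => h2⟩
      · exact ⟨fun _ => a0, fun _ _ => ha0, fun h1 h2 => absurd ⟨h1, h2⟩ hd⟩
    choose g hg1 hg2 using ih'
    let st : List (F2 × ℤ) → F2 × ℤ := fun hist =>
      match hist with
      | [] => a0
      | [d] => f d
      | d :: e :: t => g d (e :: t)
    refine ⟨st, ?_, ?_⟩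
    · intro hist hh
      match hist, hh with
      | [], _ => exact ha0
      | [d], hh => exact hf d (hh d (by simp))
      | d :: e :: t, hh => exact hg1 d _ (fun x hx => hh x (List.mem_cons_of_mem _ hx))
    · intro δ hδ
      by_cases hw : mv p (δ 0) (f (δ 0)) = (1, 0)
      · exact ⟨0, by simpa [gPos, st] using hw⟩
      · obtain ⟨n, hn⟩ := hg2 (δ 0) (hδ 0) hw (fun i => δ (i + 1)) (fun i => hδ _)
        refine ⟨n + 1, ?_⟩
        rw [gPos_shift]
        rw [← hn]
        have : ∀ k, gPos (mv p (δ 0) (st [δ 0])) (fun i => δ (i + 1)) (fun h => st (δ 0 :: h)) k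
            = gPos (mv p (δ 0) (f (δ 0))) (fun i => δ (i + 1)) (g (δ 0)) k := by
          intro k
          induction k with
          | zero => rfl
          | succ k ihk =>
            rw [gPos, gPos, ihk]
            congr 1
            rw [List.range_succ_eq_map]
            rfl
        exact this _

theorem wins_of_GWin {A D : List (F2 × ℤ)} (a0 : F2 × ℤ) (ha0 : a0 ∈ A) {w : F2}
    (h : GWin A D (w, 0)) : WWGAttackerWins A D w := by
  obtain ⟨st, h1, h2⟩ := h.strategy a0 ha0
  refine ⟨st, h1, fun δ hδ => ?_⟩
  obtain ⟨n, hn⟩ := h2 δ hδ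
  exact ⟨n, by rw [gPos_eq]; exact hn⟩

/-- A trap for Attacker prevents him from winning. -/
theorem not_wins_of_trap {A D : List (F2 × ℤ)} {w : F2} (Bad : F2 × ℤ → Prop)
    (h0 : Bad (w, 0)) (h1 : ¬ Bad (1, 0))
    (hstep : ∀ p, Bad p → ∃ d ∈ D, ∀ a ∈ A, Bad (mv p d a)) : ¬ WWGAttackerWins A D w := by
  classical
  rintro ⟨st, hA, hwin⟩
  choose! pick hpD hpick using hstep
  let s : ℕ → List (F2 × ℤ) × (F2 × ℤ) := fun n => Nat.rec ([], (w, 0))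
    (fun _ q => (q.1 ++ [pick q.2], mv q.2 (pick q.2) (st (q.1 ++ [pick q.2])))) n
  have hs : ∀ n, s (n + 1) = ((s n).1 ++ [pick (s n).2],
      mv (s n).2 (pick (s n).2) (st ((s n).1 ++ [pick (s n).2]))) := fun n => rfl
  let δ : ℕ → F2 × ℤ := fun n => pick (s n).2
  have hinv : ∀ n, Bad (s n).2 ∧ (∀ x ∈ (s n).1, x ∈ D) := by
    intro n
    induction n with
    | zero => exact ⟨h0, by simp [s]⟩
    | succ n ih =>
      have hx : ∀ x ∈ (s n).1 ++ [pick (s n).2], x ∈ D := by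
        intro x hx
        rcases List.mem_append.1 hx with hx | hx
        · exact ih.2 x hx
        · rw [List.mem_singleton.1 hx]; exact hpD _ ih.1
      rw [hs]
      exact ⟨hpick _ ih.1 _ (hA _ hx), hx⟩
  have heq : ∀ n, (s n).1 = (List.range n).map δ ∧ (s n).2 = gPos (w, 0) δ st n := by
    intro n
    induction n with
    | zero => exact ⟨rfl, rfl⟩
    | succ n ih =>
      have h2 : (s n).1 ++ [pick (s n).2] = (List.range (n + 1)).map δ := by
        rw [ih.1, List.range_succ, List.map_append]; rfl
      rw [hs]
      refine ⟨h2, ?_⟩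
      dsimp only
      rw [h2, gPos, ← ih.2]
  obtain ⟨n, hn⟩ := hwin δ (fun i => hpD _ (hinv i).1)
  rw [gPos_eq, ← (heq _).2] at hn
  exact h1 (hn ▸ (hinv (n + 1)).1)

end WWG

namespace WWG

/-- Matching lemma: in a word with trivial value, a letter standing at the end of a reduced prefix
has a matching inverse letter later on, and what lies in between has trivial value. -/
theorem matching_aux {α : Type*} (u : List (α × Bool)) (x : α × Bool) (B : List (α × Bool)) :
    ∀ v : List (α × Bool), FreeGroup.IsReduced (u ++ x :: v) →
      FreeGroup.mk (u ++ x :: v ++ B) = 1 →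
      ∃ B1 B2, B = B1 ++ (x.1, !x.2) :: B2 ∧ FreeGroup.mk (v ++ B1) = 1 := by
  classical
  induction B with
  | nil =>
    intro v hr h1
    rw [List.append_nil] at h1
    have := congrArg FreeGroup.toWord h1
    rw [FreeGroup.toWord_mk, hr.reduce_eq] at this
    simp at this
  | cons b B ih =>
    intro v hr h1
    rcases List.eq_nil_or_concat v with rfl | ⟨v', d, rfl⟩
    · by_cases hb : b = (x.1, !x.2)
      · exact ⟨[], B, by simp [hb], rfl⟩
      · obtain ⟨B1, B2, e1, e2⟩ := ih [b] (by
          refine FreeGroup.IsReduced.append_overlap (L₁ := u) (L₂ := [x]) (L₃ := [b]) hr ?_ (by simp)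
            |> fun h => by simpa using h
          simp only [List.singleton_append, FreeGroup.isReduced_cons_cons]
          refine ⟨fun h => ?_, FreeGroup.IsReduced.singleton⟩
          by_contra hne
          apply hb
          ext
          · exact h.symm
          · cases hx : x.2 <;> cases hb2 : b.2 <;> simp_all) (by simpa using h1)
        exact ⟨b :: B1, B2, by simp [e1], by simpa using e2⟩
    · by_cases hb : b = (d.1, !d.2)
      · have hcancel : ∀ L R : List (α × Bool), FreeGroup.mk (L ++ d :: b :: R)
            = FreeGroup.mk (L ++ R) := by
          intro L R
          subst hb
          exact Quot.sound (FreeGroup.Red.Step.not (L₁ := L) (L₂ := R) (x := d.1) (b := d.2))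
        obtain ⟨B1, B2, e1, e2⟩ := ih v' (hr.infix ⟨[], [d], by simp⟩) (by
          rw [← h1]
          have := hcancel (u ++ x :: v') B
          simp only [List.concat_eq_append, List.append_assoc, List.cons_append, List.nil_append] at this ⊢
          exact this.symm)
        refine ⟨b :: B1, B2, by simp [e1], ?_⟩
        rw [← e2, ← hcancel v' B1]
        simp
      · obtain ⟨B1, B2, e1, e2⟩ := ih (v' ++ [d] ++ [b]) (by
          have := FreeGroup.IsReduced.append_overlap (L₁ := u ++ x :: v') (L₂ := [d]) (L₃ := [b])
            (by simpa using hr) (by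
              simp only [List.singleton_append, FreeGroup.isReduced_cons_cons]
              refine ⟨fun h => ?_, FreeGroup.IsReduced.singleton⟩
              by_contra hne
              apply hb
              ext
              · exact h.symm
              · cases hx : d.2 <;> cases hb2 : b.2 <;> simp_all) (by simp)
          simpa using this) (by simpa using h1)
        exact ⟨b :: B1, B2, by simp [e1], by simpa using e2⟩

theorem matching {α : Type*} (u : List (α × Bool)) (x : α × Bool) (B : List (α × Bool))
    (hr : FreeGroup.IsReduced (u ++ [x])) (h1 : FreeGroup.mk (u ++ x :: B) = 1) :
    ∃ B1 B2, B = B1 ++ (x.1, !x.2) :: B2 ∧ FreeGroup.mk B1 = 1 := by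
  simpa using matching_aux u x B [] hr (by simpa using h1)

theorem flatMap_split {β γ : Type*} (f : β → List γ) (l : γ) :
    ∀ (ms : List β) (B1 B2 : List γ), ms.flatMap f = B1 ++ l :: B2 →
      ∃ ms1 m ms2 r1 r2, ms = ms1 ++ m :: ms2 ∧ f m = r1 ++ l :: r2 ∧
        B1 = ms1.flatMap f ++ r1 := by
  intro ms
  induction ms with
  | nil => intro B1 B2 h; simp at h
  | cons m ms ih =>
    intro B1 B2 h
    rw [List.flatMap_cons, List.append_eq_append_iff] at h
    rcases h with ⟨a, h1, h2⟩ | ⟨a, h1, h2⟩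
    · obtain ⟨ms1, m', ms2, r1, r2, e1, e2, e3⟩ := ih _ _ h2
      exact ⟨m :: ms1, m', ms2, r1, r2, by simp [e1], e2, by simp [h1, e3]⟩
    · rcases a with _ | ⟨a0, a⟩
      · obtain ⟨ms1, m', ms2, r1, r2, e1, e2, e3⟩ := ih [] B2 (by simpa using h2.symm)
        refine ⟨m :: ms1, m', ms2, r1, r2, by simp [e1], e2, ?_⟩
        simp only [List.append_nil] at h1
        simp [List.append_assoc, ← e3, h1]
      · simp only [List.cons_append, List.cons.injEq] at h2
        obtain ⟨rfl, h2⟩ := h2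
        exact ⟨[], m, ms, B1, a, rfl, h1, by simp⟩

/-- Letters: `z` carries Defender's choices, `g` is the growing state, `st q` the other states,
`sy y` the stack symbols. -/
inductive Ltr (Q Y : Type) : Type
  | z : Ltr Q Y
  | g : Ltr Q Y
  | st : Q → Ltr Q Y
  | sy : Y → Ltr Q Y

/-- Attacker's moves, without the answer to Defender's choice. -/
inductive Mv (Q Y : Type) : Type
  | grow : Y → Mv Q Y
  | start : Q → Mv Q Y
  | pop : Q → Y → Q → Mv Q Y
  | fin : Q → Mv Q Y

variable {Q Y : Type}

open Ltr in
/-- the word of a move -/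
def Mv.word : Mv Q Y → List (Ltr Q Y × Bool)
  | .grow y => [(g, false), (sy y, true), (g, true)]
  | .start q => [(g, false), (st q, true)]
  | .pop q y q' => [(st q, false), (sy y, false), (st q', true)]
  | .fin q => [(st q, false)]

/-- the concatenation of the words of some moves -/
def flat (ms : List (Mv Q Y)) : List (Ltr Q Y × Bool) := ms.flatMap Mv.word

/-- state-counting homomorphism -/
def chi : FreeGroup (Ltr Q Y) →* Multiplicative ℤ :=
  FreeGroup.lift fun
    | .z => 1
    | .g => Multiplicative.ofAdd 2
    | .st _ => Multiplicative.ofAdd 1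
    | .sy _ => 1

/-- dihedral homomorphism -/
def theta : FreeGroup (Ltr Q Y) →* Equiv.Perm ℤ :=
  FreeGroup.lift fun
    | .z => 1
    | .g => 1
    | .st _ => Equiv.neg ℤ
    | .sy _ => Equiv.addRight (1 : ℤ)

/-- additive form of `chi` -/
def chiA (L : List (Ltr Q Y × Bool)) : ℤ := (chi (FreeGroup.mk L)).toAdd

theorem chiA_append (L L' : List (Ltr Q Y × Bool)) : chiA (L ++ L') = chiA L + chiA L' := by
  simp [chiA, ← FreeGroup.mul_mk]

theorem chiA_eq_zero {L : List (Ltr Q Y × Bool)} (h : FreeGroup.mk L = 1) : chiA L = 0 := by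
  simp [chiA, h]

theorem chiA_word (m : Mv Q Y) : chiA m.word ≤ 0 := by
  cases m <;> simp [chiA, chi, Mv.word]

theorem chiA_flat (ms : List (Mv Q Y)) : chiA (flat ms) ≤ 0 := by
  induction ms with
  | nil => simp [flat, chiA, ← FreeGroup.one_eq_mk]
  | cons m ms ih =>
    have : flat (m :: ms) = m.word ++ flat ms := by simp [flat]
    rw [this, chiA_append]
    have := chiA_word m
    omega

theorem flat_cons (m : Mv Q Y) (ms : List (Mv Q Y)) : flat (m :: ms) = m.word ++ flat ms := by
  simp [flat]

theorem theta_flat (ms : List (Mv Q Y)) (h : chiA (flat ms) = 0) (x : ℤ) :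
    theta (FreeGroup.mk (flat ms)) x = x + ms.length := by
  induction ms with
  | nil => simp [flat, ← FreeGroup.one_eq_mk]
  | cons m ms ih =>
    rw [flat_cons, chiA_append] at h
    have h1 := chiA_word m
    have h2 := chiA_flat ms
    have h3 : chiA m.word = 0 := by omega
    have h4 : chiA (flat ms) = 0 := by omega
    rw [flat_cons, ← FreeGroup.mul_mk, map_mul, Equiv.Perm.mul_apply, ih h4]
    cases m with
    | grow y => simp [theta, Mv.word, Equiv.Perm.one_apply]; ring
    | start q => simp [chiA, chi, Mv.word] at h3
    | pop q y q' => simp [theta, Mv.word, Equiv.Perm.mul_apply, Equiv.Perm.inv_def]; ring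
    | fin q => simp [chiA, chi, Mv.word] at h3

theorem star {ms : List (Mv Q Y)} (h : FreeGroup.mk (flat ms) = 1) : ms = [] := by
  have h1 := theta_flat ms (chiA_eq_zero h) 0
  rw [h] at h1
  simp at h1
  exact List.length_eq_zero_iff.1 (by exact_mod_cast h1.symm)

/-- stack word (the head of the list is the top of the stack) -/
def sw (σ : List Y) : List (Ltr Q Y × Bool) := σ.reverse.map fun y => (Ltr.sy y, true)

theorem isReduced_pos {α : Type*} (L : List (α × Bool)) (h : ∀ x ∈ L, x.2 = true) :
    FreeGroup.IsReduced L := by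
  apply List.IsChain.imp (R := fun a b => a.2 = true ∧ b.2 = true)
  · intro a b hab _; rw [hab.1, hab.2]
  · induction L with
    | nil => simp
    | cons a L ih =>
      rcases L with _ | ⟨b, L⟩
      · simp
      · rw [List.isChain_cons_cons]
        exact ⟨⟨h a (by simp), h b (by simp)⟩, ih (fun x hx => h x (List.mem_cons_of_mem _ hx))⟩

theorem sw_pos (σ : List Y) : ∀ x ∈ (sw σ : List (Ltr Q Y × Bool)), x.2 = true := by
  intro x hx
  simp only [sw, List.mem_map] at hx
  obtain ⟨y, _, rfl⟩ := hx
  rfl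

theorem parse_g {σ : List Y} {ms : List (Mv Q Y)}
    (h : FreeGroup.mk (sw σ ++ (Ltr.g, true) :: flat ms) = 1) :
    ∃ m ms', ms = m :: ms' ∧ ((∃ y, m = .grow y) ∨ ∃ q, m = .start q) := by
  obtain ⟨B1, B2, e1, e2⟩ := matching _ _ _ (isReduced_pos _ (by
    intro x hx
    rcases List.mem_append.1 hx with hx | hx
    · exact sw_pos σ x hx
    · rw [List.mem_singleton.1 hx])) h
  obtain ⟨ms1, m, ms2, r1, r2, f1, f2, f3⟩ := flatMap_split _ _ _ _ _ e1
  have hr1 : r1 = [] ∧ ((∃ y, m = .grow y) ∨ ∃ q, m = .start q) := by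
    cases m <;> simp [Mv.word] at f2 ⊢ <;>
      rcases r1 with _ | ⟨a, _ | ⟨b, _ | ⟨c, _ | ⟨d, r1⟩⟩⟩⟩ <;> simp at f2 ⊢
  obtain ⟨rfl, hm⟩ := hr1
  rw [f3, List.append_nil] at e2
  have := star e2
  subst this
  exact ⟨m, ms2, by simpa using f1, hm⟩

theorem parse_q {σ : List Y} {q : Q} {ms : List (Mv Q Y)}
    (h : FreeGroup.mk (sw σ ++ (Ltr.st q, true) :: flat ms) = 1) :
    ∃ m ms', ms = m :: ms' ∧
      (m = .fin q ∨ ∃ y q' σ', m = .pop q y q' ∧ σ = y :: σ') := by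
  obtain ⟨B1, B2, e1, e2⟩ := matching _ _ _ (isReduced_pos _ (by
    intro x hx
    rcases List.mem_append.1 hx with hx | hx
    · exact sw_pos σ x hx
    · rw [List.mem_singleton.1 hx])) h
  obtain ⟨ms1, m, ms2, r1, r2, f1, f2, f3⟩ := flatMap_split _ _ _ _ _ e1
  have hr1 : r1 = [] ∧ (m = .fin q ∨ ∃ y q', m = .pop q y q') := by
    cases m <;> simp [Mv.word] at f2 ⊢ <;>
      rcases r1 with _ | ⟨a, _ | ⟨b, _ | ⟨c, _ | ⟨d, r1⟩⟩⟩⟩ <;> simp at f2 ⊢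
    · exact f2.1
    · exact f2.1
  obtain ⟨rfl, hm⟩ := hr1
  rw [f3, List.append_nil] at e2
  have := star e2
  subst this
  refine ⟨m, ms2, by simpa using f1, ?_⟩
  rcases hm with rfl | ⟨y, q', rfl⟩
  · left; rfl
  right
  refine ⟨y, q', ?_⟩
  by_contra hcon
  have hσ : ∀ σ', σ ≠ y :: σ' := fun σ' hs => hcon ⟨σ', rfl, hs⟩
  have h' : FreeGroup.mk (sw σ ++ (Ltr.sy y, false) :: ((Ltr.st q', true) :: flat ms2)) = 1 := by
    rw [← h, f1]
    simp only [List.flatMap_nil, List.nil_append, flat_cons, Mv.word, List.cons_append]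
    symm
    exact Quot.sound (FreeGroup.Red.Step.not (L₁ := sw σ) (x := Ltr.st q) (b := true))
  obtain ⟨C1, C2, g1, g2⟩ := matching _ _ _ (by
    rcases σ with _ | ⟨y', σ'⟩
    · simp [sw]
    · have := FreeGroup.IsReduced.append_overlap (L₁ := sw σ') (L₂ := [(Ltr.sy y', true)])
        (L₃ := [((Ltr.sy y : Ltr Q Y), false)]) (by
          have := isReduced_pos _ (sw_pos (Q := Q) (y' :: σ'))
          simpa [sw] using this) (by
          simp only [List.singleton_append, FreeGroup.isReduced_cons_cons]
          refine ⟨fun he => ?_, FreeGroup.IsReduced.singleton⟩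
          simp only [Ltr.sy.injEq] at he
          exact absurd (by rw [he]) (hσ σ')) (by simp)
      simpa [sw] using this) h'
  rcases C1 with _ | ⟨c, C1⟩
  · simp at g1
  simp only [List.cons_append, List.cons.injEq] at g1
  obtain ⟨rfl, g1⟩ := g1
  obtain ⟨ns1, m, ns2, r1, r2, k1, k2, k3⟩ := flatMap_split _ _ _ _ _ g1
  have hr : r1 = [(Ltr.g, false)] := by
    cases m <;> simp [Mv.word] at k2 ⊢ <;>
      rcases r1 with _ | ⟨a, _ | ⟨b, _ | ⟨c, _ | ⟨d, r1⟩⟩⟩⟩ <;> simp at k2 ⊢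
    exact k2.1.symm
  subst hr
  have hc := chiA_eq_zero g2
  rw [k3] at hc
  have hx : chiA ((Ltr.st q', true) :: (ns1.flatMap Mv.word ++ [((Ltr.g : Ltr Q Y), false)])) =
    chiA [((Ltr.st q' : Ltr Q Y), true)] + (chiA (flat ns1) + chiA [((Ltr.g : Ltr Q Y), false)]) := by
    rw [← chiA_append, ← chiA_append]; rfl
  rw [hx] at hc
  have h1 := chiA_flat ns1
  have h2 : chiA [((Ltr.st q' : Ltr Q Y), true)] = 1 := by simp [chiA, chi]
  have h3 : chiA [((Ltr.g : Ltr Q Y), false)] = -2 := by simp [chiA, chi]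
  omega

theorem parse_s {σ : List Y} {y : Y} {ms : List (Mv Q Y)}
    (h : FreeGroup.mk (sw (y :: σ) ++ flat ms) = 1) : False := by
  have he : (sw (y :: σ) : List (Ltr Q Y × Bool)) = sw σ ++ [(Ltr.sy y, true)] := by simp [sw]
  rw [he, List.append_assoc, List.singleton_append] at h
  obtain ⟨B1, B2, e1, e2⟩ := matching _ _ _ (by
    rw [← he]; exact isReduced_pos _ (sw_pos _)) h
  obtain ⟨ms1, m, ms2, r1, r2, f1, f2, f3⟩ := flatMap_split _ _ _ _ _ e1
  have hr1 : ∃ q, r1 = [(Ltr.st q, false)] := by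
    cases m <;> simp [Mv.word] at f2 ⊢ <;>
      rcases r1 with _ | ⟨a, _ | ⟨b, _ | ⟨c, _ | ⟨d, r1⟩⟩⟩⟩ <;> simp at f2 ⊢
    exact ⟨_, f2.1.symm⟩
  obtain ⟨q, rfl⟩ := hr1
  have hc := chiA_eq_zero e2
  rw [f3, chiA_append] at hc
  have h1 := chiA_flat ms1
  have h2 : chiA [((Ltr.st q : Ltr Q Y), false)] = -1 := by simp [chiA, chi]
  rw [h2] at hc
  unfold flat at h1
  omega

/-- group element of a stack -/
def W (σ : List Y) : FreeGroup (Ltr Q Y) := FreeGroup.mk (sw σ)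

theorem W_cons (y : Y) (σ : List Y) :
    (W (y :: σ) : FreeGroup (Ltr Q Y)) = W σ * FreeGroup.of (Ltr.sy y) := by
  simp [W, sw, FreeGroup.of, FreeGroup.mul_mk]

theorem W_nil : (W [] : FreeGroup (Ltr Q Y)) = 1 := rfl

/-- group element of a move -/
def me (m : Mv Q Y) : FreeGroup (Ltr Q Y) := FreeGroup.mk m.word

open FreeGroup in
theorem me_grow (y : Y) : (me (.grow y) : FreeGroup (Ltr Q Y)) =
    (of Ltr.g)⁻¹ * of (Ltr.sy y) * of Ltr.g := rfl

open FreeGroup in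
theorem me_start (q : Q) : (me (.start q) : FreeGroup (Ltr Q Y)) =
    (of Ltr.g)⁻¹ * of (Ltr.st q) := rfl

open FreeGroup in
theorem me_pop (q : Q) (y : Y) (q' : Q) : (me (.pop q y q') : FreeGroup (Ltr Q Y)) =
    (of (Ltr.st q))⁻¹ * (of (Ltr.sy y))⁻¹ * of (Ltr.st q') := rfl

open FreeGroup in
theorem me_fin (q : Q) : (me (.fin q) : FreeGroup (Ltr Q Y)) = (of (Ltr.st q))⁻¹ := rfl

/-- group elements that can still be brought to the identity by a sequence of moves -/
def Alive (w : FreeGroup (Ltr Q Y)) : Prop :=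
  ∃ ms : List (Mv Q Y), w * FreeGroup.mk (flat ms) = 1

theorem Alive.of_mul {w : FreeGroup (Ltr Q Y)} {m : Mv Q Y} (h : Alive (w * me m)) : Alive w := by
  obtain ⟨ms, h⟩ := h
  exact ⟨m :: ms, by rw [flat_cons, ← FreeGroup.mul_mk, ← mul_assoc]; exact h⟩

theorem alive_one : Alive (1 : FreeGroup (Ltr Q Y)) := ⟨[], by simp [flat, ← FreeGroup.one_eq_mk]⟩

theorem alive_g {σ : List Y} {m : Mv Q Y}
    (h : Alive (W σ * FreeGroup.of Ltr.g * me m)) : (∃ y, m = .grow y) ∨ ∃ q, m = .start q := by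
  obtain ⟨ms, h⟩ := h
  obtain ⟨m', ms', h1, h2⟩ := parse_g (σ := σ) (ms := m :: ms) (by
    rw [← h, flat_cons, W, me, FreeGroup.of]; simp [FreeGroup.mul_mk])
  simp only [List.cons.injEq] at h1
  rw [h1.1]; exact h2

theorem alive_q {σ : List Y} {q : Q} {m : Mv Q Y}
    (h : Alive (W σ * FreeGroup.of (Ltr.st q) * me m)) :
    m = .fin q ∨ ∃ y q' σ', m = .pop q y q' ∧ σ = y :: σ' := by
  obtain ⟨ms, h⟩ := h
  obtain ⟨m', ms', h1, h2⟩ := parse_q (σ := σ) (q := q) (ms := m :: ms) (by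
    rw [← h, flat_cons, W, me, FreeGroup.of]; simp [FreeGroup.mul_mk])
  simp only [List.cons.injEq] at h1
  rw [h1.1]; exact h2

theorem not_alive_W {y : Y} {σ : List Y} : ¬ Alive (W (y :: σ) : FreeGroup (Ltr Q Y)) := by
  rintro ⟨ms, h⟩
  exact parse_s (σ := σ) (y := y) (ms := ms) (by rw [← h, W]; simp [FreeGroup.mul_mk])

theorem not_alive_me {m : Mv Q Y} : ¬ Alive (me m) := by
  rintro ⟨ms, h⟩
  have := star (ms := m :: ms) (by rw [← h, flat_cons, me]; simp [FreeGroup.mul_mk])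
  simp at this

end WWG

namespace WWG

variable {Q Y : Type}

/-- A one-counter stack system with a universal choice `ℓ ∈ {-1,0,1}` in every round. -/
structure Sys (Q Y : Type) where
  c : Y
  init : Q → Prop
  step : ℤ → Q → Y → Q → ℤ → Prop
  fin : ℤ → Q → ℤ → Prop

/-- Attacker wins from state `q`, stack `σ`, counter `k` -/
def Sys.T (S : Sys Q Y) : Q → List Y → ℤ → Prop
  | q, [], k => ∀ ℓ : ℤ, -1 ≤ ℓ → ℓ ≤ 1 → ∃ e, S.fin ℓ q e ∧ k + e = 0
  | q, y :: σ, k => ∀ ℓ : ℤ, -1 ≤ ℓ → ℓ ≤ 1 → ∃ q' e, S.step ℓ q y q' e ∧ S.T q' σ (k + e)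

/-- the legal moves -/
def Sys.Legal (S : Sys Q Y) (ℓ : ℤ) : Mv Q Y → ℤ → Prop
  | .grow y, e => y = S.c ∧ -1 ≤ e ∧ e ≤ 1
  | .start q, e => S.init q ∧ e = 0
  | .pop q y q', e => S.step ℓ q y q' e
  | .fin q, e => S.fin ℓ q e

/-- the letter carrying Defender's choices -/
def zz : FreeGroup (Ltr Q Y) := FreeGroup.of Ltr.z

/-- `A` is the list of Attacker's moves -/
def Sys.IsA (S : Sys Q Y) (A : List (FreeGroup (Ltr Q Y) × ℤ)) : Prop :=
  ∀ a, a ∈ A ↔ ∃ ℓ m e, -1 ≤ ℓ ∧ ℓ ≤ 1 ∧ S.Legal ℓ m e ∧ a = (zz ^ (-ℓ) * me m, e)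

/-- Defender's moves -/
def DD : List (FreeGroup (Ltr Q Y) × ℤ) := [(zz ^ (-1 : ℤ), 0), (zz ^ (0 : ℤ), 0), (zz ^ (1 : ℤ), 0)]

theorem mem_DD {d : FreeGroup (Ltr Q Y) × ℤ} :
    d ∈ (DD : List (FreeGroup (Ltr Q Y) × ℤ)) ↔ ∃ ℓ : ℤ, -1 ≤ ℓ ∧ ℓ ≤ 1 ∧ d = (zz ^ ℓ, 0) := by
  constructor
  · intro h
    simp only [DD, List.mem_cons, List.not_mem_nil, or_false] at h
    rcases h with h | h | h
    · exact ⟨-1, by norm_num, by norm_num, h⟩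
    · exact ⟨0, by norm_num, by norm_num, h⟩
    · exact ⟨1, by norm_num, by norm_num, h⟩
  · rintro ⟨ℓ, h1, h2, rfl⟩
    simp only [DD, List.mem_cons, List.not_mem_nil, or_false]
    have : ℓ = -1 ∨ ℓ = 0 ∨ ℓ = 1 := by omega
    rcases this with rfl | rfl | rfl <;> simp

instance [Finite Q] [Finite Y] : Finite (Mv Q Y) := by
  let f : Mv Q Y → Y ⊕ Q ⊕ (Q × Y × Q) ⊕ Q := fun
    | .grow y => .inl y
    | .start q => .inr (.inl q)
    | .pop q y q' => .inr (.inr (.inl (q, y, q')))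
    | .fin q => .inr (.inr (.inr q))
  refine Finite.of_injective f ?_
  intro a b h
  cases a <;> cases b <;> simp_all [f]

instance [Finite Q] [Finite Y] : Finite (Ltr Q Y) := by
  let f : Ltr Q Y → Unit ⊕ Unit ⊕ Q ⊕ Y := fun
    | .z => .inl ()
    | .g => .inr (.inl ())
    | .st q => .inr (.inr (.inl q))
    | .sy q => .inr (.inr (.inr q))
  refine Finite.of_injective f ?_
  intro a b h
  cases a <;> cases b <;> simp_all [f]

theorem Sys.exists_isA [Finite Q] [Finite Y] (S : Sys Q Y) (N : ℤ)
    (h1 : ∀ ℓ q y q' e, -1 ≤ ℓ → ℓ ≤ 1 → S.step ℓ q y q' e → -N ≤ e ∧ e ≤ N)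
    (h2 : ∀ ℓ q e, -1 ≤ ℓ → ℓ ≤ 1 → S.fin ℓ q e → -N ≤ e ∧ e ≤ N) : ∃ A, S.IsA A := by
  classical
  have hfin : Set.Finite {a : FreeGroup (Ltr Q Y) × ℤ |
      ∃ ℓ m e, -1 ≤ ℓ ∧ ℓ ≤ 1 ∧ S.Legal ℓ m e ∧ a = (zz ^ (-ℓ) * me m, e)} := by
    refine Set.Finite.subset (((Set.finite_Icc (-1 : ℤ) 1).prod
      ((Set.finite_univ (α := Mv Q Y)).prod (Set.finite_Icc (-(max N 1)) (max N 1)))).image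
        (fun x => (zz ^ (-x.1) * me x.2.1, x.2.2))) ?_
    rintro _ ⟨ℓ, m, e, l1, l2, hL, rfl⟩
    refine ⟨(ℓ, m, e), ⟨⟨l1, l2⟩, trivial, ?_⟩, rfl⟩
    have : -(max N 1) ≤ e ∧ e ≤ max N 1 := by
      cases m with
      | grow y => have := hL.2; omega
      | start q => have := hL.2; omega
      | pop q y q' => have := h1 _ _ _ _ _ l1 l2 hL; omega
      | fin q => have := h2 _ _ _ l1 l2 hL; omega
    exact this
  refine ⟨hfin.toFinset.toList, fun a => ?_⟩
  simp

theorem mv_zz (v : FreeGroup (Ltr Q Y)) (k ℓ e : ℤ) (m : Mv Q Y) :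
    mv (v, k) (zz ^ ℓ, 0) (zz ^ (-ℓ) * me m, e) = (v * me m, k + e) := by
  simp [mv, mul_assoc]

theorem Sys.GWin_of_T (S : Sys Q Y) {A : List (FreeGroup (Ltr Q Y) × ℤ)} (hA : S.IsA A)
    (σ : List Y) : ∀ (q : Q) (k : ℤ), S.T q σ k →
      GWin A DD (W σ * FreeGroup.of (Ltr.st q), k) := by
  induction σ with
  | nil =>
    intro q k h
    refine GWin.of_exists fun d hd => ?_
    obtain ⟨ℓ, l1, l2, rfl⟩ := mem_DD.1 hd
    obtain ⟨e, he, hk⟩ := h ℓ l1 l2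
    refine ⟨_, (hA _).2 ⟨ℓ, .fin q, e, l1, l2, he, rfl⟩, Or.inl ?_⟩
    rw [mv_zz, me_fin, W_nil, hk]
    simp
  | cons y σ ih =>
    intro q k h
    refine GWin.of_exists fun d hd => ?_
    obtain ⟨ℓ, l1, l2, rfl⟩ := mem_DD.1 hd
    obtain ⟨q', e, he, hT⟩ := h ℓ l1 l2
    refine ⟨_, (hA _).2 ⟨ℓ, .pop q y q', e, l1, l2, he, rfl⟩, Or.inr ?_⟩
    rw [mv_zz, me_pop, W_cons]
    have := ih q' (k + e) hT
    convert this using 2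
    group

theorem Sys.GWin_of_grow (S : Sys Q Y) {A : List (FreeGroup (Ltr Q Y) × ℤ)} (hA : S.IsA A)
    (i : ℕ) : ∀ (σ0 : List Y) (q : Q) (k k0 : ℤ), -i ≤ k - k0 → k - k0 ≤ i → S.init q →
      S.T q (List.replicate i S.c ++ σ0) k →
      GWin A DD (W σ0 * FreeGroup.of Ltr.g, k0) := by
  induction i with
  | zero =>
    intro σ0 q k k0 h1 h2 hq hT
    have hk : k = k0 := by simp at h1 h2; omega
    subst hk
    refine GWin.of_exists fun d hd => ?_
    obtain ⟨ℓ, l1, l2, rfl⟩ := mem_DD.1 hd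
    refine ⟨_, (hA _).2 ⟨ℓ, .start q, 0, l1, l2, ⟨hq, rfl⟩, rfl⟩, Or.inr ?_⟩
    rw [mv_zz, me_start]
    have := S.GWin_of_T hA σ0 q k (by simpa using hT)
    convert this using 2
    · group
    · simp
  | succ i ih =>
    intro σ0 q k k0 h1 h2 hq hT
    obtain ⟨e, he1, he2, hk1, hk2⟩ : ∃ e : ℤ, -1 ≤ e ∧ e ≤ 1 ∧ -i ≤ k - (k0 + e) ∧
        k - (k0 + e) ≤ i := by
      push_cast at h1 h2
      by_cases h : k - k0 = i + 1
      · exact ⟨1, by omega, by omega, by omega, by omega⟩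
      by_cases h : k - k0 = -(i + 1)
      · exact ⟨-1, by omega, by omega, by omega, by omega⟩
      · exact ⟨0, by omega, by omega, by omega, by omega⟩
    refine GWin.of_exists fun d hd => ?_
    obtain ⟨ℓ, l1, l2, rfl⟩ := mem_DD.1 hd
    refine ⟨_, (hA _).2 ⟨ℓ, .grow S.c, e, l1, l2, ⟨rfl, he1, he2⟩, rfl⟩, Or.inr ?_⟩
    rw [mv_zz, me_grow]
    have := ih (S.c :: σ0) q k (k0 + e) hk1 hk2 hq (by
      rw [List.replicate_succ'] at hT
      simpa using hT)
    rw [W_cons] at this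
    convert this using 2
    group

/-- exponent of `z` -/
def rho : FreeGroup (Ltr Q Y) →* Multiplicative ℤ :=
  FreeGroup.lift fun
    | .z => Multiplicative.ofAdd 1
    | _ => 1

/-- forget `z` -/
def prj : FreeGroup (Ltr Q Y) →* FreeGroup (Ltr Q Y) :=
  FreeGroup.lift fun
    | .z => 1
    | x => FreeGroup.of x

theorem rho_me (m : Mv Q Y) : rho (me m) = 1 := by
  cases m <;> simp [me_grow, me_start, me_pop, me_fin, rho]

theorem prj_me (m : Mv Q Y) : prj (me m) = me m := by
  cases m <;> simp [me_grow, me_start, me_pop, me_fin, prj]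

theorem rho_zz : (rho (zz : FreeGroup (Ltr Q Y))) = Multiplicative.ofAdd 1 := by
  simp [rho, zz]

theorem prj_zz : (prj (zz : FreeGroup (Ltr Q Y))) = 1 := by
  simp [prj, zz]

theorem rho_W (σ : List Y) : rho (W σ : FreeGroup (Ltr Q Y)) = 1 := by
  induction σ with
  | nil => simp [W_nil]
  | cons y σ ih => rw [W_cons, map_mul, ih]; simp [rho]

theorem prj_W (σ : List Y) : prj (W σ : FreeGroup (Ltr Q Y)) = W σ := by
  induction σ with
  | nil => simp [W_nil]
  | cons y σ ih => rw [W_cons, map_mul, ih]; simp [prj]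

theorem chi_W (σ : List Y) : chi (W σ : FreeGroup (Ltr Q Y)) = 1 := by
  induction σ with
  | nil => simp [W_nil]
  | cons y σ ih => rw [W_cons, map_mul, ih]; simp [chi]

/-- Defender's claim -/
def Sys.Claim (S : Sys Q Y) (σ0 : List Y) (v : FreeGroup (Ltr Q Y)) (k : ℤ) : Prop :=
  (∃ i, v = W (List.replicate i S.c ++ σ0) * FreeGroup.of Ltr.g) ∨
  (∃ σ q, v = W σ * FreeGroup.of (Ltr.st q) ∧ ¬ S.T q σ k) ∨ (v = 1 ∧ k ≠ 0)

/-- positions from which Defender avoids losing -/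
def Sys.Bad (S : Sys Q Y) (σ0 : List Y) (p : FreeGroup (Ltr Q Y) × ℤ) : Prop :=
  rho p.1 ≠ 1 ∨ ¬ Alive (prj p.1) ∨ S.Claim σ0 (prj p.1) p.2

theorem Sys.bad_init (S : Sys Q Y) (σ0 : List Y) :
    S.Bad σ0 (W σ0 * FreeGroup.of Ltr.g, 0) := by
  refine Or.inr (Or.inr (Or.inl ⟨0, ?_⟩))
  rw [map_mul, prj_W]
  simp [prj]

theorem Sys.not_bad_one (S : Sys Q Y) (σ0 : List Y) : ¬ S.Bad σ0 (1, 0) := by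
  rintro (h | h | ⟨i, h⟩ | ⟨σ, q, h, _⟩ | ⟨_, h⟩)
  · simp at h
  · exact h (by simpa using alive_one)
  · have := congrArg chi h
    rw [map_mul, chi_W] at this
    simp only [prj, map_one, chi, one_mul, FreeGroup.lift_apply_of] at this
    exact absurd this (by decide)
  · have := congrArg chi h
    rw [map_mul, chi_W] at this
    simp only [prj, map_one, chi, one_mul, FreeGroup.lift_apply_of] at this
    exact absurd this (by decide)
  · simp at h

theorem rho_mv (p : FreeGroup (Ltr Q Y) × ℤ) (ℓ ℓ' e : ℤ) (m : Mv Q Y) :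
    (rho (mv p (zz ^ ℓ, 0) (zz ^ (-ℓ') * me m, e)).1).toAdd = (rho p.1).toAdd + ℓ - ℓ' := by
  simp [mv, rho_zz, rho_me]
  omega

theorem prj_mv (p : FreeGroup (Ltr Q Y) × ℤ) (ℓ ℓ' e : ℤ) (m : Mv Q Y) :
    prj (mv p (zz ^ ℓ, 0) (zz ^ (-ℓ') * me m, e)).1 = prj p.1 * me m := by
  simp [mv, prj_zz, prj_me]

theorem rho_ne {v : FreeGroup (Ltr Q Y)} (h : (rho v).toAdd ≠ 0) : rho v ≠ 1 := by
  intro h'; rw [h'] at h; simp at h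

theorem Sys.bad_step (S : Sys Q Y) {A : List (FreeGroup (Ltr Q Y) × ℤ)} (hA : S.IsA A)
    (σ0 : List Y)
    (hT : ∀ i q k, S.init q → ¬ S.T q (List.replicate i S.c ++ σ0) k)
    (p : FreeGroup (Ltr Q Y) × ℤ) (hp : S.Bad σ0 p) :
    ∃ d ∈ (DD : List (FreeGroup (Ltr Q Y) × ℤ)), ∀ a ∈ A, S.Bad σ0 (mv p d a) := by
  by_cases hr : (rho p.1).toAdd = 0
  swap
  · rcases lt_or_gt_of_ne hr with h | h
    · refine ⟨_, mem_DD.2 ⟨-1, by norm_num, by norm_num, rfl⟩, fun a ha => Or.inl ?_⟩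
      obtain ⟨ℓ', m, e, l1, l2, hL, rfl⟩ := (hA a).1 ha
      refine rho_ne ?_
      rw [rho_mv]; omega
    · refine ⟨_, mem_DD.2 ⟨1, by norm_num, by norm_num, rfl⟩, fun a ha => Or.inl ?_⟩
      obtain ⟨ℓ', m, e, l1, l2, hL, rfl⟩ := (hA a).1 ha
      refine rho_ne ?_
      rw [rho_mv]; omega
  have key : ∃ ℓ : ℤ, -1 ≤ ℓ ∧ ℓ ≤ 1 ∧ ∀ m e, S.Legal ℓ m e →
      ¬ Alive (prj p.1 * me m) ∨ S.Claim σ0 (prj p.1 * me m) (p.2 + e) := by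
    by_cases hal : Alive (prj p.1)
    swap
    · exact ⟨0, by norm_num, by norm_num, fun m e _ => Or.inl fun h => hal h.of_mul⟩
    rcases hp with h | h | ⟨i, h⟩ | ⟨σ, q, h, hnT⟩ | ⟨h, hk⟩
    · exact absurd (by simpa using hr) h
    · exact absurd hal h
    · refine ⟨0, by norm_num, by norm_num, fun m e hL => ?_⟩
      by_cases hal' : Alive (prj p.1 * me m)
      swap
      · exact Or.inl hal'
      right
      rw [h] at hal' ⊢
      rcases alive_g hal' with ⟨y, rfl⟩ | ⟨q, rfl⟩
      · obtain ⟨rfl, -⟩ := hL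
        refine Or.inl ⟨i + 1, ?_⟩
        rw [List.replicate_succ, List.cons_append, W_cons, me_grow]
        group
      · refine Or.inr (Or.inl ⟨_, q, ?_, hT i q _ hL.1⟩)
        rw [me_start]; group
    · have hex : ∃ ℓ : ℤ, -1 ≤ ℓ ∧ ℓ ≤ 1 ∧
          (∀ y σ' q' e, σ = y :: σ' → S.step ℓ q y q' e → ¬ S.T q' σ' (p.2 + e)) ∧
          (∀ e, σ = [] → S.fin ℓ q e → p.2 + e ≠ 0) := by
        cases σ with
        | nil =>
          simp only [Sys.T, not_forall, not_exists, not_and] at hnT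
          obtain ⟨ℓ, l1, l2, h⟩ := hnT
          exact ⟨ℓ, l1, l2, by simp, fun e _ => h e⟩
        | cons y σ =>
          simp only [Sys.T, not_forall, not_exists, not_and] at hnT
          obtain ⟨ℓ, l1, l2, h⟩ := hnT
          refine ⟨ℓ, l1, l2, ?_, by simp⟩
          intro y' σ' q' e heq
          simp only [List.cons.injEq] at heq
          obtain ⟨rfl, rfl⟩ := heq
          exact h q' e
      obtain ⟨ℓ, l1, l2, hs, hf⟩ := hex
      refine ⟨ℓ, l1, l2, fun m e hL => ?_⟩
      by_cases hal' : Alive (prj p.1 * me m)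
      swap
      · exact Or.inl hal'
      rw [h] at hal' ⊢
      rcases alive_q hal' with rfl | ⟨y, q', σ', rfl, rfl⟩
      · have e1 : (W σ : FreeGroup (Ltr Q Y)) * FreeGroup.of (Ltr.st q) * me (.fin q) = W σ := by
          rw [me_fin]; group
        rw [e1]
        cases σ with
        | nil => exact Or.inr (Or.inr (Or.inr ⟨W_nil, hf e rfl hL⟩))
        | cons y σ => exact Or.inl not_alive_W
      · refine Or.inr (Or.inr (Or.inl ⟨σ', q', ?_, hs y σ' q' e rfl hL⟩))
        rw [W_cons, me_pop]; group
    · refine ⟨0, by norm_num, by norm_num, fun m e hL => Or.inl ?_⟩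
      rw [h, one_mul]
      exact not_alive_me
  obtain ⟨ℓ, l1, l2, hkey⟩ := key
  refine ⟨_, mem_DD.2 ⟨ℓ, l1, l2, rfl⟩, fun a ha => ?_⟩
  obtain ⟨ℓ', m, e, l1', l2', hL, rfl⟩ := (hA a).1 ha
  by_cases hll : ℓ = ℓ'
  · subst hll
    refine Or.inr ?_
    rw [prj_mv]
    have : (mv p (zz ^ ℓ, 0) (zz ^ (-ℓ) * me m, e)).2 = p.2 + e := by simp [mv]
    rw [this]
    exact hkey m e hL
  · refine Or.inl (rho_ne ?_)
    rw [rho_mv]; omega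

end WWG

namespace WWG

/-- the shift automorphism -/
def shf : Multiplicative ℤ →* MulAut (FreeGroup ℤ) :=
  zpowersHom _ (FreeGroup.freeGroupCongr (Equiv.addRight (1 : ℤ)))

theorem shf_apply (n : ℕ) (i : ℤ) :
    shf (Multiplicative.ofAdd (n : ℤ)) (FreeGroup.of i) = FreeGroup.of (i + n) := by
  induction n with
  | zero => simp [shf]
  | succ n ih =>
    have : Multiplicative.ofAdd ((n + 1 : ℕ) : ℤ) =
        Multiplicative.ofAdd (1 : ℤ) * Multiplicative.ofAdd (n : ℤ) := by
      rw [← ofAdd_add]; push_cast; rw [add_comm]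
    rw [this, map_mul, MulAut.mul_apply, ih]
    simp [shf]
    congr 1
    omega

/-- the embedding of a free group of countable rank -/
def embN : FreeGroup ℕ →* F2 :=
  FreeGroup.lift fun i => FreeGroup.of true ^ (i : ℤ) * FreeGroup.of false * (FreeGroup.of true ^ (i : ℤ))⁻¹

/-- a left inverse of the embedding, up to inclusion -/
def retr : F2 →* FreeGroup ℤ ⋊[shf] Multiplicative ℤ :=
  FreeGroup.lift fun b => if b then SemidirectProduct.inr (Multiplicative.ofAdd (1 : ℤ))
    else SemidirectProduct.inl (FreeGroup.of 0)

theorem retr_embN : retr.comp embN =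
    SemidirectProduct.inl.comp (FreeGroup.map (fun n : ℕ => (n : ℤ))) := by
  refine FreeGroup.ext_hom _ _ fun i => ?_
  simp only [MonoidHom.comp_apply, embN, FreeGroup.lift_apply_of, map_mul, map_inv, map_zpow, retr,
    if_true, FreeGroup.map.of, Bool.false_eq_true, if_false]
  rw [← map_zpow, ← ofAdd_zsmul, smul_eq_mul, mul_one, ← map_inv, ← SemidirectProduct.inl_aut,
    shf_apply]
  simp

theorem embN_injective : Function.Injective embN := by
  intro a b h
  have := DFunLike.congr_fun retr_embN a
  have h2 := DFunLike.congr_fun retr_embN b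
  simp only [MonoidHom.comp_apply] at this h2
  rw [h] at this
  have h3 := SemidirectProduct.inl_injective (this.symm.trans h2)
  exact FreeGroup.map_injective Nat.cast_injective h3

theorem exists_emb (α : Type) [Finite α] : ∃ φ : FreeGroup α →* F2, Function.Injective φ := by
  obtain ⟨f, hf⟩ := exists_injective_nat α
  exact ⟨embN.comp (FreeGroup.map f), embN_injective.comp (FreeGroup.map_injective hf)⟩

variable {Q Y : Type}

/-- The game over `F2` for a system -/
theorem Sys.game [Finite Q] [Finite Y] [Nonempty Q] (S : Sys Q Y) (N : ℤ)
    (h1 : ∀ ℓ q y q' e, -1 ≤ ℓ → ℓ ≤ 1 → S.step ℓ q y q' e → -N ≤ e ∧ e ≤ N)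
    (h2 : ∀ ℓ q e, -1 ≤ ℓ → ℓ ≤ 1 → S.fin ℓ q e → -N ≤ e ∧ e ≤ N) :
    ∃ (A D : List (F2 × ℤ)) (φ : FreeGroup (Ltr Q Y) →* F2), ∀ σ0 : List Y,
      ((∃ (i : ℕ) (q : Q) (k : ℤ), -(i : ℤ) ≤ k ∧ k ≤ i ∧ S.init q ∧ S.T q (List.replicate i S.c ++ σ0) k) →
        WWGAttackerWins A D (φ (W σ0 * FreeGroup.of Ltr.g))) ∧
      ((∀ i q k, S.init q → ¬ S.T q (List.replicate i S.c ++ σ0) k) →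
        ¬ WWGAttackerWins A D (φ (W σ0 * FreeGroup.of Ltr.g))) := by
  obtain ⟨A, hA⟩ := S.exists_isA N h1 h2
  obtain ⟨φ, hφ⟩ := exists_emb (Ltr Q Y)
  refine ⟨A.map (wmap φ), DD.map (wmap φ), φ, fun σ0 => ⟨?_, ?_⟩⟩
  · rintro ⟨i, q, k, hk1, hk2, hq, hT⟩
    have ha : ((zz ^ (-0 : ℤ) * me (.grow S.c), 0) : FreeGroup (Ltr Q Y) × ℤ) ∈ A :=
      (hA _).2 ⟨0, .grow S.c, 0, by norm_num, by norm_num, ⟨rfl, by norm_num, by norm_num⟩, rfl⟩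
    refine wins_of_GWin _ (List.mem_map_of_mem ha) ?_
    exact (S.GWin_of_grow hA i σ0 q k 0 (by omega) (by omega) hq hT).map φ
  · intro hT
    refine not_wins_of_trap (fun p => ∃ p', p = wmap φ p' ∧ S.Bad σ0 p')
      ⟨_, rfl, S.bad_init σ0⟩ ?_ ?_
    · rintro ⟨p', hp, hb⟩
      have : p' = (1, 0) := by
        simp only [wmap, Prod.mk.injEq] at hp
        ext1
        · exact hφ (by rw [← hp.1]; simp)
        · exact hp.2.symm
      rw [this] at hb
      exact S.not_bad_one σ0 hb
    · rintro _ ⟨p, rfl, hb⟩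
      obtain ⟨d, hd, h⟩ := S.bad_step hA σ0 hT p hb
      refine ⟨_, List.mem_map_of_mem hd, fun a' ha' => ?_⟩
      obtain ⟨a, ha, rfl⟩ := List.mem_map.1 ha'
      exact ⟨_, (wmap_mv φ p d a).symm, h a ha⟩

end WWG

namespace WWG

/-- A one-dimensional cellular automaton whose local rule depends on the time step. -/
structure CA (X Y : Type) where
  f : Y → X → X → X → X
  seed : X
  B : X
  c : Y
  H : X → Prop
  hB : ∀ y, f y B B B = B

variable {X Y : Type}

/-- the content of the cells -/
def CA.C (M : CA X Y) : List Y → ℤ → X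
  | [], j => if j = 0 then M.seed else M.B
  | y :: σ, j => M.f y (M.C σ (j - 1)) (M.C σ j) (M.C σ (j + 1))

theorem CA.cone (M : CA X Y) (σ : List Y) : ∀ j : ℤ, (σ.length : ℤ) < |j| → M.C σ j = M.B := by
  induction σ with
  | nil =>
    intro j hj
    have : j ≠ 0 := by rintro rfl; simp at hj
    simp [CA.C, this]
  | cons y σ ih =>
    intro j hj
    rw [List.length_cons] at hj
    push_cast at hj
    rw [CA.C, ih (j - 1) (by grind), ih j (by grind), ih (j + 1) (by grind), M.hB]

/-- component of a triple -/
def sel (τ : X × X × X) (ℓ : ℤ) : X := if ℓ = -1 then τ.1 else if ℓ = 0 then τ.2.1 else τ.2.2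

/-- sign -/
def sg (b : Bool) : ℤ := if b then 1 else -1

/-- steps of the checking system -/
inductive CA.Step (M : CA X Y) : ℤ → (X × X × X) ⊕ Bool → Y → (X × X × X) ⊕ Bool → ℤ → Prop
  | next (ℓ τ y τ') (h : M.f y (sel τ' (-1)) (sel τ' 0) (sel τ' 1) = sel τ ℓ) :
      CA.Step M ℓ (.inl τ) y (.inl τ') ℓ
  | exit (ℓ τ y b) (k : ℤ) (hk : k = 2 ∨ k = 3) (h : sel τ ℓ = M.B) :
      CA.Step M ℓ (.inl τ) y (.inr b) (ℓ - sg b * k)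
  | out (ℓ b y) : CA.Step M ℓ (.inr b) y (.inr b) (- sg b)

/-- final moves of the checking system -/
inductive CA.Fin (M : CA X Y) : ℤ → (X × X × X) ⊕ Bool → ℤ → Prop
  | seed (ℓ τ) (h : sel τ ℓ = M.seed) : CA.Fin M ℓ (.inl τ) (-0 + ℓ)
  | exit (ℓ τ b) (k : ℤ) (hk : k = 1 ∨ k = 2) (h : sel τ ℓ = M.B) :
      CA.Fin M ℓ (.inl τ) (ℓ - sg b * k)
  | out (ℓ b) : CA.Fin M ℓ (.inr b) 0

/-- the checking system -/
def CA.sys (M : CA X Y) : Sys ((X × X × X) ⊕ Bool) Y where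
  c := M.c
  init := fun q => ∃ τ, q = .inl τ ∧ M.H (sel τ 0)
  step := M.Step
  fin := M.Fin

theorem CA.T_out (M : CA X Y) (b : Bool) (σ : List Y) : ∀ z : ℤ,
    M.sys.T (.inr b) σ z ↔ z = sg b * σ.length := by
  induction σ with
  | nil =>
    intro z
    simp only [Sys.T, CA.sys, List.length_nil, Nat.cast_zero, mul_zero]
    constructor
    · intro h
      obtain ⟨e, he, hk⟩ := h 0 (by norm_num) (by norm_num)
      cases he
      simpa using hk
    · rintro rfl ℓ _ _
      exact ⟨0, .out _ _, by simp⟩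
  | cons y σ ih =>
    intro z
    simp only [Sys.T, List.length_cons, Nat.cast_add, Nat.cast_one]
    constructor
    · intro h
      obtain ⟨q', e, he, hk⟩ := h 0 (by norm_num) (by norm_num)
      cases he
      rw [ih] at hk
      linarith
    · rintro rfl ℓ _ _
      refine ⟨_, _, .out _ _ _, ?_⟩
      rw [ih]; ring

theorem CA.T_sound (M : CA X Y) (σ : List Y) : ∀ (τ : X × X × X) (j : ℤ),
    M.sys.T (.inl τ) σ j → ∀ ℓ : ℤ, -1 ≤ ℓ → ℓ ≤ 1 → M.C σ (j + ℓ) = sel τ ℓ := by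
  induction σ with
  | nil =>
    intro τ j h ℓ l1 l2
    obtain ⟨e, he, hk⟩ := h ℓ l1 l2
    cases he with
    | seed _ h =>
      rw [h, CA.C, if_pos]; omega
    | exit _ b k hk' h =>
      rw [h]
      apply M.cone
      have : j + ℓ = sg b * k := by linarith
      rw [this]
      rcases hk' with rfl | rfl <;> cases b <;> simp [sg]
  | cons y σ ih =>
    intro τ j h ℓ l1 l2
    obtain ⟨q', e, he, hk⟩ := h ℓ l1 l2
    cases he with
    | next _ _ τ' h =>
      rw [← h, CA.C, ← ih τ' _ hk (-1) (by norm_num) (by norm_num),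
        ← ih τ' _ hk 0 (by norm_num) (by norm_num), ← ih τ' _ hk 1 (by norm_num) (by norm_num)]
      rw [add_zero, sub_eq_add_neg]
    | exit _ _ b k hk' h =>
      rw [h]
      apply M.cone
      rw [M.T_out] at hk
      rw [List.length_cons]; push_cast
      have hn : (0 : ℤ) ≤ σ.length := by positivity
      cases b <;> simp only [sg, if_true, Bool.false_eq_true, if_false] at hk <;> grind

theorem CA.T_complete (M : CA X Y) (σ : List Y) : ∀ (j : ℤ), |j| ≤ σ.length + 1 →
    M.sys.T (.inl (M.C σ (j - 1), M.C σ j, M.C σ (j + 1))) σ j := by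
  have hsel : ∀ (σ : List Y) (j ℓ : ℤ), -1 ≤ ℓ → ℓ ≤ 1 →
      sel (M.C σ (j - 1), M.C σ j, M.C σ (j + 1)) ℓ = M.C σ (j + ℓ) := by
    intro σ j ℓ l1 l2
    have : ℓ = -1 ∨ ℓ = 0 ∨ ℓ = 1 := by omega
    rcases this with rfl | rfl | rfl <;> simp [sel, sub_eq_add_neg]
  induction σ with
  | nil =>
    intro j hj ℓ l1 l2
    simp only [List.length_nil, Nat.cast_zero, zero_add] at hj
    have hs := hsel [] j ℓ l1 l2
    by_cases h0 : j + ℓ = 0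
    · refine ⟨_, .seed _ _ (by rw [hs, h0]; simp [CA.C]), by omega⟩
    · have hs' := hs.trans (M.cone [] _ (by simpa using h0))
      have : ∃ b k, (k = 1 ∨ k = 2) ∧ j + ℓ = sg b * k := by
        rcases lt_or_gt_of_ne h0 with h | h
        · exact ⟨false, -(j + ℓ), by grind, by simp [sg]⟩
        · exact ⟨true, (j + ℓ), by grind, by simp [sg]⟩
      obtain ⟨b, k, hk, he⟩ := this
      exact ⟨_, .exit _ _ b k hk hs', by linarith⟩
  | cons y σ ih =>
    intro j hj ℓ l1 l2
    have hs := hsel (y :: σ) j ℓ l1 l2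
    rw [List.length_cons] at hj
    push_cast at hj
    by_cases h0 : |j + ℓ| ≤ σ.length + 1
    · refine ⟨_, _, .next _ _ _ _ ?_, ih (j + ℓ) h0⟩
      rw [hs, CA.C]
      simp [sel]
    · have hs' := hs.trans (M.cone (y :: σ) _ (by rw [List.length_cons]; push_cast; omega))
      have : ∃ b k, (k = 2 ∨ k = 3) ∧ j + ℓ = sg b * (σ.length + k) := by
        by_cases h : j + ℓ < 0
        · exact ⟨false, -(j + ℓ) - σ.length, by grind, by simp [sg]⟩
        · exact ⟨true, (j + ℓ) - σ.length, by grind, by simp [sg]⟩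
      obtain ⟨b, k, hk, he⟩ := this
      refine ⟨_, _, .exit _ _ _ b k hk hs', ?_⟩
      rw [M.T_out]
      linarith

/-- The game over `F2` for a cellular automaton -/
theorem CA.game [Finite X] [Finite Y] (M : CA X Y) :
    ∃ (Q : Type) (A D : List (F2 × ℤ)) (φ : FreeGroup (Ltr Q Y) →* F2), ∀ σ0 : List Y,
      ((∃ (i : ℕ) (k : ℤ), |k| ≤ i ∧ M.H (M.C (List.replicate i M.c ++ σ0) k)) →
        WWGAttackerWins A D (φ (W σ0 * FreeGroup.of Ltr.g))) ∧
      ((∀ (i : ℕ) (k : ℤ), ¬ M.H (M.C (List.replicate i M.c ++ σ0) k)) →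
        ¬ WWGAttackerWins A D (φ (W σ0 * FreeGroup.of Ltr.g))) := by
  obtain ⟨A, D, φ, h⟩ := M.sys.game 4 (by
      intro ℓ q y q' e l1 l2 h
      cases h with
      | next => omega
      | exit _ _ b k hk _ => cases b <;> simp only [sg, if_true, Bool.false_eq_true, if_false] <;> omega
      | out b _ => cases b <;> simp [sg])
    (by
      intro ℓ q e l1 l2 h
      cases h with
      | seed => omega
      | exit _ b k hk _ => cases b <;> simp only [sg, if_true, Bool.false_eq_true, if_false] <;> omega
      | out b => simp)
  refine ⟨_, A, D, φ, fun σ0 => ⟨?_, ?_⟩⟩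
  · rintro ⟨i, k, hk, hH⟩
    refine (h σ0).1 ⟨i, _, k, by grind, by grind, ⟨_, rfl, ?_⟩, M.T_complete _ k ?_⟩
    · simpa [sel, CA.sys] using hH
    · rw [List.length_append, List.length_replicate]; push_cast; grind
  · intro hH
    refine (h σ0).2 ?_
    rintro i q k ⟨τ, rfl, hτ⟩ hT
    have := M.T_sound _ τ k hT 0 (by norm_num) (by norm_num)
    rw [add_zero] at this
    rw [← this] at hτ
    exact hH i k hτ

end WWG

namespace WWG

open Turing

section TM
variable {Γ Λ : Type} [Inhabited Γ] [Inhabited Λ] (M : TM0.Machine Γ Λ)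

/-- global configuration with absolute position -/
structure GC (Γ Λ : Type) [Inhabited Γ] where
  pos : ℤ
  cfg : TM0.Cfg Γ Λ

/-- is the head arriving from a neighbouring cell with content `x` by moving in direction `d`? -/
def arr (x : Γ × Option Λ) (d : Dir) : Option Λ :=
  match x.2 with
  | none => none
  | some q => match M q x.1 with
    | some (q', .move d') => match d, d' with
      | .left, .left => some q'
      | .right, .right => some q'
      | _, _ => none
    | _ => none

/-- local rule -/
def loc : Option Γ → Γ × Option Λ → Γ × Option Λ → Γ × Option Λ → Γ × Option Λ
  | some x, _, m, r => match r.2 with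
    | some q => (x, some q)
    | none => (m.1, none)
  | none, l, m, r => match m.2 with
    | some q => match M q m.1 with
      | none => m
      | some (_, .move _) => (m.1, none)
      | some (q', .write a) => (a, some q')
    | none => (m.1, (arr M l .right).or (arr M r .left))

/-- the automaton of a machine -/
def caOf : CA (Γ × Option Λ) (Option Γ) where
  f := loc M
  seed := (default, some default)
  B := (default, none)
  c := none
  H := fun x => ∃ q, x.2 = some q ∧ M q x.1 = none
  hB := by intro y; cases y <;> simp [loc, arr]

/-- global step -/
def nxt : Option Γ → GC Γ Λ → GC Γ Λ
  | some x, ⟨p, ⟨q, T⟩⟩ => ⟨p - 1, ⟨q, (T.move .left).write x⟩⟩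
  | none, ⟨p, ⟨q, T⟩⟩ => match M q T.1 with
    | none => ⟨p, ⟨q, T⟩⟩
    | some (q', .move .left) => ⟨p - 1, ⟨q', T.move .left⟩⟩
    | some (q', .move .right) => ⟨p + 1, ⟨q', T.move .right⟩⟩
    | some (q', .write a) => ⟨p, ⟨q', T.write a⟩⟩

/-- cell content -/
def cell (G : GC Γ Λ) (j : ℤ) : Γ × Option Λ :=
  (G.cfg.Tape.nth (j - G.pos), if j = G.pos then some G.cfg.q else none)

theorem loc_cell (y : Option Γ) (G : GC Γ Λ) (j : ℤ) :
    loc M y (cell G (j - 1)) (cell G j) (cell G (j + 1)) = cell (nxt M y G) j := by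
  obtain ⟨p, q, T⟩ := G
  cases y with
  | some x =>
    by_cases h : j + 1 = p
    · subst h
      simp [loc, cell, nxt, Tape.write]
    · have h' : ¬ j = p - 1 := by omega
      have h2 : ¬ j - (p - 1) = 0 := by omega
      have h3 : j - (p - 1) - 1 = j - p := by omega
      simp [loc, cell, nxt, h, h', h2, h3]
  | none =>
    by_cases h0 : j = p
    · subst h0
      have e1 : ¬ j = j - 1 := by omega
      rcases hM : M q T.1 with _ | ⟨q', (_ | _) | a⟩ <;>
        simp [loc, cell, nxt, hM, e1, Tape.write]
    by_cases h1 : j = p + 1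
    · subst h1
      have e1 : ¬ p + 1 = p - 1 := by omega
      have e2 : ¬ p + 1 + 1 = p := by omega
      have e3 : p + 1 - (p - 1) - 1 = 1 := by omega
      have e4 : (Tape.move Dir.right T).head = T.nth 1 := by
        rw [← Tape.nth_zero, Tape.move_right_nth]; rfl
      rcases hM : M q T.1 with _ | ⟨q', (_ | _) | a⟩ <;>
        simp [loc, cell, nxt, hM, arr, e1, e2, e3, e4]
    by_cases h2 : j = p - 1
    · subst h2
      have e1 : ¬ p - 1 = p + 1 := by omega
      have e2 : ¬ p - 1 - 1 = p := by omega
      have e3 : p - 1 - (p + 1) + 1 = -1 := by omega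
      have e5 : p - 1 - p = -1 := by omega
      have e4 : (Tape.move Dir.left T).head = T.nth (-1) := by
        rw [← Tape.nth_zero, Tape.move_left_nth]; rfl
      rcases hM : M q T.1 with _ | ⟨q', (_ | _) | a⟩ <;>
        simp [loc, cell, nxt, hM, arr, e1, e2, e3, e4, e5]
    · have e1 : ¬ j + 1 = p := by omega
      have e2 : ¬ j - 1 = p := by omega
      have e3 : ¬ j - p = 0 := by omega
      have e4 : j - (p - 1) - 1 = j - p := by omega
      have e5 : j - (p + 1) + 1 = j - p := by omega
      rcases hM : M q T.1 with _ | ⟨q', (_ | _) | a⟩ <;>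
        simp [loc, cell, nxt, hM, arr, h0, h1, h2, e1, e2, e3, e4, e5]

/-- global configuration after a sequence of steps -/
def glob : List (Option Γ) → GC Γ Λ
  | [] => ⟨0, ⟨default, Tape.mk₁ []⟩⟩
  | y :: σ => nxt M y (glob σ)

theorem blank_nth (j : ℤ) : (Tape.mk₁ ([] : List Γ)).nth j = default := by
  rcases j with (_ | n) | n
  · simp [Tape.nth, Tape.mk₁, Tape.mk₂]
  · show (Tape.mk₁ ([] : List Γ)).right.nth n = default
    simp [Tape.mk₁, Tape.mk₂, ListBlank.nth_mk, ListBlank.tail_mk]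
  · show (Tape.mk₁ ([] : List Γ)).left.nth n = default
    simp [Tape.mk₁, Tape.mk₂, ListBlank.nth_mk]

theorem C_eq (σ : List (Option Γ)) : ∀ j, (caOf M).C σ j = cell (glob M σ) j := by
  induction σ with
  | nil =>
    intro j
    simp only [CA.C, caOf, cell, glob, blank_nth]
    by_cases h : j = 0 <;> simp [h]
  | cons y σ ih =>
    intro j
    rw [CA.C, ih, ih, ih, glob, ← loc_cell]
    rfl

theorem glob_feed (l : List Γ) : (glob M (l.map some)).cfg = TM0.init l := by
  induction l with
  | nil => rfl
  | cons x l ih =>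
    have : ∀ G : GC Γ Λ, (nxt M (some x) G).cfg = ⟨G.cfg.q, (G.cfg.Tape.move .left).write x⟩ := by
      rintro ⟨p, q, T⟩; rfl
    rw [List.map_cons, glob, this, ih]
    simp [TM0.init, Tape.mk₁, Tape.mk₂]

theorem glob_run (σ : List (Option Γ)) :
    (glob M (none :: σ)).cfg = (TM0.step M (glob M σ).cfg).getD (glob M σ).cfg := by
  rw [glob]
  obtain ⟨p, q, T⟩ := glob M σ
  rcases hM : M q T.1 with _ | ⟨q', (_ | _) | a⟩ <;> simp [nxt, TM0.step, hM]

theorem glob_halt (σ : List (Option Γ)) (h : TM0.step M (glob M σ).cfg = none) :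
    glob M (none :: σ) = glob M σ := by
  rw [glob]
  revert h
  obtain ⟨p, q, T⟩ := glob M σ
  intro h
  simp only [TM0.step, Option.map_eq_none_iff] at h
  simp [nxt, h]

theorem H_iff (σ : List (Option Γ)) (j : ℤ) : (caOf M).H ((caOf M).C σ j) ↔
    j = (glob M σ).pos ∧ TM0.step M (glob M σ).cfg = none := by
  rw [C_eq]
  obtain ⟨p, q, T⟩ := glob M σ
  simp only [caOf, cell, TM0.step, Option.map_eq_none_iff]
  by_cases h : j = p
  · subst h; simp
  · simp [h]

/-- run with halting configurations fixed -/
def stp (c : TM0.Cfg Γ Λ) : TM0.Cfg Γ Λ := (TM0.step M c).getD c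

theorem glob_iter (l : List Γ) (i : ℕ) :
    (glob M (List.replicate i none ++ l.map some)).cfg = (stp M)^[i] (TM0.init l) := by
  induction i with
  | zero => simpa using glob_feed M l
  | succ i ih =>
    rw [List.replicate_succ, List.cons_append, glob_run, ih, Function.iterate_succ_apply']
    rfl

theorem reach_iter (c : TM0.Cfg Γ Λ) (i : ℕ) :
    StateTransition.Reaches (TM0.step M) c ((stp M)^[i] c) := by
  induction i with
  | zero => exact Relation.ReflTransGen.refl
  | succ i ih =>
    rw [Function.iterate_succ_apply']
    generalize (stp M)^[i] c = b at ih
    cases hb : TM0.step M b with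
    | none => simpa [stp, hb] using ih
    | some b' => rw [stp, hb]; exact ih.tail hb

theorem exists_iter (c b : TM0.Cfg Γ Λ) (h : StateTransition.Reaches (TM0.step M) c b) :
    ∃ i, (stp M)^[i] c = b := by
  induction h with
  | refl => exact ⟨0, rfl⟩
  | tail _ h ih =>
    obtain ⟨i, rfl⟩ := ih
    refine ⟨i + 1, ?_⟩
    rw [Function.iterate_succ_apply', stp, Option.mem_def.1 h]
    rfl

theorem dom_iff (l : List Γ) : (StateTransition.eval (TM0.step M) (TM0.init l)).Dom ↔
    ∃ i, TM0.step M (glob M (List.replicate i none ++ l.map some)).cfg = none := by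
  rw [Part.dom_iff_mem]
  constructor
  · rintro ⟨b, hb⟩
    obtain ⟨h1, h2⟩ := StateTransition.mem_eval.1 hb
    obtain ⟨i, rfl⟩ := exists_iter M _ _ h1
    exact ⟨i, by rw [glob_iter]; exact h2⟩
  · rintro ⟨i, hi⟩
    rw [glob_iter] at hi
    exact ⟨_, StateTransition.mem_eval.2 ⟨reach_iter M _ i, hi⟩⟩

theorem glob_stable (σ : List (Option Γ)) (h : TM0.step M (glob M σ).cfg = none) (n : ℕ) :
    glob M (List.replicate n none ++ σ) = glob M σ := by
  induction n with
  | zero => rfl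
  | succ n ih =>
    rw [List.replicate_succ, List.cons_append, glob_halt, ih]
    rw [ih]; exact h

theorem tm_game [Finite Γ] [Finite Λ] :
    ∃ (Q : Type) (A D : List (F2 × ℤ)) (φ : FreeGroup (Ltr Q (Option Γ)) →* F2), ∀ l : List Γ,
      WWGAttackerWins A D (φ (W (l.map some) * FreeGroup.of Ltr.g)) ↔
        (StateTransition.eval (TM0.step M) (TM0.init l)).Dom := by
  obtain ⟨Q, A, D, φ, h⟩ := (caOf M).game
  refine ⟨Q, A, D, φ, fun l => ?_⟩
  rw [dom_iff]
  constructor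
  · intro hw
    by_contra hn
    refine (h (l.map some)).2 ?_ hw
    intro i k hH
    exact hn ⟨i, ((H_iff M _ _).1 hH).2⟩
  · rintro ⟨i, hi⟩
    refine (h (l.map some)).1 ?_
    set G := glob M (List.replicate i none ++ l.map some) with hG
    refine ⟨G.pos.natAbs + i, G.pos, by push_cast; omega, ?_⟩
    rw [H_iff]
    have : glob M (List.replicate (G.pos.natAbs + i) none ++ l.map some) = G := by
      rw [List.replicate_add, List.append_assoc, glob_stable M _ hi]
    show G.pos = (glob M (List.replicate (G.pos.natAbs + i) none ++ l.map some)).pos ∧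
      TM0.step M (glob M (List.replicate (G.pos.natAbs + i) none ++ l.map some)).cfg = none
    rw [this]
    exact ⟨rfl, hi⟩

end TM

end WWG

namespace WWG

open Turing

theorem tm_game_supp {Γ Λ : Type} [Inhabited Γ] [Inhabited Λ] [Finite Γ] (M : TM0.Machine Γ Λ)
    {S : Finset Λ} (ss : TM0.Supports M ↑S) :
    ∃ (Q : Type) (A D : List (F2 × ℤ)) (φ : FreeGroup (Ltr Q (Option Γ)) →* F2), ∀ l : List Γ,
      WWGAttackerWins A D (φ (W (l.map some) * FreeGroup.of Ltr.g)) ↔ (TM0.eval M l).Dom := by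
  classical
  let _ : Inhabited {x // x ∈ S} := ⟨⟨default, ss.1⟩⟩
  let f : PointedMap Γ Γ := ⟨id, rfl⟩
  let g₁ : PointedMap Λ {x // x ∈ S} :=
    ⟨fun q => if h : q ∈ S then ⟨q, h⟩ else default, by
      have : (default : Λ) ∈ S := ss.1
      rw [dif_pos this]; rfl⟩
  let g₂ : {x // x ∈ S} → Λ := Subtype.val
  obtain ⟨Q, A, D, φ, h⟩ := tm_game (M.map f f g₁ g₂)
  refine ⟨Q, A, D, φ, fun l => ?_⟩
  rw [h l]
  have hg : ∀ q ∈ (↑S : Set Λ), g₂ (g₁ q) = q := by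
    intro q hq
    have hq' : q ∈ S := hq
    show ((if h : q ∈ S then (⟨q, h⟩ : {x // x ∈ S}) else default) : {x // x ∈ S}).val = q
    rw [dif_pos hq']
  have := StateTransition.tr_eval_dom (TM0.Machine.map_respects M f f g₁ g₂ ss (fun _ => rfl) hg)
    (a₁ := TM0.init l) (a₂ := TM0.init l) ⟨ss.1, by
      rw [TM0.map_init]
      congr 1
      exact List.map_id l⟩
  rw [this]
  rfl

theorem tm2_game {K : Type} [DecidableEq K] [Fintype K] {Γ : K → Type} [∀ k, Fintype (Γ k)]
    {Λ σ : Type} [Inhabited Λ] [Inhabited σ] [Fintype σ] (M : Λ → TM2.Stmt Γ Λ σ)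
    {S : Finset Λ} (ss : TM2.Supports M S) (k : K) :
    ∃ (Q : Type) (A D : List (F2 × ℤ)) (φ : FreeGroup (Ltr Q (Option (TM2to1.Γ' K Γ))) →* F2),
      ∀ L : List (Γ k),
      WWGAttackerWins A D (φ (W ((TM2to1.trInit k L).map some) * FreeGroup.of Ltr.g)) ↔
        (TM2.eval M k L).Dom := by
  obtain ⟨Q, A, D, φ, h⟩ := tm_game_supp _ (TM1to0.tr_supports _ (TM2to1.tr_supports M ss))
  refine ⟨Q, A, D, φ, fun L => ?_⟩
  rw [h, TM1to0.tr_eval, TM2to1.tr_eval_dom]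

/-- the numbers `2 ^ k - 1` -/
def xk : ℕ → ℕ
  | 0 => 0
  | k + 1 => 2 * xk k + 1

theorem xk_strictMono : StrictMono xk := strictMono_nat_of_lt_succ fun n => by
  rw [xk]; omega

theorem trNat_xk (k : ℕ) : PartrecToTM2.trNat (xk k) = List.replicate k PartrecToTM2.Γ'.bit1 := by
  induction k with
  | zero => simp [xk]
  | succ k ih =>
    rw [List.replicate_succ, ← ih, xk]
    unfold PartrecToTM2.trNat
    have : ((2 * xk k + 1 : ℕ) : Num) = Num.bit1 (xk k : Num) := by
      rw [← Num.bit1_of_bit1]; push_cast; ring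
    rw [this]
    cases (xk k : Num) <;> rfl

instance : Fintype PartrecToTM2.K' :=
  ⟨{.main, .rev, .aux, .stack}, fun x => by cases x <;> simp⟩

theorem partrec_game {f : ℕ →. ℕ} (hf : Partrec f) :
    ∃ (A D : List (F2 × ℤ)) (x y : F2), ∀ k : ℕ,
      WWGAttackerWins A D (x ^ k * y) ↔ (f (xk k)).Dom := by
  obtain ⟨c, hc⟩ := ToPartrec.Code.exists_code (Nat.Partrec'.part_iff₁.2 hf)
  let _ : Inhabited PartrecToTM2.Λ' := ⟨PartrecToTM2.trNormal c PartrecToTM2.Cont'.halt⟩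
  obtain ⟨Q, A, D, φ, h⟩ := tm2_game (Γ := fun _ : PartrecToTM2.K' => PartrecToTM2.Γ')
    (σ := Option PartrecToTM2.Γ') PartrecToTM2.tr
    (PartrecToTM2.tr_supports c PartrecToTM2.Cont'.halt) PartrecToTM2.K'.main
  let up : PartrecToTM2.Γ' → (∀ _ : PartrecToTM2.K', Option PartrecToTM2.Γ') := fun a =>
    Function.update (fun _ => none) PartrecToTM2.K'.main (some a)
  let e1 : TM2to1.Γ' PartrecToTM2.K' (fun _ => PartrecToTM2.Γ') := (false, up .bit1)
  let e0 : TM2to1.Γ' PartrecToTM2.K' (fun _ => PartrecToTM2.Γ') := (true, up .cons)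
  refine ⟨A, D, φ (FreeGroup.of (Ltr.sy (some e1))), φ (FreeGroup.of (Ltr.sy (some e0)) *
    FreeGroup.of Ltr.g), fun k => ?_⟩
  have hL := h (PartrecToTM2.trList [xk k])
  have hW : ∀ n : ℕ, (W (List.replicate n (some e1)) : FreeGroup (Ltr Q _)) =
      FreeGroup.of (Ltr.sy (some e1)) ^ n := by
    intro n
    induction n with
    | zero => simp [W_nil]
    | succ n ih => rw [List.replicate_succ, W_cons, ih, pow_succ]
  have hI : (TM2to1.trInit PartrecToTM2.K'.main (PartrecToTM2.trList [xk k])).map some =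
      some e0 :: List.replicate k (some e1) := by
    have hr : (PartrecToTM2.trList [xk k]).reverse = .cons :: List.replicate k .bit1 := by
      simp [PartrecToTM2.trList, trNat_xk]
    unfold TM2to1.trInit
    rw [hr]
    let F : PartrecToTM2.Γ' → TM2to1.Γ' PartrecToTM2.K' (fun _ => PartrecToTM2.Γ') :=
      fun a => (false, up a)
    show some e0 :: List.map some (List.map F
      (List.replicate k PartrecToTM2.Γ'.bit1)) = _
    rw [List.map_replicate, List.map_replicate]
  rw [hI, W_cons, hW, mul_assoc, map_mul, map_pow] at hL
  rw [hL]
  have hinit : (TM2.init PartrecToTM2.K'.main (PartrecToTM2.trList [xk k]) :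
      TM2.Cfg (fun _ : PartrecToTM2.K' => PartrecToTM2.Γ') PartrecToTM2.Λ'
        (Option PartrecToTM2.Γ')) = PartrecToTM2.init c [xk k] := by
    rw [TM2.init, PartrecToTM2.init]
    congr 1
    funext z
    cases z <;> rfl
  have hev := PartrecToTM2.tr_eval c [xk k]
  have hc' := hc ⟨[xk k], rfl⟩
  show (StateTransition.eval (TM2.step PartrecToTM2.tr) (TM2.init _ _)).Dom ↔ _
  rw [hinit, hev]
  show (c.eval [xk k]).Dom ↔ _
  have : c.eval [xk k] = pure <$> f (xk k) := hc'
  rw [this]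
  rfl

end WWG

namespace WWG

theorem xk_computable : Computable xk := by
  have : Primrec (fun k : ℕ => Nat.rec (motive := fun _ => ℕ) 0 (fun _ y => 2 * y + 1) k) := by
    refine Primrec.nat_rec₁ 0 ?_
    exact Primrec.succ.comp (Primrec.nat_mul.comp (Primrec.const 2) Primrec.snd)
  refine this.to_comp.of_eq fun k => ?_
  induction k with
  | zero => rfl
  | succ k ih => show 2 * _ + 1 = 2 * xk k + 1; rw [ih]

/-- A partial function which on `xk k` runs the `k`-th program on input `0`. -/
def univ (m : ℕ) : Part ℕ :=
  (Nat.rfind fun k => Part.some (decide (xk k = m))).bind fun k =>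
    Nat.Partrec.Code.eval (Denumerable.ofNat Nat.Partrec.Code k) 0

theorem univ_partrec : Partrec univ := by
  refine Partrec.bind (Partrec.rfind ?_) ?_
  · have h1 : Computable (fun p : ℕ × ℕ => decide (xk p.2 = p.1)) := by
      have h2 : Computable (fun q : ℕ × ℕ => decide (q.1 = q.2)) :=
        (Primrec.eq (α := ℕ)).decide.to_comp
      exact h2.comp ((xk_computable.comp Computable.snd).pair Computable.fst)
    exact h1.partrec
  · exact Nat.Partrec.Code.eval_part.comp
      ((Computable.ofNat Nat.Partrec.Code).comp Computable.snd) (Computable.const 0)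

theorem univ_dom (k : ℕ) : (univ (xk k)).Dom ↔
    (Nat.Partrec.Code.eval (Denumerable.ofNat Nat.Partrec.Code k) 0).Dom := by
  have h : k ∈ Nat.rfind fun j => Part.some (decide (xk j = xk k)) := by
    refine Nat.mem_rfind.2 ⟨by simp, fun {m} hm => ?_⟩
    have := xk_strictMono hm
    simp [this.ne]
  rw [univ, Part.eq_some_iff.2 h, Part.bind_some]

/-- The word `h ^ k ++ t`. -/
def wrd (h t : BWord) (k : ℕ) : BWord := Nat.rec (motive := fun _ => BWord) t (fun _ y => h ++ y) k

theorem wrd_computable (h t : BWord) : Computable (wrd h t) := by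
  have : Primrec (wrd h t) := by
    refine Primrec.nat_rec₁ t ?_
    exact Primrec.list_append.comp (Primrec.const h) Primrec.snd
  exact this.to_comp

theorem mk_wrd (x y : F2) (k : ℕ) :
    FreeGroup.mk (wrd x.toWord y.toWord k) = x ^ k * y := by
  induction k with
  | zero => simp [wrd, FreeGroup.mk_toWord]
  | succ k ih =>
    have : wrd x.toWord y.toWord (k + 1) = x.toWord ++ wrd x.toWord y.toWord k := rfl
    rw [this, ← FreeGroup.mul_mk, ih, FreeGroup.mk_toWord, pow_succ', mul_assoc]

theorem map_back (A : List (F2 × ℤ)) :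
    ((A.map fun p => (p.1.toWord, p.2)).map fun p : BWord × ℤ => (FreeGroup.mk p.1, p.2)) = A := by
  rw [List.map_map]
  conv_rhs => rw [← List.map_id A]
  refine List.map_congr_left fun p _ => ?_
  simp [FreeGroup.mk_toWord]

end WWG

/-- It is undecidable whether Attacker has a winning strategy in the weighted Word Game
with words over a binary free group alphabet. -/
theorem weighted_word_game_undecidable :
    ¬ ComputablePred (fun inst : WWGInstance =>
      WWGAttackerWins (inst.1.map fun p => (FreeGroup.mk p.1, p.2))
        (inst.2.1.map fun p => (FreeGroup.mk p.1, p.2))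
        (FreeGroup.mk inst.2.2)) := by
  intro hC
  obtain ⟨A, D, x, y, h⟩ := WWG.partrec_game WWG.univ_partrec
  refine ComputablePred.halting_problem 0 ?_
  refine ComputablePred.computable_of_manyOneReducible ?_ hC
  refine ⟨fun c => (A.map fun p => (p.1.toWord, p.2), D.map fun p => (p.1.toWord, p.2),
    WWG.wrd x.toWord y.toWord (Encodable.encode c)), ?_, fun c => ?_⟩
  · exact (Computable.const _).pair ((Computable.const _).pair
      ((WWG.wrd_computable _ _).comp Computable.encode))
  · dsimp only
    rw [WWG.map_back, WWG.map_back, WWG.mk_wrd, h, WWG.univ_dom, Denumerable.ofNat_encode]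
end

section
/- It is undecidable whether Attacker has a winning strategy in the Word Game on pairs of group words, with first components over a binary free group alphabet and second components over a unary group alphabet: the predicate on encoded instances (Attacker's finite list of pairs (u_i, u_i') ∈ F₂ × F₁, Defender's finite list of pairs (v_j, 1) ∈ F₂ × F₁, and an initial pair (w, 1)) asserting that Attacker has a winning strategy is not a computable predicate. -/
/-- The free group on one generator `ρ`. -/
abbrev F1 : Type := FreeGroup Unit

/-- A word over the unary group alphabet `{ρ, ρ̄}`. -/
abbrev UWord : Type := List (Unit × Bool)

/-- An encoded instance of the Word Game on pairs: Attacker's finite list of pairs of words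
`(u_i, u_i')`, Defender's finite list of words `v_j` (their second components being the
identity), and the first component `w` of the initial pair `(w, 1)`. -/
abbrev WGInstance : Type := List (BWord × UWord) × List BWord × BWord

/-- The configuration after `k` rounds of the Word Game on pairs, starting from `w0`, when
Defender plays the sequence of moves `δ` and Attacker follows the strategy `st` (a function
of the finite history of Defender's choices so far); moves act by componentwise right
multiplication. -/
def wgPos (w0 : F2 × F1) (δ : ℕ → F2 × F1) (st : List (F2 × F1) → F2 × F1) : ℕ → F2 × F1
  | 0 => w0
  | k + 1 => wgPos w0 δ st k * δ k * st ((List.range (k + 1)).map δ)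

/-- Attacker has a winning strategy in the Word Game on pairs with Attacker's list `A`,
Defender's list `D` and initial pair `w0`: there is a strategy, choosing a move from `A`
for every finite history of Defender's moves, such that every infinite play consistent with
it reaches the pair `(1, 1)` of empty words after some Attacker move. -/
def WGAttackerWins (A D : List (F2 × F1)) (w0 : F2 × F1) : Prop :=
  ∃ st : List (F2 × F1) → F2 × F1,
    (∀ hist, (∀ x ∈ hist, x ∈ D) → st hist ∈ A) ∧
    ∀ δ : ℕ → F2 × F1, (∀ i, δ i ∈ D) → ∃ n, wgPos w0 δ st (n + 1) = 1


namespace WG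

/-- Register contents. -/
abbrev Reg : Type := ℕ → ℤ

/-- A rule `(P, δ, Q₁, Q₂)`: `P x` follows from `Q₁ (x + δ)` and `Q₂ (x + δ)`. -/
abbrev Rule : Type := Set Reg × Reg × Set Reg × Set Reg

/-- A test `(P, φ)`: `P x` follows from `φ x = 0`. -/
abbrev Test : Type := Set Reg × (Reg →+ ℤ)

def SoundR (R : List Rule) : Prop :=
  ∀ P δ Q₁ Q₂, (P, δ, Q₁, Q₂) ∈ R → ∀ x, x + δ ∈ Q₁ → x + δ ∈ Q₂ → x ∈ P

def SoundT (T : List Test) : Prop :=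
  ∀ P φ, (P, φ) ∈ T → ∀ x, φ x = 0 → x ∈ P

inductive Holds (R : List Rule) (T : List Test) : Set Reg → Reg → Prop
  | rule {P δ Q₁ Q₂ x} : (P, δ, Q₁, Q₂) ∈ R → Holds R T Q₁ (x + δ) → Holds R T Q₂ (x + δ) →
      Holds R T P x
  | test {P φ x} : (P, φ) ∈ T → φ x = 0 → Holds R T P x

theorem Holds.mono {R R' : List Rule} {T T' : List Test} (hR : R ⊆ R') (hT : T ⊆ T') {P x}
    (h : Holds R T P x) : Holds R' T' P x := by
  induction h with
  | rule h _ _ ih1 ih2 => exact .rule (hR h) ih1 ih2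
  | test h h0 => exact .test (hT h) h0

/-- A recognizable set of register contents. -/
def Rec (P : Set Reg) : Prop :=
  ∃ R T, SoundR R ∧ SoundT T ∧ ∀ x ∈ P, Holds R T P x

theorem SoundR.append {R R'} (h : SoundR R) (h' : SoundR R') : SoundR (R ++ R') := by
  intro P δ Q₁ Q₂ hm
  rcases List.mem_append.1 hm with hm | hm
  · exact h _ _ _ _ hm
  · exact h' _ _ _ _ hm

theorem SoundT.append {R R'} (h : SoundT R) (h' : SoundT R') : SoundT (R ++ R') := by
  intro P φ hm
  rcases List.mem_append.1 hm with hm | hm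
  · exact h _ _ hm
  · exact h' _ _ hm

theorem SoundR.cons {R P δ Q₁ Q₂} (h' : SoundR R)
    (h : ∀ x, x + δ ∈ Q₁ → x + δ ∈ Q₂ → x ∈ P) : SoundR ((P, δ, Q₁, Q₂) :: R) := by
  intro P' δ' Q₁' Q₂' hm
  rcases List.mem_cons.1 hm with hm | hm
  · simp only [Prod.mk.injEq] at hm
    obtain ⟨rfl, rfl, rfl, rfl⟩ := hm
    exact h
  · exact h' _ _ _ _ hm

theorem SoundR.nil : SoundR [] := by
  intro P δ Q₁ Q₂ h
  simp at h

theorem Rec.test (φ : Reg →+ ℤ) : Rec {x | φ x = 0} := by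
  refine ⟨[], [({x | φ x = 0}, φ)], .nil, ?_, ?_⟩
  · intro P ψ h x hx
    simp only [List.mem_singleton, Prod.mk.injEq] at h
    obtain ⟨rfl, rfl⟩ := h
    exact hx
  · intro x hx
    exact .test (by simp) hx

theorem Rec.and {P Q} (hP : Rec P) (hQ : Rec Q) : Rec (P ∩ Q) := by
  obtain ⟨R, T, h1, h2, h3⟩ := hP
  obtain ⟨R', T', h1', h2', h3'⟩ := hQ
  refine ⟨(P ∩ Q, 0, P, Q) :: (R ++ R'), T ++ T', (h1.append h1').cons ?_, h2.append h2', ?_⟩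
  · intro x hx hx'
    simp only [add_zero] at hx hx'
    exact ⟨hx, hx'⟩
  · rintro x ⟨hx, hx'⟩
    refine .rule (List.mem_cons_self) ?_ ?_
    · rw [add_zero]
      exact (h3 x hx).mono (by intro a; simp +contextual) (by intro a; simp +contextual)
    · rw [add_zero]
      exact (h3' x hx').mono (by intro a; simp +contextual) (by intro a; simp +contextual)

theorem Rec.shift {P} (hP : Rec P) (δ : Reg) : Rec {x | x + δ ∈ P} := by
  obtain ⟨R, T, h1, h2, h3⟩ := hP
  refine ⟨({x | x + δ ∈ P}, δ, P, P) :: R, T, h1.cons fun x hx _ => hx, h2, ?_⟩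
  intro x hx
  have := (h3 _ hx).mono (R' := ({x | x + δ ∈ P}, δ, P, P) :: R) (T' := T)
    (by intro a; simp +contextual) (by intro a; simp)
  exact .rule List.mem_cons_self this this

theorem Rec.eq (i j : ℕ) : Rec {x | x i = x j} := by
  have := Rec.test (Pi.evalAddMonoidHom (fun _ : ℕ => ℤ) i - Pi.evalAddMonoidHom (fun _ => ℤ) j)
  convert this using 3
  simp [sub_eq_zero]

theorem Rec.zero (i : ℕ) : Rec {x | x i = 0} :=
  Rec.test (Pi.evalAddMonoidHom (fun _ : ℕ => ℤ) i)

theorem Rec.univ : Rec Set.univ := by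
  have := Rec.test 0
  convert this
  simp

theorem Rec.all {n : ℕ} {P : Fin n → Set Reg} (h : ∀ i, Rec (P i)) : Rec {x | ∀ i, x ∈ P i} := by
  induction n with
  | zero =>
    convert Rec.univ
    simp
  | succ n ih =>
    have := (h 0).and (ih (P := fun i => P i.succ) fun i => h _)
    convert this using 1
    ext x
    simp [Fin.forall_fin_succ]

theorem Rec.nonneg (i : ℕ) : Rec {x | 0 ≤ x i} := by
  obtain ⟨R, T, h1, h2, h3⟩ := Rec.zero i
  let N : Set Reg := {x | 0 ≤ x i}
  let Z : Set Reg := {x | x i = 0}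
  let R' := (N, Pi.single i (-1), N, N) :: (N, 0, Z, Z) :: R
  have key : ∀ k : ℕ, ∀ x : Reg, x i = k → Holds R' T N x := by
    intro k
    induction k with
    | zero =>
      intro x hx
      have : Holds R' T Z (x + 0) := by
        rw [add_zero]
        exact (h3 x (by simpa using hx)).mono (by intro a; simp +contextual [R']) (by intro a; simp)
      exact .rule (by simp [R']) this this
    | succ k ih =>
      intro x hx
      have := ih (x + Pi.single i (-1)) (by simp [hx])
      exact .rule List.mem_cons_self this this
  refine ⟨R', T, (h1.cons ?_).cons ?_, h2, ?_⟩
  · intro x hx _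
    simp only [Z, N, add_zero, Set.mem_ofPred_eq] at *
    omega
  · intro x hx _
    simp only [N, Set.mem_ofPred_eq, Pi.add_apply, Pi.single_eq_same] at *
    omega
  · intro x hx
    exact key (x i).toNat x (by simpa using hx)

/-- Forget the contents of register `i`. -/
def Ex (i : ℕ) (P : Set Reg) : Set Reg := {x | ∃ y ∈ P, ∀ k, k ≠ i → y k = x k}

/-- The rules for forgetting a register. -/
def exRules (i : ℕ) (P : Set Reg) : List Rule :=
  [(Ex i P, Pi.single i 1, Ex i P, Ex i P), (Ex i P, Pi.single i (-1), Ex i P, Ex i P),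
    (Ex i P, 0, P, P)]

theorem exRules_sound (i P) : SoundR (exRules i P) := by
  refine ((SoundR.nil.cons ?_).cons ?_).cons ?_
  · intro x hx _
    exact ⟨x, by simpa using hx, fun _ _ => rfl⟩
  · rintro x ⟨y, hy, h⟩ _
    refine ⟨y, hy, fun k hk => ?_⟩
    simp [h k hk, hk]
  · rintro x ⟨y, hy, h⟩ _
    refine ⟨y, hy, fun k hk => ?_⟩
    simp [h k hk, hk]

theorem exRules_holds {i P R T} (hR : exRules i P ⊆ R) {y : Reg} (hy : Holds R T P y) {x : Reg}
    (hx : ∀ k, k ≠ i → y k = x k) : Holds R T (Ex i P) x := by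
  have base : Holds R T (Ex i P) y := by
    have : Holds R T P (y + 0) := by simpa using hy
    exact .rule (hR (by simp [exRules])) this this
  have key : ∀ n : ℕ, ∀ x : Reg, (∀ k, k ≠ i → y k = x k) → (x i - y i).natAbs = n →
      Holds R T (Ex i P) x := by
    intro n
    induction n with
    | zero =>
      intro x hx h
      have : x = y := by
        funext k
        by_cases hk : k = i
        · subst hk; omega
        · exact (hx k hk).symm
      rwa [this]
    | succ n ih =>
      intro x hx h
      by_cases hlt : x i < y i
      · have := ih (x + Pi.single i 1) (by intro k hk; simp [hx k hk, hk])
          (by simp only [Pi.add_apply, Pi.single_eq_same]; omega)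
        exact .rule (hR (by simp [exRules])) this this
      · have := ih (x + Pi.single i (-1)) (by intro k hk; simp [hx k hk, hk])
          (by simp only [Pi.add_apply, Pi.single_eq_same]; omega)
        exact .rule (hR (by simp [exRules])) this this
  exact key _ x hx rfl

theorem Rec.ex {P} (hP : Rec P) (i : ℕ) : Rec (Ex i P) := by
  obtain ⟨R, T, h1, h2, h3⟩ := hP
  refine ⟨exRules i P ++ R, T, (exRules_sound i P).append h1, h2, ?_⟩
  rintro x ⟨y, hy, h⟩
  exact exRules_holds (by intro a; simp +contextual)
    ((h3 y hy).mono (by intro a; simp +contextual) (by intro a; simp)) h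

theorem Rec.exs {P} (hP : Rec P) (N m : ℕ) :
    Rec {x | ∃ y ∈ P, ∀ k, (k < N ∨ N + m ≤ k) → y k = x k} := by
  induction m with
  | zero =>
    convert hP
    ext x
    constructor
    · rintro ⟨y, hy, h⟩
      have : y = x := funext fun k => h k (by omega)
      rwa [← this]
    · intro h
      exact ⟨x, h, fun _ _ => rfl⟩
  | succ m ih =>
    convert ih.ex (N + m)
    ext x
    constructor
    · rintro ⟨y, hy, h⟩
      refine ⟨Function.update x (N + m) (y (N + m)), ⟨y, hy, ?_⟩, ?_⟩
      · intro k hk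
        by_cases hk' : k = N + m
        · subst hk'; simp
        · simp only [Function.update_of_ne hk']
          exact h k (by omega)
      · intro k hk
        simp [hk]
    · rintro ⟨z, ⟨y, hy, h⟩, hz⟩
      refine ⟨y, hy, fun k hk => ?_⟩
      rw [h k (by omega), hz k (by omega)]

/-- The graph of `f` with input registers `σ` and output register `o`. -/
def Pf {n} (f : List.Vector ℕ n → ℕ) (σ : Fin n → ℕ) (o : ℕ) : Set Reg :=
  {x | ∃ v : List.Vector ℕ n, (∀ i, x (σ i) = v.get i) ∧ x o = f v}

theorem Pf_congr {n} {f : List.Vector ℕ n → ℕ} {σ : Fin n → ℕ} {o : ℕ} {x y : Reg}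
    (h : ∀ i, x (σ i) = y (σ i)) (ho : x o = y o) : x ∈ Pf f σ o ↔ y ∈ Pf f σ o := by
  simp only [Pf, Set.mem_ofPred_eq, h, ho]

theorem exists_bound {n} (σ : Fin n → ℕ) (o : ℕ) : ∃ N, (∀ i, σ i < N) ∧ o < N := by
  refine ⟨(∑ i, σ i) + o + 1, fun i => ?_, by omega⟩
  have := Finset.single_le_sum (f := σ) (fun _ _ => Nat.zero_le _) (Finset.mem_univ i)
  omega

theorem rec_prec {n} {f : List.Vector ℕ n → ℕ} {g : List.Vector ℕ (n + 2) → ℕ}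
    (hf : ∀ σ o, Rec (Pf f σ o)) (hg : ∀ σ o, Rec (Pf g σ o)) (σ : Fin n → ℕ) (N : ℕ)
    (hN : ∀ i, σ i < N) :
    Rec {x | ∃ v : List.Vector ℕ n, ∃ m : ℕ, (∀ i, x (σ i) = v.get i) ∧ x N = m ∧
      x (N + 1) = (Nat.rec (f v) (fun y IH => g (y ::ᵥ IH ::ᵥ v)) m : ℕ)} := by
  let h : List.Vector ℕ n → ℕ → ℕ := fun v m => Nat.rec (f v) (fun y IH => g (y ::ᵥ IH ::ᵥ v)) m
  let H : Set Reg := {x | ∃ v : List.Vector ℕ n, ∃ m : ℕ, (∀ i, x (σ i) = v.get i) ∧ x N = m ∧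
      x (N + 1) = (Nat.cast (h v m) : ℤ)}
  let B := Pf f σ (N + 1) ∩ {x | x N = 0}
  let G := Pf g (Fin.cons N (Fin.cons (N + 2) σ)) (N + 1)
  let Q : Set Reg := {x | x (N + 1) = x (N + 2)}
  let E := Q ∩ H
  let K := Ex (N + 1) E
  let M := G ∩ K
  let W := Ex (N + 2) M
  obtain ⟨R1, T1, b1, b2, b3⟩ := (hf σ (N + 1)).and (Rec.zero N)
  obtain ⟨R2, T2, c1, c2, c3⟩ := hg (Fin.cons N (Fin.cons (N + 2) σ)) (N + 1)
  obtain ⟨R3, T3, d1, d2, d3⟩ := Rec.eq (N + 1) (N + 2)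
  let R : List Rule := (H, 0, B, B) :: (H, Pi.single N (-1), W, W) :: (M, 0, G, K) ::
    (E, 0, Q, H) :: (exRules (N + 1) E ++ (exRules (N + 2) M ++ (R1 ++ (R2 ++ R3))))
  let T := T1 ++ (T2 ++ T3)
  have hne : ∀ i, σ i ≠ N ∧ σ i ≠ N + 1 ∧ σ i ≠ N + 2 := fun i => by
    have := hN i
    omega
  have sound : SoundR R := by
    refine ((((((exRules_sound _ _).append ((exRules_sound _ _).append
      (b1.append (c1.append d1)))).cons ?_).cons ?_).cons ?_).cons ?_)
    · intro x h1 h2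
      rw [add_zero] at h1 h2
      exact ⟨h1, h2⟩
    · intro x h1 h2
      rw [add_zero] at h1 h2
      exact ⟨h1, h2⟩
    · rintro x ⟨y, ⟨⟨u, hu, hu'⟩, ⟨z, ⟨hz, v, m, hv, hm, hzm⟩, hzy⟩⟩, hyx⟩ _
      refine ⟨v, m + 1, fun i => ?_, ?_, ?_⟩
      · rw [← hv i, hzy _ (hne i).2.1, hyx _ (hne i).2.2]
        simp [(hne i).1]
      · have e1 := hyx N (by omega)
        have e2 := hzy N (by omega)
        simp only [Pi.add_apply, Pi.single_eq_same] at e1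
        push_cast
        omega
      · have e1 := hyx (N + 1) (by omega)
        simp only [Pi.add_apply, Pi.single_eq_of_ne (show N + 1 ≠ N by omega), add_zero] at e1
        rw [← e1, hu']
        congr 2
        have u0 : u.get 0 = m := by
          have := hu 0
          simp only [Fin.cons_zero] at this
          rw [← hzy N (by omega), hm] at this
          exact_mod_cast this.symm
        have u1 : u.get 1 = h v m := by
          have := hu 1
          rw [show (1 : Fin (n + 2)) = Fin.succ 0 from rfl, Fin.cons_succ, Fin.cons_zero] at this
          have hz' : z (N + 1) = z (N + 2) := hz
          rw [← hzy (N + 2) (by omega), ← hz', hzm] at this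
          exact_mod_cast this.symm
        apply List.Vector.ext
        intro i
        refine Fin.cases ?_ (fun i => ?_) i
        · simpa using u0
        · refine Fin.cases ?_ (fun i => ?_) i
          · rw [List.Vector.get_cons_succ, List.Vector.get_cons_zero]
            exact u1
          · have := hu i.succ.succ
            simp only [Fin.cons_succ] at this
            rw [← hzy _ (hne i).2.1, hv i] at this
            simp only [List.Vector.get_cons_succ]
            exact_mod_cast this.symm
    · rintro x ⟨⟨v, hv, ho⟩, h0⟩ _
      rw [add_zero] at *
      exact ⟨v, 0, hv, by simpa using h0, ho⟩
  have key : ∀ m : ℕ, ∀ v : List.Vector ℕ n, ∀ x : Reg, (∀ i, x (σ i) = v.get i) → x N = m →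
      x (N + 1) = (Nat.cast (h v m) : ℤ) → Holds R T H x := by
    intro m
    induction m with
    | zero =>
      intro v x hv h0 hx
      have : Holds R T B (x + 0) := by
        rw [add_zero]
        exact (b3 x ⟨⟨v, hv, hx⟩, by simpa using h0⟩).mono (by intro a; simp +contextual [R])
          (by intro a; simp +contextual [T])
      exact .rule List.mem_cons_self this this
    | succ m ih =>
      intro v x hv h0 hx
      let y := Function.update (x + Pi.single N (-1)) (N + 2) (Nat.cast (h v m) : ℤ)
      have yN : y N = m := by simp [y, h0]
      have yN1 : y (N + 1) = (Nat.cast (h v (m + 1)) : ℤ) := by simp [y, hx]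
      have yN2 : y (N + 2) = (Nat.cast (h v m) : ℤ) := by simp [y]
      have yv : ∀ i, y (σ i) = v.get i := by
        intro i
        simp [y, (hne i).1, (hne i).2.2, hv i]
      have hG : Holds R T G y := by
        refine (c3 y ⟨m ::ᵥ h v m ::ᵥ v, ?_, yN1⟩).mono (by intro a; simp +contextual [R])
          (by intro a; simp +contextual [T])
        intro i
        refine Fin.cases ?_ (fun i => ?_) i
        · simpa using yN
        · refine Fin.cases ?_ (fun i => ?_) i
          · rw [List.Vector.get_cons_succ, List.Vector.get_cons_zero, Fin.cons_succ, Fin.cons_zero]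
            exact yN2
          · simpa using yv i
      let z := Function.update y (N + 1) (Nat.cast (h v m) : ℤ)
      have hQ : Holds R T Q z := by
        refine (d3 z ?_).mono (by intro a; simp +contextual [R])
          (by intro a; simp +contextual [T])
        simp [z, yN2]
      have hH : Holds R T H z := by
        refine ih v z ?_ ?_ ?_
        · intro i
          simp [z, (hne i).2.1, yv i]
        · simp [z, yN]
        · simp [z]
      have hE : Holds R T E z :=
        .rule (δ := 0) (Q₁ := Q) (Q₂ := H) (by simp [R]) (by simpa using hQ) (by simpa using hH)
      have hK : Holds R T K y := by
        refine exRules_holds (by intro a; simp +contextual [R]) hE ?_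
        intro k hk
        simp [z, hk]
      have hM : Holds R T M y :=
        .rule (δ := 0) (Q₁ := G) (Q₂ := K) (by simp [R]) (by simpa using hG) (by simpa using hK)
      have hW : Holds R T W (x + Pi.single N (-1)) := by
        refine exRules_holds (by intro a; simp +contextual [R]) hM ?_
        intro k hk
        simp [y, hk]
      exact .rule (by simp [R]) hW hW
  refine ⟨R, T, sound, b2.append (c2.append d2), ?_⟩
  rintro x ⟨v, m, hv, hm, hx⟩
  exact key m v x hv hm hx

theorem rec_primrec {n} {f : List.Vector ℕ n → ℕ} (hf : Nat.Primrec' f) :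
    ∀ σ o, Rec (Pf f σ o) := by
  induction hf with
  | zero =>
    intro σ o
    convert Rec.zero o
    ext x
    constructor
    · rintro ⟨v, -, h⟩
      simpa using h
    · intro h
      exact ⟨List.Vector.nil, fun i => i.elim0, by simpa using h⟩
  | succ =>
    intro σ o
    obtain ⟨N, hσ, ho⟩ := exists_bound σ o
    have h0 := hσ 0
    convert (((Rec.nonneg (σ 0)).and (Rec.eq N (σ 0))).and
      ((Rec.eq N o).shift (Pi.single N 1))).exs N 1 using 1
    ext x
    constructor
    · rintro ⟨v, hv, hx⟩
      refine ⟨Function.update x N (x (σ 0)), ⟨⟨?_, ?_⟩, ?_⟩, ?_⟩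
      · simp [show σ 0 ≠ N by omega, hv 0]
      · simp [show σ 0 ≠ N by omega]
      · simp [show o ≠ N by omega, hx, hv 0]
      · intro k hk
        simp [show k ≠ N by omega]
    · rintro ⟨y, ⟨⟨h1, h2⟩, h3⟩, hyx⟩
      have e1 := hyx (σ 0) (by omega)
      have e2 := hyx o (by omega)
      simp only [Set.mem_ofPred_eq, Pi.add_apply, Pi.single_eq_same,
        Pi.single_eq_of_ne (show o ≠ N by omega)] at h1 h2 h3
      refine ⟨(x (σ 0)).toNat ::ᵥ List.Vector.nil, fun i => ?_, ?_⟩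
      · rw [Subsingleton.elim i 0]
        simp only [List.Vector.get_cons_zero]
        omega
      · simp only [List.Vector.head_cons]
        omega
  | get i =>
    intro σ o
    convert (Rec.all fun i => Rec.nonneg (σ i)).and (Rec.eq o (σ i)) using 1
    ext x
    constructor
    · rintro ⟨v, h, h'⟩
      refine ⟨fun i => ?_, ?_⟩
      · simp [h]
      · simp [h, h']
    · rintro ⟨h, h'⟩
      refine ⟨List.Vector.ofFn fun i => (x (σ i)).toNat, fun i => ?_, ?_⟩
      · have := h i
        simpa using this
      · have := h i
        simp only [Set.mem_ofPred_eq] at this h'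
        simp [h', this]
  | @comp m n f g hf hg ihf ihg =>
    intro σ o
    obtain ⟨N, hσ, ho⟩ := exists_bound σ o
    convert ((Rec.all fun i => Rec.nonneg (σ i)).and
      (((Rec.all fun i : Fin n => ihg i σ (N + i)).and (ihf (fun i => N + i) o)).exs N n)) using 1
    ext x
    constructor
    · rintro ⟨v, hv, hx⟩
      refine ⟨fun i => by simp [hv], fun k => if k < N ∨ N + n ≤ k then x k else
        if h : k - N < n then (g ⟨k - N, h⟩ v : ℤ) else 0, ⟨?_, ?_⟩, ?_⟩
      · intro i
        refine ⟨v, fun j => ?_, ?_⟩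
        · simp [hσ j, hv]
        · simp
      · refine ⟨List.Vector.ofFn fun i => g i v, fun j => ?_, ?_⟩
        · simp
        · simp [ho, hx]
      · intro k hk
        simp [hk]
    · rintro ⟨hpos, y, ⟨h1, ⟨u, hu, hu'⟩⟩, hyx⟩
      have hx : ∃ v : List.Vector ℕ m, ∀ i, x (σ i) = v.get i := by
        refine ⟨List.Vector.ofFn fun i => (x (σ i)).toNat, fun i => ?_⟩
        have := hpos i
        simpa using this
      obtain ⟨v, hv⟩ := hx
      refine ⟨v, hv, ?_⟩
      rw [← hyx o (by omega), hu']
      congr 2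
      apply List.Vector.ext
      intro i
      obtain ⟨v', hv', h'⟩ := h1 i
      have : v' = v := by
        apply List.Vector.ext
        intro j
        have e := hv' j
        rw [hyx _ (Or.inl (hσ j)), hv j] at e
        exact_mod_cast e.symm
      have e := hu i
      rw [h', this] at e
      rw [List.Vector.get_ofFn]
      exact_mod_cast e.symm
  | @prec n f g hf hg ihf ihg =>
    intro σ o
    obtain ⟨N, hσ, ho⟩ := exists_bound σ o
    have := rec_prec ihf ihg (fun i => σ i.succ) N fun i => hσ _
    convert ((this.and (Rec.eq N (σ 0))).and (Rec.eq (N + 1) o)).exs N 2 using 1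
    ext x
    constructor
    · rintro ⟨v, hv, hx⟩
      refine ⟨fun k => if k = N then x (σ 0) else if k = N + 1 then x o else x k,
        ⟨⟨⟨v.tail, v.head, ?_, ?_, ?_⟩, ?_⟩, ?_⟩, ?_⟩
      · intro i
        have h2 := hσ i.succ
        simp [show σ i.succ ≠ N by omega, show σ i.succ ≠ N + 1 by omega, hv]
      · simp [hv]
      · simp [hx]
      · have := hσ 0
        simp [show σ 0 ≠ N by omega, show σ 0 ≠ N + 1 by omega]
      · simp [show o ≠ N by omega, show o ≠ N + 1 by omega]
      · intro k hk
        simp [show k ≠ N by omega, show k ≠ N + 1 by omega]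
    · rintro ⟨y, ⟨⟨⟨v, m, hv, hm, hy⟩, h0⟩, h1⟩, hyx⟩
      simp only [Set.mem_ofPred_eq] at h0 h1
      refine ⟨m ::ᵥ v, fun i => ?_, ?_⟩
      · rw [← hyx _ (Or.inl (hσ i))]
        refine Fin.cases ?_ (fun i => ?_) i
        · simp [← h0, hm]
        · simp [hv]
      · rw [← hyx _ (Or.inl ho), ← h1, hy]
        simp

end WG

namespace WG

/-- One-step closure of the set of winning positions of Attacker. -/
theorem wins_step {A D : List (F2 × F1)} {g : F2 × F1} (hD : D ≠ [])
    (h : ∀ d ∈ D, ∃ a ∈ A, g * d * a = 1 ∨ WGAttackerWins A D (g * d * a)) :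
    WGAttackerWins A D g := by
  classical
  have h' : ∀ d, ∃ a, ∃ st : List (F2 × F1) → F2 × F1, d ∈ D → a ∈ A ∧
      (∀ hist, (∀ x ∈ hist, x ∈ D) → st hist ∈ A) ∧ (g * d * a = 1 ∨
      ∀ δ : ℕ → F2 × F1, (∀ i, δ i ∈ D) → ∃ n, wgPos (g * d * a) δ st (n + 1) = 1) := by
    intro d
    by_cases hd : d ∈ D
    · obtain ⟨a, ha, h1 | ⟨st, h2, h3⟩⟩ := h d hd
      · exact ⟨a, fun _ => a, fun _ => ⟨ha, fun _ _ => ha, Or.inl h1⟩⟩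
      · exact ⟨a, st, fun _ => ⟨ha, h2, Or.inr h3⟩⟩
    · exact ⟨1, fun _ => 1, fun h => absurd h hd⟩
  choose a st hst using h'
  obtain ⟨d0, hd0⟩ := List.exists_mem_of_ne_nil D hD
  let s : List (F2 × F1) → F2 × F1 := fun hist => match hist with
    | [] => a d0
    | d :: t => if t = [] then a d else st d t
  have hpos : ∀ δ : ℕ → F2 × F1, ∀ k, wgPos g δ s (k + 1) =
      wgPos (g * δ 0 * a (δ 0)) (fun i => δ (i + 1)) (st (δ 0)) k := by
    intro δ k
    induction k with
    | zero => simp [wgPos, s]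
    | succ k ih =>
      rw [wgPos, ih, wgPos]
      congr 1
      rw [List.range_succ_eq_map]
      simp [s, List.map_map, Function.comp_def]
  refine ⟨s, ?_, ?_⟩
  · intro hist hh
    cases hist with
    | nil => exact (hst d0 hd0).1
    | cons d t =>
      have hd := hst d (hh d (by simp))
      by_cases ht : t = []
      · simp only [s, ht, if_true]
        exact hd.1
      · simp only [s, ht, if_false]
        exact hd.2.1 t fun x hx => hh x (by simp [hx])
  · intro δ hδ
    rcases (hst (δ 0) (hδ 0)).2.2 with h1 | h1
    · exact ⟨0, by rw [hpos]; exact h1⟩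
    · obtain ⟨n, hn⟩ := h1 (fun i => δ (i + 1)) fun i => hδ _
      exact ⟨n + 1, by rw [hpos]; exact hn⟩

/-- An invariant that Defender can keep shows that Attacker does not win. -/
theorem not_wins {A D : List (F2 × F1)} {g : F2 × F1} (I : F2 × F1 → Prop) (hg : I g)
    (h1 : ¬ I 1) (h : ∀ y, I y → ∃ d ∈ D, ∀ a ∈ A, I (y * d * a)) : ¬ WGAttackerWins A D g := by
  classical
  rintro ⟨st, hst, hwin⟩
  have h' : ∀ y, ∃ d, I y → d ∈ D ∧ ∀ a ∈ A, I (y * d * a) := by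
    intro y
    by_cases hy : I y
    · obtain ⟨d, hd⟩ := h y hy
      exact ⟨d, fun _ => hd⟩
    · exact ⟨1, fun h => absurd h hy⟩
  choose c hc using h'
  let step : (F2 × F1) × List (F2 × F1) → (F2 × F1) × List (F2 × F1) := fun p =>
    (p.1 * c p.1 * st (p.2 ++ [c p.1]), p.2 ++ [c p.1])
  let P : ℕ → (F2 × F1) × List (F2 × F1) := fun k => step^[k] (g, [])
  have hP : ∀ k, P (k + 1) = step (P k) := fun k => Function.iterate_succ_apply' _ _ _
  let δ : ℕ → F2 × F1 := fun k => c (P k).1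
  have hist : ∀ k, (P k).2 = (List.range k).map δ := by
    intro k
    induction k with
    | zero => rfl
    | succ k ih =>
      rw [hP, List.range_succ, List.map_append, ← ih]
      rfl
  have hI : ∀ k, I (P k).1 ∧ ∀ x ∈ (P k).2, x ∈ D := by
    intro k
    induction k with
    | zero => exact ⟨hg, by simp [P]⟩
    | succ k ih =>
      rw [hP]
      have hm : ∀ x ∈ (step (P k)).2, x ∈ D := by
        intro x hx
        rcases List.mem_append.1 hx with hx | hx
        · exact ih.2 x hx
        · rw [List.mem_singleton.1 hx]
          exact (hc _ ih.1).1
      exact ⟨(hc _ ih.1).2 _ (hst _ hm), hm⟩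
  have hpos : ∀ k, wgPos g δ st k = (P k).1 := by
    intro k
    induction k with
    | zero => rfl
    | succ k ih =>
      rw [wgPos, ih, ← hist, hP]
  obtain ⟨n, hn⟩ := hwin δ fun i => (hc _ (hI i).1).1
  rw [hpos] at hn
  exact h1 (hn ▸ (hI (n + 1)).1)

/-! ### Embedding free groups into `F2` -/

/-- The action of `ℤ` on the free group on `ℤ` by shifting. -/
def shiftHom : Multiplicative ℤ →* MulAut (FreeGroup ℤ) where
  toFun n := FreeGroup.freeGroupCongr (Equiv.addLeft n.toAdd)
  map_one' := by
    ext x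
    induction x using FreeGroup.induction_on <;> simp_all
  map_mul' m n := by
    ext x
    induction x using FreeGroup.induction_on <;> simp_all [add_assoc]

/-- The detecting homomorphism on `F2`. -/
def detect : F2 →* FreeGroup ℤ ⋊[shiftHom] Multiplicative ℤ :=
  FreeGroup.lift fun b => if b then SemidirectProduct.inr (Multiplicative.ofAdd 1)
    else SemidirectProduct.inl (FreeGroup.of 0)

/-- The embedding of a free group into `F2` given by a numbering of the letters. -/
def emb {α : Type*} (c : α → ℤ) : FreeGroup α →* F2 :=
  FreeGroup.lift fun a => FreeGroup.of true ^ c a * FreeGroup.of false * (FreeGroup.of true ^ c a)⁻¹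

theorem detect_emb {α : Type*} (c : α → ℤ) (g : FreeGroup α) :
    detect (emb c g) = SemidirectProduct.inl (FreeGroup.map c g) := by
  suffices h : detect.comp (emb c) = SemidirectProduct.inl.comp (FreeGroup.map c) from
    DFunLike.congr_fun h g
  ext1 a
  have : (Multiplicative.ofAdd (1 : ℤ)) ^ c a = Multiplicative.ofAdd (c a) := by
    rw [← ofAdd_zsmul]; simp
  simp only [detect, emb, MonoidHom.comp_apply, FreeGroup.lift_apply_of, map_mul, map_inv, map_zpow,
    if_true, FreeGroup.map.of, Bool.false_eq_true, if_false]
  rw [← map_zpow, this, ← map_inv, ← SemidirectProduct.inl_aut]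
  simp [shiftHom]

theorem emb_inj {α : Type*} (c : α → ℤ) {s : Set α} (hc : Set.InjOn c s) {g : FreeGroup α}
    (hg : g ∈ Subgroup.closure (FreeGroup.of '' s)) (h : emb c g = 1) : g = 1 := by
  by_cases hα : Nonempty α
  swap
  · have := not_nonempty_iff.1 hα
    exact Subsingleton.elim _ _
  have h1 : FreeGroup.map c g = 1 := by
    have := detect_emb c g
    rw [h, map_one] at this
    exact SemidirectProduct.inl_injective (this.symm.trans (map_one _).symm)
  have h2 : (FreeGroup.map (Function.invFunOn c s)).comp (FreeGroup.map c) g = g := by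
    have := MonoidHom.eqOn_closure (f := (FreeGroup.map (Function.invFunOn c s)).comp
      (FreeGroup.map c)) (g := MonoidHom.id _) (s := FreeGroup.of '' s) ?_
    · exact this hg
    · rintro _ ⟨a, ha, rfl⟩
      simp [hc.leftInvOn_invFunOn ha]
  rw [← h2, MonoidHom.comp_apply, h1, map_one]

/-- Powers of the generator of `F1`. -/
def rho (z : ℤ) : F1 := FreeGroup.of () ^ z

theorem rho_add (a b : ℤ) : rho (a + b) = rho a * rho b := zpow_add _ _ _

theorem rho_eq_one {z : ℤ} (h : rho z = 1) : z = 0 := by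
  have := congrArg (FreeGroup.lift fun _ : Unit => Multiplicative.ofAdd (1 : ℤ)) h
  simp only [rho, map_zpow, FreeGroup.lift_apply_of, map_one, ← ofAdd_zsmul] at this
  simpa using this

/-! ### Stacks -/

section Stack
variable {α : Type}

open Classical in
/-- Push a letter on a stack, cancelling if possible. -/
noncomputable def push (S : List (α × Bool)) (l : α × Bool) : List (α × Bool) :=
  match S with
  | [] => [l]
  | h :: t => if h = (l.1, !l.2) then t else l :: h :: t

/-- The group element of a stack. -/
def val (S : List (α × Bool)) : FreeGroup α := FreeGroup.mk S.reverse

theorem val_push (S : List (α × Bool)) (l : α × Bool) :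
    val (push S l) = val S * FreeGroup.mk [l] := by
  cases S with
  | nil => simp [push, val]
  | cons h t =>
    by_cases hh : h = (l.1, !l.2)
    · simp only [push, hh, if_true, val, List.reverse_cons]
      rw [← FreeGroup.mul_mk, mul_assoc]
      have : (FreeGroup.mk [(l.1, !l.2)] * FreeGroup.mk [l] : FreeGroup α) = 1 := by
        have h2 : (FreeGroup.mk [(l.1, !l.2)] : FreeGroup α) = (FreeGroup.mk [l])⁻¹ := by
          simp [FreeGroup.inv_mk, FreeGroup.invRev]
        rw [h2, inv_mul_cancel]
      rw [this, mul_one]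
    · simp [push, hh, val, FreeGroup.mul_mk]

/-- Push all letters of a word. -/
noncomputable def pushes (S : List (α × Bool)) (w : List (α × Bool)) : List (α × Bool) :=
  w.foldl push S

theorem val_pushes (w S : List (α × Bool)) : val (pushes S w) = val S * FreeGroup.mk w := by
  induction w generalizing S with
  | nil => simp [pushes, ← FreeGroup.one_eq_mk]
  | cons l w ih =>
    have : pushes S (l :: w) = pushes (push S l) w := rfl
    rw [this, ih, val_push, mul_assoc, FreeGroup.mul_mk]
    rfl

/-- Reduced stacks. -/
def Red (S : List (α × Bool)) : Prop := S.IsChain fun a b => a ≠ (b.1, !b.2)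

theorem Red.push {S : List (α × Bool)} (h : Red S) (l : α × Bool) : Red (push S l) := by
  cases S with
  | nil => simp [WG.push, Red]
  | cons a t =>
    by_cases hh : a = (l.1, !l.2)
    · simp only [WG.push, hh, if_true]
      exact List.IsChain.tail h
    · simp only [WG.push, hh, if_false]
      refine List.isChain_cons_cons.2 ⟨?_, h⟩
      rintro rfl
      simp at hh

theorem Red.pushes {S : List (α × Bool)} (h : Red S) (w : List (α × Bool)) :
    Red (pushes S w) := by
  induction w generalizing S with
  | nil => exact h
  | cons l w ih => exact ih (h.push l)

theorem Red.eq_nil {S : List (α × Bool)} (h : Red S) (h1 : val S = 1) : S = [] := by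
  classical
  have h2 : FreeGroup.IsReduced S.reverse := by
    rw [FreeGroup.IsReduced, List.isChain_reverse]
    refine List.IsChain.imp ?_ h
    rintro ⟨a, x⟩ ⟨b, y⟩ hab rfl
    cases x <;> cases y <;> simp_all
  have h3 := congrArg FreeGroup.toWord h1
  rw [val, FreeGroup.toWord_mk, h2.reduce_eq] at h3
  simpa using h3

end Stack

end WG

namespace WG

/-! ### The game -/

/-- States of the simulation. -/
inductive St
  | p (P : Set Reg)
  | pr (Q₁ Q₂ : Set Reg)
  | t (φ : Reg →+ ℤ)

/-- States that are not test states. -/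
def St.NT : St → Prop
  | .t _ => False
  | _ => True

/-- Letters: Defender's choices, logged register changes, and states. -/
inductive Lt
  | x (b : Bool)
  | l (δ : Reg)
  | s (q : St)

/-- Attacker's moves. -/
inductive IsMove (R : List Rule) (T : List Test) (e : List Reg) : List (Lt × Bool) → ℤ → Prop
  | rule (b : Bool) (P δ Q₁ Q₂) : (P, δ, Q₁, Q₂) ∈ R → IsMove R T e
      [(.x b, false), (.s (.p P), false), (.l δ, true), (.s (.pr Q₁ Q₂), true)] 0
  | resolve (b : Bool) (P δ Q₁ Q₂) : (P, δ, Q₁, Q₂) ∈ R → IsMove R T e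
      [(.x b, false), (.s (.pr Q₁ Q₂), false), (.l 0, true), (.s (.p (if b then Q₁ else Q₂)), true)] 0
  | test (b : Bool) (P φ) : (P, φ) ∈ T → IsMove R T e
      [(.x b, false), (.s (.p P), false), (.l 0, true), (.s (.t φ), true)] 0
  | pop (b : Bool) (P φ δ) : (P, φ) ∈ T → δ ∈ e → IsMove R T e
      [(.x b, false), (.s (.t φ), false), (.l δ, false), (.s (.t φ), true)] (φ δ)
  | finish (b : Bool) (P φ) : (P, φ) ∈ T → IsMove R T e
      [(.x b, false), (.s (.t φ), false)] 0

theorem exists_moves (R T e) : ∃ L : List (List (Lt × Bool) × ℤ),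
    ∀ w z, (w, z) ∈ L ↔ IsMove R T e w z := by
  classical
  let bs := [true, false]
  have hb : ∀ b, b ∈ bs := by decide
  refine ⟨
    (bs.flatMap fun b => R.map fun r =>
      ([(.x b, false), (.s (.p r.1), false), (.l r.2.1, true), (.s (.pr r.2.2.1 r.2.2.2), true)], 0)) ++
    ((bs.flatMap fun b => R.map fun r =>
      ([(.x b, false), (.s (.pr r.2.2.1 r.2.2.2), false), (.l 0, true),
        (.s (.p (if b then r.2.2.1 else r.2.2.2)), true)], 0)) ++
    ((bs.flatMap fun b => T.map fun r =>
      ([(.x b, false), (.s (.p r.1), false), (.l 0, true), (.s (.t r.2), true)], 0)) ++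
    ((bs.flatMap fun b => T.flatMap fun r => e.map fun δ =>
      ([(.x b, false), (.s (.t r.2), false), (.l δ, false), (.s (.t r.2), true)], r.2 δ)) ++
    (bs.flatMap fun b => T.map fun r => ([(.x b, false), (.s (.t r.2), false)], 0))))), ?_⟩
  intro w z
  simp only [List.mem_append, List.mem_flatMap, List.mem_map, hb, true_and, Prod.mk.injEq]
  constructor
  · rintro (⟨b, r, hr, rfl, rfl⟩ | ⟨b, r, hr, rfl, rfl⟩ | ⟨b, r, hr, rfl, rfl⟩ |
      ⟨b, r, hr, δ, hδ, rfl, rfl⟩ | ⟨b, r, hr, rfl, rfl⟩)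
    · exact .rule b _ _ _ _ hr
    · exact .resolve b _ _ _ _ hr
    · exact .test b _ _ hr
    · exact .pop b _ _ _ hr hδ
    · exact .finish b _ _ hr
  · rintro (⟨b, P, δ, Q₁, Q₂, h⟩ | ⟨b, P, δ, Q₁, Q₂, h⟩ | ⟨b, P, φ, h⟩ | ⟨b, P, φ, δ, h, h'⟩ |
      ⟨b, P, φ, h⟩)
    · exact Or.inl ⟨b, _, h, rfl, rfl⟩
    · exact Or.inr (Or.inl ⟨b, _, h, rfl, rfl⟩)
    · exact Or.inr (Or.inr (Or.inl ⟨b, _, h, rfl, rfl⟩))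
    · exact Or.inr (Or.inr (Or.inr (Or.inl ⟨b, _, h, δ, h', rfl, rfl⟩)))
    · exact Or.inr (Or.inr (Or.inr (Or.inr ⟨b, _, h, rfl, rfl⟩)))

/-- A log of register changes as a piece of stack. -/
def lg (ds : List Reg) : List (Lt × Bool) := ds.map fun δ => (.l δ, true)

/-- The claim of a state is false. -/
def Wrong : St → Reg → ℤ → Prop
  | .p P, x, n => x ∉ P ∧ n = 0
  | .pr Q₁ Q₂, x, n => ¬ (x ∈ Q₁ ∧ x ∈ Q₂) ∧ n = 0
  | .t φ, x, n => n + φ x ≠ 0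

/-- Defender's invariant. -/
inductive Inv : List (Lt × Bool) → ℤ → Prop
  | bad {S n} (b) : (Lt.x b, false) ∈ S → Inv S n
  | stateless {S n} : (∀ q r, S ≠ (.s q, true) :: r) → (S = [] → n ≠ 0) → Inv S n
  | legit {q ds n} : Wrong q ds.sum n → Inv ((.s q, true) :: lg ds) n
  | run {q δ ds q' rest n} : q.NT → q'.NT → Inv ((.s q, true) :: (lg (δ :: ds) ++ (.s q', false) :: rest)) n
  | test {φ q u rest n} : q.NT → (∀ a ∈ u, ∃ δ b, a = (Lt.l δ, b)) →
      Inv ((.s (.t φ), true) :: (u ++ (.s q, false) :: rest)) n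
  | under {φ δ rest n} : Inv ((.s (.t φ), true) :: (.l δ, false) :: rest) n

theorem not_inv : ¬ Inv [] 0 := by
  rintro (⟨b, h⟩ | ⟨h, h'⟩ | h | h | h)
  · simp at h
  · simp at h'

theorem bad_push {S : List (Lt × Bool)} {b : Bool} {l : Lt × Bool} (h : (Lt.x b, false) ∈ S)
    (hl : ∀ b', l ≠ (Lt.x b', true)) : (Lt.x b, false) ∈ push S l := by
  cases S with
  | nil => simp at h
  | cons a t =>
    by_cases hh : a = (l.1, !l.2)
    · simp only [push, hh, if_true]
      rcases List.mem_cons.1 h with h | h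
      · exfalso
        apply hl b
        rw [hh] at h
        rcases l with ⟨l1, l2⟩
        cases l2 <;> simp_all
      · exact h
    · simp only [push, hh, if_false]
      exact List.mem_cons_of_mem _ h

theorem bad_pushes {w S : List (Lt × Bool)} {b : Bool} (h : (Lt.x b, false) ∈ S)
    (hl : ∀ b', (Lt.x b', true) ∉ w) : (Lt.x b, false) ∈ pushes S w := by
  induction w generalizing S with
  | nil => exact h
  | cons l w ih =>
    refine ih (bad_push h ?_) fun b' hb => hl b' (List.mem_cons_of_mem _ hb)
    rintro b' rfl
    exact hl b' List.mem_cons_self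

variable {R : List Rule} {T : List Test} {e : List Reg}

theorem IsMove.no_x {w z} (h : IsMove R T e w z) (b : Bool) : (Lt.x b, true) ∉ w := by
  cases h <;> simp

theorem pushes_cons {α : Type} (S w : List (α × Bool)) (l) :
    pushes S (l :: w) = pushes (push S l) w := rfl

theorem pushes_nil {α : Type} (S : List (α × Bool)) : pushes S [] = S := rfl

theorem push_of_ne {α : Type} {S : List (α × Bool)} {l} (h : ∀ r, S ≠ (l.1, !l.2) :: r) :
    push S l = l :: S := by
  cases S with
  | nil => rfl
  | cons a t =>
    have : a ≠ (l.1, !l.2) := by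
      rintro rfl
      exact h t rfl
    simp [push, this]

theorem push_self {α : Type} {S : List (α × Bool)} {a : α} :
    push ((a, true) :: S) (a, false) = S := by
  simp [push]

/-- A mismatched move leads to garbage. -/
theorem fresh {S : List (Lt × Bool)} {w z n b} (h : IsMove R T e ((Lt.x b, false) :: w) z)
    (hS : ∀ q w', w = (Lt.s q, false) :: w' → ∀ r, S ≠ (.s q, true) :: r) :
    Inv (pushes S w) n := by
  cases h with
  | rule P δ Q₁ Q₂ h =>
    rw [pushes_cons, push_of_ne (hS _ _ rfl)]
    simp only [pushes_cons, pushes_nil, push, Prod.mk.injEq, reduceCtorEq, false_and, if_false]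
    exact Inv.run (ds := []) trivial trivial
  | resolve P δ Q₁ Q₂ h =>
    rw [pushes_cons, push_of_ne (hS _ _ rfl)]
    simp only [pushes_cons, pushes_nil, push, Prod.mk.injEq, reduceCtorEq, false_and, if_false]
    exact Inv.run (ds := []) trivial trivial
  | test P φ h =>
    rw [pushes_cons, push_of_ne (hS _ _ rfl)]
    simp only [pushes_cons, pushes_nil, push, Prod.mk.injEq, reduceCtorEq, false_and, if_false]
    exact Inv.test (u := [(.l 0, true)]) trivial (by simp)
  | pop P φ δ h h' =>
    rw [pushes_cons, push_of_ne (hS _ _ rfl)]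
    simp only [pushes_cons, pushes_nil, push, Prod.mk.injEq, reduceCtorEq, false_and, if_false]
    exact Inv.under
  | finish P φ h =>
    rw [pushes_cons, push_of_ne (hS _ _ rfl)]
    exact Inv.stateless (by simp [pushes_nil]) (by simp [pushes_nil])

theorem step_matched (hR : SoundR R) (hT : SoundT T) {q : St} {S : List (Lt × Bool)} {w z n b}
    (hI : Inv ((Lt.s q, true) :: S) n) (hbad : ∀ b, (Lt.x b, false) ∉ S)
    (hb : ∀ Q₁ Q₂ ds, q = .pr Q₁ Q₂ → S = lg ds → Wrong q ds.sum n →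
      ds.sum ∉ (if b then Q₁ else Q₂))
    (h : IsMove R T e ((Lt.x b, false) :: (Lt.s q, false) :: w) z) :
    Inv (pushes S w) (n + z) := by
  generalize hS' : (Lt.s q, true) :: S = S' at hI
  cases hI with
  | bad b' hb' =>
    subst hS'
    simp at hb'
    exact absurd hb' (hbad _)
  | stateless h1 h2 => exact absurd hS'.symm (h1 _ _)
  | @legit q' ds _ hw =>
    simp only [List.cons.injEq, Prod.mk.injEq, Lt.s.injEq, and_true] at hS'
    obtain ⟨rfl, rfl⟩ := hS'
    have key : ∀ δ : Reg, push (lg ds) (Lt.l δ, true) = lg (δ :: ds) := by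
      intro δ
      rw [push_of_ne]
      · rfl
      · cases ds <;> simp [lg]
    have key2 : ∀ (ds : List Reg) (q' : St), push (lg ds) (Lt.s q', true) = (Lt.s q', true) :: lg ds := by
      intro ds q'
      rw [push_of_ne]
      cases ds <;> simp [lg]
    cases h with
    | rule _ P δ Q₁ Q₂ h =>
      simp only [pushes_cons, pushes_nil, key, key2]
      refine Inv.legit ⟨?_, by simp [hw.2]⟩
      rintro ⟨h1, h2⟩
      rw [List.sum_cons, add_comm] at h1 h2
      exact hw.1 (hR _ _ _ _ h _ h1 h2)
    | resolve _ P δ Q₁ Q₂ h =>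
      simp only [pushes_cons, pushes_nil, key, key2]
      refine Inv.legit ⟨?_, by simp [hw.2]⟩
      rw [List.sum_cons, zero_add]
      exact hb _ _ _ rfl rfl hw
    | test _ P φ h =>
      simp only [pushes_cons, pushes_nil, key, key2]
      refine Inv.legit ?_
      rw [List.sum_cons, zero_add]
      intro h0
      rw [hw.2, zero_add, zero_add] at h0
      exact hw.1 (hT _ _ h _ h0)
    | pop _ P φ δ h h' =>
      simp only [pushes_cons, pushes_nil]
      cases ds with
      | nil =>
        simp only [lg, List.map_nil, push, Prod.mk.injEq, reduceCtorEq, false_and, if_false]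
        exact Inv.under
      | cons δ' ds =>
        by_cases hd : δ' = δ
        · subst hd
          have : push (lg (δ' :: ds)) (Lt.l δ', false) = lg ds := by simp [push, lg]
          rw [this, key2]
          refine Inv.legit ?_
          simp only [Wrong, List.sum_cons, map_add] at hw ⊢
          rwa [add_assoc]
        · have : push (lg (δ' :: ds)) (Lt.l δ, false) = (Lt.l δ, false) :: lg (δ' :: ds) :=
            push_of_ne (by simp [lg, hd])
          rw [this, push_of_ne (by simp)]
          exact Inv.under
    | finish _ P φ h =>
      rw [pushes_nil]
      refine Inv.stateless ?_ ?_
      · cases ds <;> simp [lg]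
      · cases ds
        · intro _
          simpa [Wrong] using hw
        · simp [lg]
  | @run q' δ ds q'' rest _ hq hq' =>
    simp only [List.cons.injEq, Prod.mk.injEq, Lt.s.injEq, and_true] at hS'
    obtain ⟨rfl, rfl⟩ := hS'
    cases h with
    | rule _ P δ' Q₁ Q₂ h =>
      simp only [pushes_cons, pushes_nil]
      rw [push_of_ne (S := lg (δ :: ds) ++ _) (by simp [lg]), push_of_ne (by simp)]
      exact Inv.run (ds := δ :: ds) trivial hq'
    | resolve _ P δ' Q₁ Q₂ h =>
      simp only [pushes_cons, pushes_nil]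
      rw [push_of_ne (S := lg (δ :: ds) ++ _) (by simp [lg]), push_of_ne (by simp)]
      exact Inv.run (ds := δ :: ds) trivial hq'
    | test _ P φ h =>
      simp only [pushes_cons, pushes_nil]
      rw [push_of_ne (S := lg (δ :: ds) ++ _) (by simp [lg]), push_of_ne (by simp)]
      exact Inv.test (u := lg (0 :: δ :: ds)) hq' (by simp [lg])
    | pop _ P φ δ' h h' => exact hq.elim
    | finish _ P φ h => exact hq.elim
  | @test φ q' u rest _ hq hu =>
    simp only [List.cons.injEq, Prod.mk.injEq, Lt.s.injEq, and_true] at hS'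
    obtain ⟨rfl, rfl⟩ := hS'
    cases h with
    | pop _ P φ δ h h' =>
      simp only [pushes_cons, pushes_nil]
      have hpush : ∃ u', (∀ a ∈ u', ∃ δ b, a = (Lt.l δ, b)) ∧
          push (u ++ (Lt.s q', false) :: rest) (Lt.l δ, false) = u' ++ (Lt.s q', false) :: rest := by
        by_cases hh : ∃ r, u = (Lt.l δ, true) :: r
        · obtain ⟨r, rfl⟩ := hh
          exact ⟨r, fun a ha => hu a (by simp [ha]), by simp [push]⟩
        · refine ⟨(Lt.l δ, false) :: u, ?_, ?_⟩
          · intro a ha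
            rcases List.mem_cons.1 ha with rfl | ha
            · exact ⟨_, _, rfl⟩
            · exact hu a ha
          · rw [push_of_ne]
            · rfl
            · intro r hr
              cases u with
              | nil => simp at hr
              | cons a u => exact hh ⟨u, by simp at hr; simp [hr.1]⟩
      obtain ⟨u', hu', hp⟩ := hpush
      rw [hp, push_of_ne]
      · exact Inv.test hq hu'
      · intro r hr
        cases u' with
        | nil =>
          simp at hr
          rw [hr.1] at hq
          exact hq
        | cons a u' =>
          obtain ⟨δ, b, rfl⟩ := hu' a (by simp)
          simp at hr
    | finish _ P φ h =>
      rw [pushes_nil]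
      refine Inv.stateless ?_ (by simp)
      intro q r hr
      cases u with
      | nil => simp at hr
      | cons a u =>
        obtain ⟨δ, b, rfl⟩ := hu a (by simp)
        simp at hr
  | @under φ δ rest _ =>
    simp only [List.cons.injEq, Prod.mk.injEq, Lt.s.injEq, and_true] at hS'
    obtain ⟨rfl, rfl⟩ := hS'
    cases h with
    | pop _ P φ δ h h' =>
      simp only [pushes_cons, pushes_nil]
      rw [push_of_ne (S := (Lt.l _, false) :: rest) (by simp), push_of_ne (by simp)]
      exact Inv.under
    | finish _ P φ h =>
      rw [pushes_nil]
      exact Inv.stateless (by simp) (by simp)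

theorem inv_step (hR : SoundR R) (hT : SoundT T) {S : List (Lt × Bool)} {n} (hI : Inv S n) :
    ∃ b, ∀ w z, IsMove R T e w z → Inv (pushes (push S (Lt.x b, true)) w) (n + z) := by
  classical
  by_cases hbad : ∃ b, (Lt.x b, false) ∈ S
  · obtain ⟨b, hb⟩ := hbad
    obtain ⟨b', hb'⟩ : ∃ b', ∀ r, S ≠ (Lt.x b', false) :: r := by
      by_cases h : ∃ r, S = (Lt.x true, false) :: r
      · obtain ⟨r, rfl⟩ := h
        exact ⟨false, by simp⟩
      · exact ⟨true, by simpa using h⟩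
    refine ⟨b', fun w z h => .bad b (bad_pushes ?_ h.no_x)⟩
    rw [push_of_ne (by simpa using hb')]
    exact List.mem_cons_of_mem _ hb
  · push Not at hbad
    obtain ⟨b, hb⟩ : ∃ b : Bool, ∀ q Q₁ Q₂ ds, q = St.pr Q₁ Q₂ → S = (Lt.s q, true) :: lg ds →
        Wrong q ds.sum n → ds.sum ∉ (if b then Q₁ else Q₂) := by
      by_cases h : ∃ Q₁ Q₂ ds, S = (Lt.s (.pr Q₁ Q₂), true) :: lg ds ∧ ds.sum ∉ Q₁
      · obtain ⟨Q₁, Q₂, ds, rfl, h⟩ := h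
        refine ⟨true, ?_⟩
        rintro q Q₁' Q₂' ds' rfl hS -
        simp only [List.cons.injEq, Prod.mk.injEq, Lt.s.injEq, St.pr.injEq, and_true] at hS
        obtain ⟨⟨rfl, rfl⟩, hS⟩ := hS
        have : ds = ds' := by
          refine List.map_injective_iff.2 ?_ hS
          intro a b hab
          simpa using hab
        subst this
        simpa using h
      · refine ⟨false, ?_⟩
        rintro q Q₁ Q₂ ds rfl hS hw
        push Not at h
        have := h _ _ _ hS
        intro h2
        exact hw.1 ⟨this, by simpa using h2⟩
    refine ⟨b, fun w z h => ?_⟩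
    have hpx : push S (Lt.x b, true) = (Lt.x b, true) :: S := push_of_ne (by
      rintro r rfl
      exact hbad b (by simp))
    rw [hpx]
    obtain ⟨b', w, rfl⟩ : ∃ b' w', w = (Lt.x b', false) :: w' := by
      cases h <;> exact ⟨_, _, rfl⟩
    by_cases hbb : b = b'
    swap
    · refine .bad b' ?_
      rw [pushes_cons, push_of_ne (by simp [hbb])]
      exact bad_pushes (by simp) fun c hc => h.no_x c (List.mem_cons_of_mem _ hc)
    subst hbb
    rw [pushes_cons, show push ((Lt.x b, true) :: S) (Lt.x b, false) = S from push_self]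
    by_cases hm : ∃ q w' r, w = (Lt.s q, false) :: w' ∧ S = (Lt.s q, true) :: r
    · obtain ⟨q, w', r, rfl, rfl⟩ := hm
      rw [pushes_cons, show push ((Lt.s q, true) :: r) (Lt.s q, false) = r from push_self]
      refine step_matched hR hT hI (fun b hb => hbad b (List.mem_cons_of_mem _ hb)) ?_ h
      intro Q₁ Q₂ ds hq hS hw
      exact hb _ _ _ _ hq (by rw [hS]) hw
    · push Not at hm
      exact fresh h fun q w' hw r => hm q w' r hw

end WG

namespace WG

theorem mk_cons_true {α : Type} (a : α) (w : List (α × Bool)) :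
    FreeGroup.mk ((a, true) :: w) = FreeGroup.of a * FreeGroup.mk w := rfl

theorem mk_cons_false {α : Type} (a : α) (w : List (α × Bool)) :
    FreeGroup.mk ((a, false) :: w) = (FreeGroup.of a)⁻¹ * FreeGroup.mk w := rfl

theorem mk_nil {α : Type} : FreeGroup.mk ([] : List (α × Bool)) = 1 := rfl

theorem val_cons_true {α : Type} (a : α) (S : List (α × Bool)) :
    val ((a, true) :: S) = val S * FreeGroup.of a := by
  simp [val, ← FreeGroup.mul_mk, FreeGroup.of]

theorem val_nil {α : Type} : val ([] : List (α × Bool)) = 1 := rfl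

/-- Attacker's list. -/
def Av (c : Lt → ℤ) (L : List (List (Lt × Bool) × ℤ)) : List (F2 × F1) :=
  L.map fun p => (emb c (FreeGroup.mk p.1), rho p.2)

/-- Defender's list. -/
def Dv (c : Lt → ℤ) : List (F2 × F1) :=
  [true, false].map fun b => (emb c (FreeGroup.of (Lt.x b)), 1)

section Attacker
variable {R : List Rule} {T : List Test} {e : List Reg} {L : List (List (Lt × Bool) × ℤ)}
  (c : Lt → ℤ)

theorem wins_move (hL : ∀ w z, (w, z) ∈ L ↔ IsMove R T e w z) {g : FreeGroup Lt} {n : ℤ}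
    (h : ∀ b, ∃ w z, IsMove R T e w z ∧
      ((g * FreeGroup.of (Lt.x b) * FreeGroup.mk w = 1 ∧ n + z = 0) ∨ WGAttackerWins (Av c L) (Dv c)
        (emb c (g * FreeGroup.of (Lt.x b) * FreeGroup.mk w), rho (n + z)))) :
    WGAttackerWins (Av c L) (Dv c) (emb c g, rho n) := by
  refine wins_step (by simp [Dv]) ?_
  intro d hd
  obtain ⟨b, rfl⟩ : ∃ b, d = (emb c (FreeGroup.of (Lt.x b)), 1) := by
    simp only [Dv, List.mem_map] at hd
    obtain ⟨b, -, rfl⟩ := hd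
    exact ⟨b, rfl⟩
  obtain ⟨w, z, hm, hw⟩ := h b
  refine ⟨(emb c (FreeGroup.mk w), rho z), List.mem_map.2 ⟨(w, z), (hL w z).2 hm, rfl⟩, ?_⟩
  have : ((emb c g, rho n) * (emb c (FreeGroup.of (Lt.x b)), 1) * (emb c (FreeGroup.mk w), rho z)
      : F2 × F1) = (emb c (g * FreeGroup.of (Lt.x b) * FreeGroup.mk w), rho (n + z)) := by
    simp [Prod.mk_mul_mk, rho_add]
  rw [this]
  rcases hw with ⟨h1, h2⟩ | hw
  · left
    rw [h1, h2, map_one]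
    rfl
  · exact Or.inr hw

theorem wins_test (hL : ∀ w z, (w, z) ∈ L ↔ IsMove R T e w z) {P φ} (hφ : (P, φ) ∈ T)
    (ds : List Reg) (hds : ∀ δ ∈ ds, δ ∈ e) (n : ℤ) (hn : n + φ ds.sum = 0) :
    WGAttackerWins (Av c L) (Dv c) (emb c (val ((Lt.s (.t φ), true) :: lg ds)), rho n) := by
  induction ds generalizing n with
  | nil =>
    refine wins_move c hL fun b => ⟨_, _, .finish b P φ hφ, Or.inl ⟨?_, by simpa using hn⟩⟩
    simp [val_cons_true, mk_cons_false, mk_nil, lg, val_nil]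
  | cons δ ds ih =>
    refine wins_move c hL fun b => ⟨_, _, .pop b P φ δ hφ (hds δ (by simp)), Or.inr ?_⟩
    have : val ((Lt.s (.t φ), true) :: lg (δ :: ds)) * FreeGroup.of (Lt.x b) *
        FreeGroup.mk [(.x b, false), (.s (.t φ), false), (.l δ, false), (.s (.t φ), true)] =
        val ((Lt.s (.t φ), true) :: lg ds) := by
      simp [val_cons_true, mk_cons_false, mk_cons_true, mk_nil, lg, mul_assoc]
    rw [this]
    refine ih (fun d hd => hds d (by simp [hd])) _ ?_
    rw [← hn, List.sum_cons, map_add, add_assoc]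

theorem wins_holds (hL : ∀ w z, (w, z) ∈ L ↔ IsMove R T e w z) (h0 : 0 ∈ e)
    (he : ∀ P δ Q₁ Q₂, (P, δ, Q₁, Q₂) ∈ R → δ ∈ e) {P x} (h : Holds R T P x)
    (ds : List Reg) (hds : ∀ δ ∈ ds, δ ∈ e) (hx : ds.sum = x) :
    WGAttackerWins (Av c L) (Dv c) (emb c (val ((Lt.s (.p P), true) :: lg ds)), rho 0) := by
  induction h generalizing ds with
  | @rule P δ Q₁ Q₂ x h h1 h2 ih1 ih2 =>
    refine wins_move c hL fun b => ⟨_, _, .rule b P δ Q₁ Q₂ h, Or.inr ?_⟩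
    have : val ((Lt.s (.p P), true) :: lg ds) * FreeGroup.of (Lt.x b) * FreeGroup.mk
        [(.x b, false), (.s (.p P), false), (.l δ, true), (.s (.pr Q₁ Q₂), true)] =
        val ((Lt.s (.pr Q₁ Q₂), true) :: lg (δ :: ds)) := by
      simp [val_cons_true, mk_cons_false, mk_cons_true, mk_nil, lg, mul_assoc]
    rw [this, zero_add]
    refine wins_move c hL fun b => ⟨_, _, .resolve b P δ Q₁ Q₂ h, Or.inr ?_⟩
    have : val ((Lt.s (.pr Q₁ Q₂), true) :: lg (δ :: ds)) * FreeGroup.of (Lt.x b) * FreeGroup.mk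
        [(.x b, false), (.s (.pr Q₁ Q₂), false), (.l 0, true),
          (.s (.p (if b then Q₁ else Q₂)), true)] =
        val ((Lt.s (.p (if b then Q₁ else Q₂)), true) :: lg (0 :: δ :: ds)) := by
      simp [val_cons_true, mk_cons_false, mk_cons_true, mk_nil, lg, mul_assoc]
    rw [this, zero_add]
    have hds' : ∀ d ∈ 0 :: δ :: ds, d ∈ e := by
      intro d hd
      simp only [List.mem_cons] at hd
      rcases hd with rfl | rfl | hd
      · exact h0
      · exact he _ _ _ _ h
      · exact hds d hd
    have hs : (0 :: δ :: ds).sum = x + δ := by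
      rw [List.sum_cons, List.sum_cons, hx, zero_add, add_comm]
    cases b
    · simpa using ih2 _ hds' hs
    · simpa using ih1 _ hds' hs
  | @test P φ x h hφ =>
    refine wins_move c hL fun b => ⟨_, _, .test b P φ h, Or.inr ?_⟩
    have : val ((Lt.s (.p P), true) :: lg ds) * FreeGroup.of (Lt.x b) * FreeGroup.mk
        [(.x b, false), (.s (.p P), false), (.l 0, true), (.s (.t φ), true)] =
        val ((Lt.s (.t φ), true) :: lg (0 :: ds)) := by
      simp [val_cons_true, mk_cons_false, mk_cons_true, mk_nil, lg, mul_assoc]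
    rw [this, zero_add]
    refine wins_test c hL h _ ?_ _ ?_
    · intro d hd
      rcases List.mem_cons.1 hd with rfl | hd
      · exact h0
      · exact hds d hd
    · rw [List.sum_cons, zero_add, zero_add, hx, hφ]

/-- The letters that matter. -/
def Let (L : List (List (Lt × Bool) × ℤ)) (W : List (Lt × Bool)) : Set Lt :=
  {a | (∃ b, a = Lt.x b) ∨ (∃ b, (a, b) ∈ W) ∨ ∃ w z b, (w, z) ∈ L ∧ (a, b) ∈ w}

theorem Let_finite (L : List (List (Lt × Bool) × ℤ)) (W : List (Lt × Bool)) : (Let L W).Finite := by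
  have : Let L W ⊆ Set.range Lt.x ∪ (Prod.fst '' {a | a ∈ W} ∪
      Prod.fst '' {a | a ∈ L.flatMap Prod.fst}) := by
    rintro a (⟨b, rfl⟩ | ⟨b, hb⟩ | ⟨w, z, b, h1, h2⟩)
    · exact Or.inl ⟨b, rfl⟩
    · exact Or.inr (Or.inl ⟨_, hb, rfl⟩)
    · exact Or.inr (Or.inr ⟨(a, b), List.mem_flatMap.2 ⟨_, h1, h2⟩, rfl⟩)
  refine Set.Finite.subset ?_ this
  exact (Set.finite_range _).union (((List.finite_toSet W).image _).union
    ((List.finite_toSet _).image _))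

theorem mk_mem_closure {α : Type} {s : Set α} {w : List (α × Bool)} (h : ∀ a b, (a, b) ∈ w → a ∈ s) :
    FreeGroup.mk w ∈ Subgroup.closure (FreeGroup.of '' s) := by
  induction w with
  | nil => exact one_mem _
  | cons l w ih =>
    obtain ⟨a, b⟩ := l
    have ha : FreeGroup.of a ∈ Subgroup.closure (FreeGroup.of '' s) :=
      Subgroup.subset_closure ⟨a, h a b (by simp), rfl⟩
    have hw := ih fun a b hab => h a b (by simp [hab])
    cases b
    · exact mul_mem (inv_mem ha) hw
    · exact mul_mem ha hw

theorem not_wins_inv (hL : ∀ w z, (w, z) ∈ L ↔ IsMove R T e w z) (hR : SoundR R) (hT : SoundT T)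
    {W : List (Lt × Bool)} (hc : Set.InjOn c (Let L W)) {S : List (Lt × Bool)} (hS : Red S)
    (hSW : ∀ a ∈ S, a ∈ W) (hI : Inv S 0) :
    ¬ WGAttackerWins (Av c L) (Dv c) (emb c (val S), rho 0) := by
  refine not_wins (fun y => ∃ S n, Red S ∧ val S ∈ Subgroup.closure (FreeGroup.of '' Let L W) ∧
    y = (emb c (val S), rho n) ∧ Inv S n) ?_ ?_ ?_
  · refine ⟨S, 0, hS, mk_mem_closure fun a b hab => ?_, rfl, hI⟩
    exact Or.inr (Or.inl ⟨b, hSW _ (List.mem_reverse.1 hab)⟩)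
  · rintro ⟨S, n, h1, h2, h3, h4⟩
    have h5 := emb_inj c hc h2 (congrArg Prod.fst h3).symm
    have h6 := rho_eq_one (congrArg Prod.snd h3).symm
    rw [h1.eq_nil h5, h6] at h4
    exact not_inv h4
  · rintro _ ⟨S, n, h1, h2, rfl, h4⟩
    obtain ⟨b, hb⟩ := inv_step (e := e) hR hT h4
    refine ⟨(emb c (FreeGroup.of (Lt.x b)), 1), List.mem_map.2 ⟨b, by cases b <;> simp, rfl⟩, ?_⟩
    intro a ha
    obtain ⟨⟨w, z⟩, hwz, rfl⟩ := List.mem_map.1 ha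
    have hv : val (pushes (push S (Lt.x b, true)) w) =
        val S * FreeGroup.of (Lt.x b) * FreeGroup.mk w := by
      rw [val_pushes, val_push]
      rfl
    refine ⟨pushes (push S (Lt.x b, true)) w, n + z, (h1.push _).pushes _, ?_, ?_,
      hb w z ((hL w z).1 hwz)⟩
    · rw [hv]
      refine mul_mem (mul_mem h2 (Subgroup.subset_closure ⟨_, Or.inl ⟨b, rfl⟩, rfl⟩)) ?_
      exact mk_mem_closure fun a b hab => Or.inr (Or.inr ⟨w, z, b, hwz, hab⟩)
    · rw [hv]
      simp [Prod.mk_mul_mk, rho_add]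

end Attacker

theorem red_start (q : St) (ds : List Reg) : Red ((Lt.s q, true) :: lg ds) := by
  have : ∀ S : List (Lt × Bool), (∀ a ∈ S, a.2 = true) → Red S := by
    intro S hS
    induction S with
    | nil => exact List.isChain_nil
    | cons a S ih =>
      cases S with
      | nil => exact List.isChain_singleton _
      | cons b S =>
        refine List.isChain_cons_cons.2 ⟨?_, ih fun d hd => hS d (by simp [hd])⟩
        intro hab
        have h1 := hS a (by simp)
        have h2 := hS b (by simp)
        rw [hab] at h1
        simp [h2] at h1
  refine this _ ?_
  simp [lg]

/-- The set of inputs for which the search for a zero succeeds is recognizable. -/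
theorem rec_start {f : ℕ → ℕ → ℕ} (hf : Primrec₂ f) : ∃ P : Set Reg, Rec P ∧
    ∀ n : ℕ, (n • Pi.single 0 1 : Reg) ∈ P ↔ ∃ k, f n k = 0 := by
  have hf' := Nat.Primrec'.prim_iff₂.2 hf
  have h1 := rec_primrec hf' (fun i => i.1) 2
  have h2 := (h1.and (Rec.zero 2)).exs 1 2
  refine ⟨_, h2, fun n => ?_⟩
  constructor
  · rintro ⟨y, ⟨⟨v, hv, h3⟩, h4⟩, hy⟩
    have h5 := hy 0 (by simp)
    have h6 := hv 0
    have h4' : y 2 = 0 := h4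
    rw [h4'] at h3
    refine ⟨v.tail.head, ?_⟩
    have h7 : n = v.head := by
      rw [← List.Vector.get_zero]
      have h8 : y 0 = (v.get 0 : ℤ) := h6
      rw [h8] at h5
      simpa using h5.symm
    rw [h7]
    exact_mod_cast h3.symm
  · rintro ⟨k, hk⟩
    refine ⟨fun i => if i = 0 then n else if i = 1 then k else 0,
      ⟨⟨n ::ᵥ k ::ᵥ List.Vector.nil, ?_, ?_⟩, ?_⟩, ?_⟩
    · intro i
      fin_cases i <;> rfl
    · simp [hk]
    · simp
    · intro i hi
      rcases hi with hi | hi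
      · obtain rfl : i = 0 := by omega
        simp
      · have h1 : i ≠ 0 := by omega
        have h2 : i ≠ 1 := by omega
        simp [h1, h2]

theorem exists_instance {f : ℕ → ℕ → ℕ} (hf : Primrec₂ f) :
    ∃ (A : List (BWord × UWord)) (D : List BWord) (wl ws : BWord), ∀ n : ℕ,
      WGAttackerWins (A.map fun p => (FreeGroup.mk p.1, FreeGroup.mk p.2))
        (D.map fun v => ((FreeGroup.mk v : F2), (1 : F1)))
        (FreeGroup.mk ((fun l => wl ++ l)^[n] ws), 1) ↔ ∃ k, f n k = 0 := by
  obtain ⟨P, ⟨R, T, hR, hT, hP⟩, hPf⟩ := rec_start hf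
  let e₀ : Reg := Pi.single 0 1
  let e : List Reg := 0 :: e₀ :: R.map (fun r => r.2.1)
  obtain ⟨L, hL⟩ := exists_moves R T e
  let W : List (Lt × Bool) := [(Lt.s (.p P), true), (Lt.l e₀, true)]
  obtain ⟨c, hc⟩ : ∃ c : Lt → ℤ, Set.InjOn c (Let L W) := by
    obtain ⟨c, hc⟩ := Set.countable_iff_exists_injOn.1 (Let_finite L W).countable
    exact ⟨fun a => c a, fun a ha b hb h => hc ha hb (by simpa using h)⟩
  refine ⟨(Av c L).map fun p => (p.1.toWord, p.2.toWord), (Dv c).map fun p => p.1.toWord,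
    (emb c (FreeGroup.of (Lt.l e₀))).toWord, (emb c (FreeGroup.of (Lt.s (.p P)))).toWord, ?_⟩
  intro n
  have hA : ((Av c L).map fun p => (p.1.toWord, p.2.toWord)).map
      (fun p => ((FreeGroup.mk p.1 : F2), (FreeGroup.mk p.2 : F1))) = Av c L := by
    simp [List.map_map, Function.comp_def, FreeGroup.mk_toWord]
  have hD : ((Dv c).map fun p => p.1.toWord).map
      (fun v => ((FreeGroup.mk v : F2), (1 : F1))) = Dv c := by
    simp [Dv, FreeGroup.mk_toWord]
  have hw : FreeGroup.mk ((fun l => (emb c (FreeGroup.of (Lt.l e₀))).toWord ++ l)^[n]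
      (emb c (FreeGroup.of (Lt.s (.p P)))).toWord) =
      emb c (val ((Lt.s (.p P), true) :: lg (List.replicate n e₀))) := by
    have h1 : val (lg (List.replicate n e₀)) = FreeGroup.of (Lt.l e₀) ^ n := by
      induction n with
      | zero => rfl
      | succ n ih =>
        rw [pow_succ, ← ih, ← val_cons_true]
        rfl
    rw [val_cons_true, h1, map_mul, map_pow]
    clear h1
    induction n with
    | zero => simp [FreeGroup.mk_toWord]
    | succ n ih =>
      rw [Function.iterate_succ_apply', ← FreeGroup.mul_mk, ih, FreeGroup.mk_toWord, pow_succ',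
        mul_assoc]
  have hsum : (List.replicate n e₀).sum = n • e₀ := by simp
  rw [hA, hD, hw, ← hPf, show (1 : F1) = rho 0 from rfl]
  constructor
  · intro h
    by_contra hn
    have hwr : Wrong (.p P) (List.replicate n e₀).sum 0 := ⟨by rwa [hsum], rfl⟩
    refine not_wins_inv c hL hR hT hc (red_start _ _) ?_ (Inv.legit hwr) h
    intro a ha
    rcases List.mem_cons.1 ha with rfl | ha
    · simp [W]
    · obtain ⟨d, hd, rfl⟩ := List.mem_map.1 ha
      rw [List.eq_of_mem_replicate hd]
      simp [W]
  · intro h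
    refine wins_holds c hL (by simp [e]) ?_ (hP _ h) _ ?_ hsum
    · intro P δ Q₁ Q₂ h
      simp only [e, List.mem_cons, List.mem_map]
      exact Or.inr (Or.inr ⟨_, h, rfl⟩)
    · intro δ hδ
      rw [List.eq_of_mem_replicate hδ]
      simp [e]

end WG

/-- It is undecidable whether Attacker has a winning strategy in the Word Game on pairs of
group words, with first components over a binary free group alphabet and second components
over a unary group alphabet, Defender's second components being the identity, starting from
a pair `(w, 1)`. -/
theorem word_game_pairs_undecidable :
    ¬ ComputablePred (fun inst : WGInstance =>
      WGAttackerWins (inst.1.map fun p => (FreeGroup.mk p.1, FreeGroup.mk p.2))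
        (inst.2.1.map fun v => ((FreeGroup.mk v : F2), (1 : F1)))
        (FreeGroup.mk inst.2.2, 1)) := by
  intro hcomp
  let g : ℕ → ℕ → ℕ := fun n k =>
    if (Nat.Partrec.Code.evaln k (Denumerable.ofNat Nat.Partrec.Code n) 0).isSome = true
    then 0 else 1
  have hg : Primrec₂ g := by
    have h1 : Primrec fun p : ℕ × ℕ =>
        Nat.Partrec.Code.evaln p.2 (Denumerable.ofNat Nat.Partrec.Code p.1) 0 :=
      Nat.Partrec.Code.primrec_evaln.comp
        ((Primrec.snd.pair ((Primrec.ofNat _).comp Primrec.fst)).pair (Primrec.const 0))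
    exact Primrec.ite (Primrec.eq.comp (Primrec.option_isSome.comp h1) (Primrec.const true))
      (Primrec.const 0) (Primrec.const 1)
  obtain ⟨A, D, wl, ws, h⟩ := WG.exists_instance hg
  refine ComputablePred.halting_problem 0 ?_
  refine ComputablePred.computable_of_manyOneReducible (q := _) ?_ hcomp
  refine ⟨fun c => (A, D, (fun l => wl ++ l)^[Encodable.encode c] ws), ?_, ?_⟩
  · have h1 : Primrec fun c : Nat.Partrec.Code => (fun l => wl ++ l)^[Encodable.encode c] ws :=
      Primrec.nat_iterate Primrec.encode (Primrec.const ws)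
        (Primrec.list_append.comp₂ (Primrec₂.const wl) Primrec₂.right)
    exact ((Primrec.const A).pair ((Primrec.const D).pair h1)).to_comp
  · intro c
    refine Iff.trans ?_ (h (Encodable.encode c)).symm
    have h2 : ∀ k, g (Encodable.encode c) k = 0 ↔ (Nat.Partrec.Code.evaln k c 0).isSome = true := by
      intro k
      simp only [g, Denumerable.ofNat_encode]
      split_ifs with h3 <;> simp [h3]
    simp only [h2]
    constructor
    · intro hd
      obtain ⟨x, hx⟩ := Part.dom_iff_mem.1 hd
      obtain ⟨k, hk⟩ := Nat.Partrec.Code.evaln_complete.1 hx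
      exact ⟨k, Option.isSome_iff_exists.2 ⟨x, hk⟩⟩
    · rintro ⟨k, hk⟩
      obtain ⟨x, hx⟩ := Option.isSome_iff_exists.1 hk
      exact Part.dom_iff_mem.2 ⟨x, Nat.Partrec.Code.evaln_sound hx⟩
end

section
/- It is undecidable whether Attacker has a winning strategy in the Matrix Game of dimension four: the predicate on encoded instances (Attacker's finite list of matrices MU₁, …, MU_r ∈ ℤ^{4×4}, Defender's finite list of matrices MV₁, …, MV_s ∈ ℤ^{4×4}, and an initial vector x₀ ∈ ℤ⁴) asserting that Attacker has a winning strategy is not a computable predicate. -/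
/-- An encoding of a `4 × 4` integer matrix as a function. -/
abbrev MCode : Type := Fin 4 → Fin 4 → ℤ

/-- An encoded instance of the Matrix Game of dimension four: Attacker's finite list of
matrices, Defender's finite list of matrices, and the initial vector `x₀ ∈ ℤ⁴`. -/
abbrev MGInstance : Type := List MCode × List MCode × (Fin 4 → ℤ)

/-- The configuration (a vector in `ℤ⁴`) after `k` rounds of the Matrix Game, starting from
`x0`, when Defender plays the sequence of matrices `δ` and Attacker follows the strategy
`st` (a function of the finite history of Defender's choices so far): in each round
Defender's matrix is applied first, then Attacker's. -/
def mgPos (x0 : Fin 4 → ℤ) (δ : ℕ → MCode) (st : List MCode → MCode) : ℕ → Fin 4 → ℤ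
  | 0 => x0
  | k + 1 =>
    (Matrix.of (st ((List.range (k + 1)).map δ))).mulVec
      ((Matrix.of (δ k)).mulVec (mgPos x0 δ st k))

/-- Attacker has a winning strategy in the Matrix Game with Attacker's matrix list `A`,
Defender's matrix list `D` and initial vector `x0`: there is a strategy, choosing a matrix
from `A` for every finite history of Defender's choices, such that every infinite play
consistent with it returns to the initial vector `x0` after some Attacker move. -/
def MGAttackerWins (A D : List MCode) (x0 : Fin 4 → ℤ) : Prop :=
  ∃ st : List MCode → MCode,
    (∀ hist, (∀ M ∈ hist, M ∈ D) → st hist ∈ A) ∧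
    ∀ δ : ℕ → MCode, (∀ i, δ i ∈ D) → ∃ n, mgPos x0 δ st (n + 1) = x0

set_option linter.unusedSectionVars false
set_option autoImplicit false

namespace MGU

open Turing

/-- Symbols of the cyclic words simulating a Turing machine. -/
inductive TSym (Γ Q : Type) : Type
  | tp : Γ → TSym Γ Q
  | st : Q → TSym Γ Q
  | hsh : TSym Γ Q
  | fin : TSym Γ Q

theorem TSym.finite (Γ Q : Type) [Finite Γ] [Finite Q] : Finite (TSym Γ Q) := by
  let f : TSym Γ Q → (Γ ⊕ Q) ⊕ Bool := fun s => match s with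
    | .tp a => .inl (.inl a)
    | .st q => .inl (.inr q)
    | .hsh => .inr true
    | .fin => .inr false
  refine Finite.of_injective f ?_
  intro x y h
  cases x <;> cases y <;> simp_all [f]

section core

variable {Γ Λ : Type} [Inhabited Γ] [Inhabited Λ] (M : TM0.Machine Γ Λ) (S : Set Λ)

open TSym

/-- The production rules: consume the left word at the front, append the right word. -/
inductive Rule : List (TSym Γ S) → List (TSym Γ S) → Prop
  | copy (x) : Rule [x] [x]
  | extR : Rule [hsh] [tp default, hsh]
  | extL : Rule [hsh] [hsh, tp default]
  | right (q q' : S) (a : Γ) : M q a = some (q'.1, TM0.Stmt.move Dir.right) →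
      Rule [st q, tp a] [tp a, st q']
  | left (q q' : S) (a c : Γ) : M q a = some (q'.1, TM0.Stmt.move Dir.left) →
      Rule [tp c, st q, tp a] [st q', tp c, tp a]
  | write (q q' : S) (a b : Γ) : M q a = some (q'.1, TM0.Stmt.write b) →
      Rule [st q, tp a] [st q', tp b]
  | halt (q : S) (a : Γ) : M q a = none → Rule [st q, tp a] [fin]
  | erase (x) : Rule [fin, x] [fin]
  | done : Rule [fin] []

theorem Rule.len {l r : List (TSym Γ S)} (h : Rule M S l r) : l.length ≤ 3 ∧ r.length ≤ 3 := by
  cases h <;> simp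

theorem rules_finite [Finite Γ] [Finite S] :
    {p : List (TSym Γ S) × List (TSym Γ S) | Rule M S p.1 p.2}.Finite := by
  have := TSym.finite Γ S
  have h := List.finite_length_le (TSym Γ S) 3
  refine (h.prod h).subset ?_
  intro p hp
  exact Rule.len M S hp

/-- The canonical word of a configuration. -/
def word (q : S) (l r : List Γ) : List (TSym Γ S) :=
  st q :: (r.map tp ++ hsh :: l.reverse.map tp)

/-- The queue relation generated by the rules. -/
def Q (w w' : List (TSym Γ S)) : Prop :=
  ∃ rs : List (List (TSym Γ S) × List (TSym Γ S)), (∀ p ∈ rs, Rule M S p.1 p.2) ∧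
    w ++ rs.flatMap Prod.snd = rs.flatMap Prod.fst ++ w'

variable {M S}

theorem Q.trans {a b c : List (TSym Γ S)} (h1 : Q M S a b) (h2 : Q M S b c) : Q M S a c := by
  obtain ⟨r1, h1, e1⟩ := h1
  obtain ⟨r2, h2, e2⟩ := h2
  refine ⟨r1 ++ r2, ?_, ?_⟩
  · intro p hp
    rcases List.mem_append.1 hp with h | h
    · exact h1 p h
    · exact h2 p h
  · rw [List.flatMap_append, List.flatMap_append, ← List.append_assoc, e1, List.append_assoc, e2,
      List.append_assoc]

theorem Q.rule {l r : List (TSym Γ S)} (h : Rule M S l r) (u : List (TSym Γ S)) :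
    Q M S (l ++ u) (u ++ r) :=
  ⟨[(l, r)], by simpa using h, by simp⟩

theorem Q.rot (u v : List (TSym Γ S)) : Q M S (u ++ v) (v ++ u) := by
  refine ⟨u.map fun x => ([x], [x]), ?_, ?_⟩
  · intro p hp
    obtain ⟨x, -, rfl⟩ := List.mem_map.1 hp
    exact Rule.copy x
  · have h1 : (u.map fun x => (([x], [x]) : List (TSym Γ S) × List (TSym Γ S))).flatMap Prod.snd
        = u := by
      simp [List.flatMap_map]
    have h2 : (u.map fun x => (([x], [x]) : List (TSym Γ S) × List (TSym Γ S))).flatMap Prod.fst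
        = u := by
      simp [List.flatMap_map]
    rw [h1, h2, List.append_assoc]

theorem Q.ofRot {w w' : List (TSym Γ S)} (h : w ~r w') : Q M S w w' := by
  obtain ⟨n, hn, rfl⟩ := List.isRotated_iff_mod.1 h
  rw [List.rotate_eq_drop_append_take hn]
  conv_lhs => rw [← List.take_append_drop n w]
  exact Q.rot _ _

/-- cyclic application of a rule -/
theorem Q.app {l r : List (TSym Γ S)} (h : Rule M S l r) (u : List (TSym Γ S))
    {w w' : List (TSym Γ S)} (h1 : w ~r l ++ u) (h2 : r ++ u ~r w') : Q M S w w' :=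
  (Q.ofRot h1).trans ((Q.rule h u).trans (Q.ofRot (List.isRotated_append.trans h2)))

theorem Q.fin (u : List (TSym Γ S)) : Q M S (fin :: u) [] := by
  induction u with
  | nil => exact Q.rule Rule.done []
  | cons x u ih =>
    exact (Q.app (Rule.erase x) u (List.IsRotated.refl _) (List.IsRotated.refl _)).trans ih

theorem mk_append_default (l : List Γ) : ListBlank.mk (l ++ [default]) = ListBlank.mk l := by
  symm
  exact Quotient.sound' (Or.inl ⟨1, rfl⟩)

theorem Q.ext (q : S) (l r : List Γ) :
    Q M S (word S q l r) (word S q (l ++ [default]) (r ++ [default])) := by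
  have h1 : Q M S (word S q l r) (word S q l (r ++ [default])) := by
    refine Q.app Rule.extR (l.reverse.map tp ++ st q :: r.map tp) ?_ ?_
    · have := List.isRotated_append (l := st q :: r.map tp)
        (l' := (hsh :: l.reverse.map tp : List (TSym Γ S)))
      simpa [word] using this
    · have := List.isRotated_append (l' := st q :: (r.map tp ++ [tp default]))
        (l := (hsh :: l.reverse.map tp : List (TSym Γ S)))
      have h2 := List.isRotated_append (l := [tp default])
        (l' := (hsh :: l.reverse.map tp ++ st q :: r.map tp : List (TSym Γ S)))
      refine List.IsRotated.trans ?_ (List.IsRotated.trans h2 ?_)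
      · simp [List.IsRotated.refl]
      · simpa [word] using this
  refine h1.trans ?_
  refine Q.app Rule.extL (l.reverse.map tp ++ st q :: (r ++ [default]).map tp) ?_ ?_
  · have := List.isRotated_append (l := st q :: (r ++ [default]).map tp)
        (l' := (hsh :: l.reverse.map tp : List (TSym Γ S)))
    simpa [word] using this
  · have := List.isRotated_append (l' := st q :: (r ++ [default]).map tp)
        (l := (hsh :: (l ++ [default]).reverse.map tp : List (TSym Γ S)))
    simpa [word] using this

theorem cons_exists (r : List Γ) (d : Γ) : ∃ a r', r ++ [d] = a :: r' := by
  cases r <;> simp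

theorem step_eq (q : Λ) (l r : List Γ) (a : Γ) :
    TM0.step M ⟨q, Tape.mk' (ListBlank.mk l) (ListBlank.mk (a :: r))⟩ =
    (M q a).map fun p => ⟨p.1, match p.2 with
      | TM0.Stmt.move d => (Tape.mk' (ListBlank.mk l) (ListBlank.mk (a :: r))).move d
      | TM0.Stmt.write b => Tape.mk' (ListBlank.mk l) (ListBlank.mk (b :: r))⟩ := by
  simp only [TM0.step, Tape.mk'_head, ListBlank.head_mk, List.headI_cons]
  rfl

theorem mv_right (l r : List Γ) (a : Γ) :
    (Tape.mk' (ListBlank.mk l) (ListBlank.mk (a :: r))).move Dir.right =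
      Tape.mk' (ListBlank.mk (a :: l)) (ListBlank.mk r) := by
  rw [Tape.move_right_mk']; simp

theorem mv_left (l r : List Γ) (c : Γ) :
    (Tape.mk' (ListBlank.mk (c :: l)) (ListBlank.mk r)).move Dir.left =
      Tape.mk' (ListBlank.mk l) (ListBlank.mk (c :: r)) := by
  rw [Tape.move_left_mk']; simp

/-- Completeness -/
theorem complete (ss : TM0.Supports M S) {c c' : TM0.Cfg Γ Λ}
    (h : StateTransition.Reaches (TM0.step M) c c') (hc' : TM0.step M c' = none) :
    ∀ (q : S) (l r : List Γ), c = ⟨q, Tape.mk' (ListBlank.mk l) (ListBlank.mk r)⟩ →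
      Q M S (word S q l r) [] := by
  induction h using Relation.ReflTransGen.head_induction_on with
  | refl =>
    rintro q l r rfl
    refine (Q.ext q l r).trans ?_
    rw [← mk_append_default r] at hc'
    obtain ⟨a, r', e⟩ := cons_exists r default
    rw [e] at hc' ⊢
    rw [step_eq, Option.map_eq_none_iff] at hc'
    refine Q.trans (Q.app (Rule.halt q a hc') _ (List.IsRotated.refl _) (List.IsRotated.refl _)) ?_
    exact Q.fin _
  | head h1 h2 ih =>
    rintro q l r rfl
    refine (Q.ext q l r).trans ?_
    rw [← mk_append_default r, ← mk_append_default l] at h1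
    obtain ⟨a, r', e⟩ := cons_exists r default
    obtain ⟨c, l', e'⟩ := cons_exists l default
    rw [e, e'] at h1
    rw [e, e']
    rw [step_eq, Option.mem_def, Option.map_eq_some_iff] at h1
    obtain ⟨⟨q', s⟩, hM, rfl⟩ := h1
    have hq' : q' ∈ S := ss.2 hM q.2
    rcases s with (d | d) | b
    · simp only [mv_left] at ih
      refine Q.trans ?_ (ih ⟨q', hq'⟩ _ _ rfl)
      refine Q.app (Rule.left q ⟨q', hq'⟩ a c hM) (r'.map tp ++ hsh :: l'.reverse.map tp) ?_ ?_
      · have := List.isRotated_append (l := st q :: tp a :: (r'.map tp ++ hsh :: l'.reverse.map tp))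
          (l' := ([tp c] : List (TSym Γ S)))
        simpa [word] using this
      · simp [word, List.IsRotated.refl]
    · simp only [mv_right] at ih
      refine Q.trans ?_ (ih ⟨q', hq'⟩ _ _ rfl)
      refine Q.app (Rule.right q ⟨q', hq'⟩ a hM) (r'.map tp ++ hsh :: (c :: l').reverse.map tp)
        ?_ ?_
      · simp [word, List.IsRotated.refl]
      · have := List.isRotated_append
          (l' := st ⟨q', hq'⟩ :: (r'.map tp ++ hsh :: (c :: l').reverse.map tp))
          (l := ([tp a] : List (TSym Γ S)))
        simpa [word] using this
    · refine Q.trans ?_ (ih ⟨q', hq'⟩ _ _ rfl)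
      refine Q.app (Rule.write q ⟨q', hq'⟩ a b hM) (r'.map tp ++ hsh :: (c :: l').reverse.map tp)
        ?_ ?_
      · simp [word, List.IsRotated.refl]
      · simp [word, List.IsRotated.refl]

theorem uniq {α : Type} {a : α} {u v : List α} (h : a :: u ~r a :: v) (hv : a ∉ v) : u = v := by
  obtain ⟨n, hn, e⟩ := List.isRotated_iff_mod.1 h.symm
  rw [List.rotate_eq_drop_append_take hn] at e
  rcases n with _ | n
  · simpa using e.symm
  · simp only [List.drop_succ_cons, List.take_succ_cons] at e
    rcases hd : v.drop n with _ | ⟨b, t⟩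
    · rw [hd] at e
      have : v.take n = v := by
        have := List.take_append_drop n v
        rwa [hd, List.append_nil] at this
      rw [this] at e
      simpa using e.symm
    · rw [hd] at e
      simp only [List.cons_append, List.cons.injEq] at e
      refine absurd ?_ hv
      have : b ∈ v.drop n := by rw [hd]; simp
      rw [← e.1]
      exact List.mem_of_mem_drop this

/-- Invariant of the queue while the computation has not been shown to halt. -/
def Inv (M : TM0.Machine Γ Λ) (S : Set Λ) (c0 : TM0.Cfg Γ Λ) (w : List (TSym Γ S)) : Prop :=
  3 ≤ w.length ∧ ∃ (q : S) (l r : List Γ),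
    StateTransition.Reaches (TM0.step M) c0 ⟨q, Tape.mk' (ListBlank.mk l) (ListBlank.mk r)⟩ ∧
    w ~r word S q l r

/-- The machine halts from `c0`. -/
def Halts (M : TM0.Machine Γ Λ) (c0 : TM0.Cfg Γ Λ) : Prop :=
  ∃ c, StateTransition.Reaches (TM0.step M) c0 c ∧ TM0.step M c = none

theorem st_of_mem {q q' : S} {l r : List Γ} (h : st q' ∈ word S q l r) : q' = q := by
  simpa [word] using h

theorem split_tp {a : Γ} {r l : List Γ} {u : List (TSym Γ S)}
    (e : tp a :: u = r.map tp ++ hsh :: l.reverse.map tp) :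
    ∃ r', r = a :: r' ∧ u = r'.map tp ++ hsh :: l.reverse.map tp := by
  rcases r with _ | ⟨b, r'⟩
  · simp at e
  · simp only [List.map_cons, List.cons_append, List.cons.injEq, TSym.tp.injEq] at e
    exact ⟨r', by rw [e.1], e.2⟩

theorem inv_hash {q : S} {l r : List Γ} {u : List (TSym Γ S)} (h : hsh :: u ~r word S q l r) :
    u = l.reverse.map tp ++ st q :: r.map tp := by
  apply uniq (a := hsh)
  · refine h.trans ?_
    have := List.isRotated_append (l := st q :: r.map tp)
        (l' := (hsh :: l.reverse.map tp : List (TSym Γ S)))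
    simpa [word] using this
  · simp

theorem inv_st {q : S} {l r : List Γ} {u : List (TSym Γ S)} (h : st q :: u ~r word S q l r) :
    u = r.map tp ++ hsh :: l.reverse.map tp := by
  apply uniq (a := st q) h
  simp

theorem inv_step {c0 : TM0.Cfg Γ Λ} {lhs rhs u : List (TSym Γ S)} (hr : Rule M S lhs rhs)
    (hi : Inv M S c0 (lhs ++ u)) (nh : ¬ Halts M c0) : Inv M S c0 (u ++ rhs) := by
  obtain ⟨hlen, q, l, r, hreach, hrot⟩ := hi
  cases hr with
  | copy x =>
    exact ⟨by simpa using hlen, q, l, r, hreach, List.isRotated_append.trans hrot⟩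
  | extR =>
    refine ⟨by simp at hlen ⊢; omega, q, l, r ++ [default], ?_, ?_⟩
    · rwa [mk_append_default]
    · have := inv_hash hrot
      subst this
      have := List.isRotated_append (l := l.reverse.map tp)
        (l' := (st q :: (r ++ [default]).map tp ++ [hsh] : List (TSym Γ S)))
      simpa [word] using this
  | extL =>
    refine ⟨by simp at hlen ⊢; omega, q, l ++ [default], r, ?_, ?_⟩
    · rwa [mk_append_default]
    · have := inv_hash hrot
      subst this
      have := List.isRotated_append (l := l.reverse.map tp)
        (l' := (st q :: r.map tp ++ [hsh, tp default] : List (TSym Γ S)))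
      simpa [word] using this
  | right q1 q' a hM =>
    obtain rfl : q1 = q := st_of_mem (hrot.mem_iff.1 (by simp))
    obtain ⟨r', rfl, rfl⟩ := split_tp (inv_st hrot)
    refine ⟨by simp at hlen ⊢; omega, q', a :: l, r', hreach.tail ?_, ?_⟩
    · rw [step_eq, hM]; simp
    · have := List.isRotated_append (l' := ([st q'] : List (TSym Γ S)))
        (l := (r'.map tp ++ hsh :: (a :: l).reverse.map tp : List (TSym Γ S)))
      simpa [word] using this
  | left q1 q' a c hM =>
    obtain rfl : q1 = q := st_of_mem (hrot.mem_iff.1 (by simp))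
    have h2 : st q1 :: tp a :: (u ++ [tp c]) ~r word S q1 l r := by
      refine List.IsRotated.trans ?_ hrot
      have := List.isRotated_append (l := (st q1 :: tp a :: u))
        (l' := ([tp c] : List (TSym Γ S)))
      simpa using this
    obtain ⟨r', rfl, e⟩ := split_tp (inv_st h2)
    rcases l with _ | ⟨c', l'⟩
    · exfalso
      have := congrArg List.getLast? e
      simp at this
    · rw [List.reverse_cons, List.map_append, ← List.cons_append, ← List.append_assoc] at e
      obtain ⟨rfl, e2⟩ := List.append_inj' e rfl
      obtain rfl : c = c' := by simpa using e2
      refine ⟨by simp at hlen ⊢; omega, q', l', c :: a :: r', hreach.tail ?_, ?_⟩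
      · rw [step_eq, hM]; simp
      · have := List.isRotated_append (l' := ([st q', tp c, tp a] : List (TSym Γ S)))
          (l := (r'.map tp ++ hsh :: l'.reverse.map tp : List (TSym Γ S)))
        simpa [word] using this
  | write q1 q' a b hM =>
    obtain rfl : q1 = q := st_of_mem (hrot.mem_iff.1 (by simp))
    obtain ⟨r', rfl, rfl⟩ := split_tp (inv_st hrot)
    refine ⟨by simp at hlen ⊢; omega, q', l, b :: r', hreach.tail ?_, ?_⟩
    · rw [step_eq, hM]; simp
    · have := List.isRotated_append (l' := ([st q', tp b] : List (TSym Γ S)))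
        (l := (r'.map tp ++ hsh :: l.reverse.map tp : List (TSym Γ S)))
      simpa [word] using this
  | halt q1 a hM =>
    obtain rfl : q1 = q := st_of_mem (hrot.mem_iff.1 (by simp))
    obtain ⟨r', rfl, rfl⟩ := split_tp (inv_st hrot)
    exact absurd ⟨_, hreach, by rw [step_eq, hM]; rfl⟩ nh
  | erase x =>
    have := hrot.mem_iff.1 (show fin ∈ _ by simp)
    simp [word] at this
  | done =>
    have := hrot.mem_iff.1 (show fin ∈ _ by simp)
    simp [word] at this

theorem sound {c0 : TM0.Cfg Γ Λ} (nh : ¬ Halts M c0)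
    (rs : List (List (TSym Γ S) × List (TSym Γ S))) :
    ∀ w, Inv M S c0 w → (∀ p ∈ rs, Rule M S p.1 p.2) →
      w ++ rs.flatMap Prod.snd ≠ rs.flatMap Prod.fst := by
  induction rs with
  | nil =>
    intro w hw _ e
    have := hw.1
    simp at e
    simp [e] at this
  | cons p rs ih =>
    intro w hw hrs e
    have hp := hrs p (by simp)
    have hl : p.1 <+: w := by
      refine List.prefix_of_prefix_length_le (l₃ := w ++ (p :: rs).flatMap Prod.snd) ?_ ?_ ?_
      · rw [e, List.flatMap_cons]; exact List.prefix_append _ _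
      · exact List.prefix_append _ _
      · exact (Rule.len M S hp).1.trans hw.1
    obtain ⟨u, rfl⟩ := hl
    refine ih (u ++ p.2) (inv_step hp hw nh) (fun p' hp' => hrs p' (by simp [hp'])) ?_
    simp only [List.flatMap_cons, List.append_assoc] at e ⊢
    exact List.append_cancel_left e

/-- The matching equation is solvable iff the machine halts. -/
theorem match_iff (ss : TM0.Supports M S) (q : S) (r : List Γ) (hr : 1 ≤ r.length) :
    (∃ rs : List (List (TSym Γ S) × List (TSym Γ S)), (∀ p ∈ rs, Rule M S p.1 p.2) ∧
      word S q [] r ++ rs.flatMap Prod.snd = rs.flatMap Prod.fst) ↔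
    Halts M ⟨q, Tape.mk' (ListBlank.mk []) (ListBlank.mk r)⟩ := by
  constructor
  · rintro ⟨rs, hrs, e⟩
    by_contra nh
    refine sound nh rs _ ⟨?_, q, [], r, Relation.ReflTransGen.refl, List.IsRotated.refl _⟩ hrs e
    simp [word]; omega
  · rintro ⟨c, h1, h2⟩
    obtain ⟨rs, h, e⟩ := complete ss h1 h2 q [] r rfl
    exact ⟨rs, h, by simpa using e⟩

end core
section matrices

variable {α : Type} (k : ℕ) (d : α → ℕ)

/-- Value of a word in base `k`. -/
def val (w : List α) : ℕ := w.foldl (fun x s => k * x + d s) 0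

theorem val_snoc (w : List α) (s : α) : val k d (w ++ [s]) = k * val k d w + d s := by
  simp [val]

theorem val_append (w l : List α) :
    val k d (w ++ l) = k ^ l.length * val k d w + val k d l := by
  induction l using List.reverseRecOn with
  | nil => simp [val]
  | append_singleton l s ih =>
    rw [← List.append_assoc, val_snoc, ih, val_snoc, List.length_append, List.length_singleton]
    ring

theorem val_inj (hd : Function.Injective d) (h1 : ∀ s, 1 ≤ d s) (h2 : ∀ s, d s < k)
    (w : List α) : ∀ w', val k d w = val k d w' → w = w' := by
  induction w using List.reverseRecOn with
  | nil =>
    intro w' h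
    induction w' using List.reverseRecOn with
    | nil => rfl
    | append_singleton w' s _ =>
      rw [val_snoc] at h
      have := h1 s
      simp [val] at h
      omega
  | append_singleton w s ih =>
    intro w' h
    induction w' using List.reverseRecOn with
    | nil =>
      rw [val_snoc] at h
      have := h1 s
      simp [val] at h
      omega
    | append_singleton w' s' _ =>
      rw [val_snoc, val_snoc] at h
      have e := congrArg (· % k) h
      simp only [Nat.mul_add_mod, Nat.mod_eq_of_lt (h2 _)] at e
      have hk : 0 < k := lt_of_le_of_lt (Nat.zero_le _) (h2 s)
      have h3 : k * val k d w = k * val k d w' := by omega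
      rw [hd e, ih w' (Nat.eq_of_mul_eq_mul_left hk h3)]

/-- Matrix of a rule. -/
def ruleM (p : List α × List α) : MCode :=
  ![![(k : ℤ) ^ p.2.length, 0, (val k d p.2 : ℤ), 0],
    ![0, (k : ℤ) ^ p.1.length, (val k d p.1 : ℤ), 0],
    ![0, 0, 1, 0],
    ![0, 0, 0, 0]]

/-- Start matrix. -/
def startM (n : ℤ) : MCode :=
  fun i j => if j = 3 then (if i = 0 then n else if i = 2 then 1 else 0) else 0

/-- Final matrix. -/
def finM : MCode :=
  ![![1, -1, 0, 0], ![0, 0, 0, 0], ![0, 0, 0, 0], ![0, 0, 1, 0]]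

/-- Initial vector. -/
def x0 : Fin 4 → ℤ := ![0, 0, 0, 1]

/-- Defender's only matrix. -/
def idM : MCode := fun i j => if i = j then 1 else 0

theorem idM_mul (x : Fin 4 → ℤ) : (Matrix.of idM).mulVec x = x := by
  have : Matrix.of idM = (1 : Matrix (Fin 4) (Fin 4) ℤ) := by
    ext i j; simp [idM, Matrix.one_apply]
  rw [this, Matrix.one_mulVec]

theorem ruleM_mul (p : List α × List α) (x : Fin 4 → ℤ) :
    (Matrix.of (ruleM k d p)).mulVec x =
      ![(k : ℤ) ^ p.2.length * x 0 + val k d p.2 * x 2,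
        (k : ℤ) ^ p.1.length * x 1 + val k d p.1 * x 2, x 2, 0] := by
  funext i
  fin_cases i <;> simp [ruleM, Matrix.mulVec, dotProduct, Fin.sum_univ_four]

theorem startM_mul (n : ℤ) (x : Fin 4 → ℤ) :
    (Matrix.of (startM n)).mulVec x = ![n * x 3, 0, x 3, 0] := by
  funext i
  fin_cases i <;> simp [startM, Matrix.mulVec, dotProduct]

theorem finM_mul (x : Fin 4 → ℤ) :
    (Matrix.of finM).mulVec x = ![x 0 - x 1, 0, 0, x 2] := by
  funext i
  fin_cases i <;> simp [finM, Matrix.mulVec, dotProduct, Fin.sum_univ_four]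
  ring

/-- One-player reachability gives a winning strategy and conversely. -/
theorem wins_of_list (A : List MCode) (hA : A ≠ []) (Ms : List MCode) (hMs : ∀ m ∈ Ms, m ∈ A)
    (hne : Ms ≠ []) (x : Fin 4 → ℤ)
    (h : Ms.foldl (fun y m => (Matrix.of m).mulVec y) x = x) :
    MGAttackerWins A [idM] x := by
  obtain ⟨m0, hm0⟩ := List.exists_mem_of_ne_nil A hA
  refine ⟨fun hist => Ms.getD (hist.length - 1) m0, ?_, ?_⟩
  · intro hist _
    simp only [List.getD_eq_getElem?_getD]
    rcases hg : Ms[hist.length - 1]? with _ | m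
    · simpa using hm0
    · simpa using hMs m (List.mem_of_getElem? hg)
  · intro δ hδ
    have key : ∀ n, n ≤ Ms.length →
        mgPos x δ (fun hist => Ms.getD (hist.length - 1) m0) n =
          (Ms.take n).foldl (fun y m => (Matrix.of m).mulVec y) x := by
      intro n
      induction n with
      | zero => intro _; simp [mgPos]
      | succ n ih =>
        intro hn
        have h1 : δ n = idM := by simpa using hδ n
        have h2 : n < Ms.length := hn
        rw [mgPos, h1, idM_mul, ih (by omega), List.take_succ_eq_append_getElem h2,
          List.foldl_append]
        simp [h2]
    have hl : 0 < Ms.length := List.length_pos_iff.2 hne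
    refine ⟨Ms.length - 1, ?_⟩
    rw [Nat.sub_add_cancel hl, key _ le_rfl, List.take_length, h]

theorem not_wins (A : List MCode) (x : Fin 4 → ℤ) (J : (Fin 4 → ℤ) → Prop) (hx : J x)
    (hJ : ∀ y, J y → ∀ m ∈ A, J ((Matrix.of m).mulVec y) ∧ (Matrix.of m).mulVec y ≠ x) :
    ¬ MGAttackerWins A [idM] x := by
  rintro ⟨s, hs, hw⟩
  have hd : ∀ n, s ((List.range n).map fun _ => idM) ∈ A := by
    intro n
    apply hs
    intro m hm
    simp at hm
    simp [hm.2]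
  have key : ∀ n, J (mgPos x (fun _ => idM) s n) := by
    intro n
    induction n with
    | zero => exact hx
    | succ n ih =>
      rw [mgPos, idM_mul]
      exact (hJ _ ih _ (hd _)).1
  obtain ⟨n, hn⟩ := hw (fun _ => idM) (by simp)
  rw [mgPos, idM_mul] at hn
  exact (hJ _ (key n) _ (hd _)).2 hn

theorem game_iff (hd : Function.Injective d) (h1 : ∀ s, 1 ≤ d s) (h2 : ∀ s, d s < k)
    (R : List (List α × List α)) (w0 : List α) :
    MGAttackerWins (startM (val k d w0) :: finM :: R.map (ruleM k d)) [idM] x0 ↔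
      ∃ rs : List (List α × List α), (∀ p ∈ rs, p ∈ R) ∧
        w0 ++ rs.flatMap Prod.snd = rs.flatMap Prod.fst := by
  constructor
  · intro hw
    by_contra hno
    refine not_wins _ x0 (fun x =>
      (∃ rs : List (List α × List α), (∀ p ∈ rs, p ∈ R) ∧
        x = ![(val k d (w0 ++ rs.flatMap Prod.snd) : ℤ), (val k d (rs.flatMap Prod.fst) : ℤ), 1, 0])
      ∨ (∃ z : ℤ, x = ![z, 0, 0, 1]) ∨ (x 2 = 0 ∧ x 3 = 0)) ?_ ?_ hw
    · exact Or.inr (Or.inl ⟨0, rfl⟩)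
    · intro y hy m hm
      have ne3 : ∀ v : Fin 4 → ℤ, v 3 = 0 → v ≠ x0 := by
        rintro v hv rfl
        simp [x0] at hv
      rcases List.mem_cons.1 hm with rfl | hm
      · rw [startM_mul]
        refine ⟨?_, ne3 _ (by simp)⟩
        rcases hy with ⟨rs, hrs, rfl⟩ | ⟨z, rfl⟩ | ⟨hc, ht⟩
        · right; right; simp
        · left; exact ⟨[], by simp, by simp [val]⟩
        · right; right; simp [ht]
      rcases List.mem_cons.1 hm with rfl | hm
      · rw [finM_mul]
        rcases hy with ⟨rs, hrs, rfl⟩ | ⟨z, rfl⟩ | ⟨hc, ht⟩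
        · refine ⟨Or.inr (Or.inl ⟨_, rfl⟩), ?_⟩
          intro e
          have e0 := congrFun e 0
          simp only [x0, Matrix.cons_val_zero, Matrix.cons_val_one, sub_eq_zero, Nat.cast_inj] at e0
          exact hno ⟨rs, hrs, val_inj k d hd h1 h2 _ _ e0⟩
        · exact ⟨by right; right; simp, ne3 _ (by simp)⟩
        · exact ⟨by right; right; simp [hc], ne3 _ (by simp [hc])⟩
      · obtain ⟨p, hp, rfl⟩ := List.mem_map.1 hm
        rw [ruleM_mul]
        refine ⟨?_, ne3 _ (by simp)⟩
        rcases hy with ⟨rs, hrs, rfl⟩ | ⟨z, rfl⟩ | ⟨hc, ht⟩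
        · left
          refine ⟨rs ++ [p], ?_, ?_⟩
          · intro p' hp'
            rcases List.mem_append.1 hp' with h | h
            · exact hrs _ h
            · simp at h; rwa [h]
          · simp only [List.flatMap_append, List.flatMap_cons, List.flatMap_nil, List.append_nil]
            rw [← List.append_assoc, val_append k d _ p.2, val_append k d _ p.1]
            simp
        · right; right; simp
        · right; right; simp [hc]
  · rintro ⟨rs, hrs, e⟩
    refine wins_of_list _ (by simp) (startM (val k d w0) :: (rs.map (ruleM k d) ++ [finM])) ?_
      (by simp) _ ?_
    · intro m hm
      simp only [List.mem_cons, List.mem_append, List.mem_map, List.not_mem_nil, or_false] at hm ⊢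
      rcases hm with h | ⟨p, hp, rfl⟩ | h
      · exact Or.inl h
      · exact Or.inr (Or.inr ⟨p, hrs p hp, rfl⟩)
      · exact Or.inr (Or.inl h)
    · have key : ∀ (rs : List (List α × List α)) (a b : List α),
          (rs.map (ruleM k d)).foldl (fun y m => (Matrix.of m).mulVec y)
            ![(val k d a : ℤ), (val k d b : ℤ), 1, 0] =
          ![(val k d (a ++ rs.flatMap Prod.snd) : ℤ), (val k d (b ++ rs.flatMap Prod.fst) : ℤ),
            1, 0] := by
        intro rs
        induction rs with
        | nil => intro a b; simp
        | cons p rs ih =>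
          intro a b
          rw [List.map_cons, List.foldl_cons, ruleM_mul]
          have := ih (a ++ p.2) (b ++ p.1)
          rw [val_append k d a, val_append k d b] at this
          simp only [List.flatMap_cons, ← List.append_assoc]
          rw [← this]
          simp
      have hs : (Matrix.of (startM (val k d w0))).mulVec x0 =
          ![(val k d w0 : ℤ), (val k d ([] : List α) : ℤ), 1, 0] := by
        rw [startM_mul]; simp [x0, val]
      rw [List.foldl_cons, List.foldl_append, hs, key, e]
      simp only [List.foldl_cons, List.foldl_nil, finM_mul]
      simp [x0]

end matrices
section machine

open Nat.Partrec (Code)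

/-- A partial recursive function on powers of two solving the halting problem. -/
theorem exists_tp_code : ∃ c : ToPartrec.Code, ∀ m : ℕ,
    (c.eval [2 ^ m]).Dom ↔ (Code.eval (Denumerable.ofNat Code m) 0).Dom := by
  let f : ℕ →. ℕ := fun n => (Nat.rfind fun m => Part.some (decide (2 ^ m = n))).bind
    fun m => Code.eval (Denumerable.ofNat Code m) 0
  have hpow : Primrec fun m : ℕ => 2 ^ m := by
    refine (Primrec.nat_rec₁ 1 (f := fun _ x => 2 * x) ?_).of_eq ?_
    · exact (Primrec.nat_mul.comp (Primrec.const 2) Primrec.snd).to₂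
    · intro n
      induction n with
      | zero => rfl
      | succ n ih => simp only [ih]; rw [pow_succ]; ring
  have hf : Partrec f := by
    refine Partrec.bind (Partrec.rfind ?_) ?_
    · have : Primrec₂ fun (n m : ℕ) => decide (2 ^ m = n) :=
        (Primrec.eq.comp (hpow.comp Primrec.snd) Primrec.fst).decide.to₂
      exact this.to_comp.partrec₂
    · exact (Nat.Partrec.Code.eval_part.comp ((Computable.ofNat Code).comp Computable.snd)
        (Computable.const 0)).to₂
  obtain ⟨c, hc⟩ := ToPartrec.Code.exists_code (Nat.Partrec'.part_iff₁.2 hf)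
  refine ⟨c, fun m => ?_⟩
  have h := hc ⟨[2 ^ m], rfl⟩
  have h2 : (c.eval [2 ^ m]) = pure <$> f (2 ^ m) := h
  have h3 : (Nat.rfind fun j => Part.some (decide (2 ^ j = 2 ^ m))) = Part.some m := by
    refine Part.eq_some_iff.2 (Nat.mem_rfind.2 ⟨by simp, fun {j} hj => ?_⟩)
    have hne : ¬ (2 ^ j = 2 ^ m) := fun h => by
      have := Nat.pow_right_injective (le_refl 2) h
      omega
    rw [decide_eq_false hne]
    exact Part.mem_some _
  have h4 : f (2 ^ m) = Code.eval (Denumerable.ofNat Code m) 0 := by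
    simp only [f, h3, Part.bind_some]
  rw [h2, h4]
  rfl

theorem trNat_two_pow (m : ℕ) : PartrecToTM2.trNat (2 ^ m) =
    List.replicate m PartrecToTM2.Γ'.bit0 ++ [PartrecToTM2.Γ'.bit1] := by
  induction m with
  | zero => simp [PartrecToTM2.trNat, PartrecToTM2.trNum, PartrecToTM2.trPosNum]
  | succ m ih =>
    have hp : ∃ p : PosNum, ((2 ^ m : ℕ) : Num) = Num.pos p := by
      rcases h : ((2 ^ m : ℕ) : Num) with _ | p
      · exfalso
        have := congrArg (fun z : Num => (z : ℕ)) h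
        have h3 : (2 ^ m : ℕ) = 0 := (Num.to_of_nat _).symm.trans this
        exact absurd h3 (by positivity)
      · exact ⟨p, rfl⟩
    obtain ⟨p, hp⟩ := hp
    have h2 : ((2 ^ (m + 1) : ℕ) : Num) = Num.pos p.bit0 := by
      rw [← Num.to_nat_inj]
      have h1 : (2 ^ m : ℕ) = ((Num.pos p : Num) : ℕ) :=
        (Num.to_of_nat _).symm.trans (congrArg (fun z : Num => (z : ℕ)) hp)
      have h3 : ((Num.pos p.bit0 : Num) : ℕ) = ((Num.pos p : Num) : ℕ) + ((Num.pos p : Num) : ℕ) :=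
        rfl
      rw [Num.to_of_nat, h3, ← h1, pow_succ]; ring
    unfold PartrecToTM2.trNat at ih ⊢
    rw [hp] at ih
    rw [h2, List.replicate_succ, List.cons_append, ← ih]
    rfl

theorem dom_iff_halts {Γ Λ : Type} [Inhabited Γ] [Inhabited Λ] (M : TM0.Machine Γ Λ)
    (l : List Γ) : (TM0.eval M l).Dom ↔
      Halts M ⟨default, Tape.mk' (ListBlank.mk []) (ListBlank.mk l)⟩ := by
  change (StateTransition.eval (TM0.step M) (TM0.init l)).Dom ↔ _
  rw [Part.dom_iff_mem]
  constructor
  · rintro ⟨c, hc⟩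
    exact ⟨c, StateTransition.mem_eval.1 hc⟩
  · rintro ⟨c, hc⟩
    exact ⟨c, StateTransition.mem_eval.2 hc⟩

theorem finite_stackAlphabet : Finite PartrecToTM2.Γ' :=
  Finite.of_fintype _

theorem finite_stackIndex : Finite PartrecToTM2.K' :=
  Finite.of_surjective (fun i : Fin 4 => if i = 0 then PartrecToTM2.K'.main else
    if i = 1 then PartrecToTM2.K'.rev else if i = 2 then PartrecToTM2.K'.aux else
      PartrecToTM2.K'.stack) (fun k => by
    cases k
    · exact ⟨0, rfl⟩
    · exact ⟨1, rfl⟩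
    · exact ⟨2, rfl⟩
    · exact ⟨3, rfl⟩)

/-- A fixed Turing machine with undecidable halting problem. -/
theorem exists_machine : ∃ (Γ Λ : Type) (_ : Inhabited Γ) (_ : Inhabited Λ)
    (M : TM0.Machine Γ Λ) (S : Set Λ) (A B C : Γ), Finite Γ ∧ Finite S ∧ TM0.Supports M S ∧
    ∀ m : ℕ, (Code.eval (Denumerable.ofNat Code m) 0).Dom ↔
      Halts M ⟨default, Tape.mk' (ListBlank.mk [])
        (ListBlank.mk (A :: B :: List.replicate m C))⟩ := by
  obtain ⟨c, hc⟩ := exists_tp_code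
  have := finite_stackAlphabet
  have := finite_stackIndex
  let inst : Inhabited PartrecToTM2.Λ' := ⟨PartrecToTM2.trNormal c PartrecToTM2.Cont'.halt⟩
  have hs2 : TM2.Supports PartrecToTM2.tr (PartrecToTM2.codeSupp c PartrecToTM2.Cont'.halt) :=
    PartrecToTM2.tr_supports c _
  have hs1 := TM2to1.tr_supports PartrecToTM2.tr hs2
  have hs0 := TM1to0.tr_supports _ hs1
  let g : PartrecToTM2.Γ' → ∀ _ : PartrecToTM2.K', Option PartrecToTM2.Γ' :=
    fun a => Function.update (fun _ => none) PartrecToTM2.K'.main (some a)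
  refine ⟨TM2to1.Γ' PartrecToTM2.K' (fun _ => PartrecToTM2.Γ'), _, inferInstance, inferInstance,
    TM1to0.tr (TM2to1.tr PartrecToTM2.tr), _, (true, g .cons), (false, g .bit1), (false, g .bit0),
    inferInstanceAs (Finite (Bool × (PartrecToTM2.K' → Option PartrecToTM2.Γ'))),
    Finset.finite_toSet _, hs0, fun m => ?_⟩
  rw [← hc, ← dom_iff_halts, TM1to0.tr_eval]
  have e : (((true, g .cons) :: (false, g .bit1) :: List.replicate m (false, g .bit0)) :
      List (TM2to1.Γ' PartrecToTM2.K' (fun _ => PartrecToTM2.Γ'))) =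
      TM2to1.trInit PartrecToTM2.K'.main (PartrecToTM2.trList [2 ^ m]) := by
    have e1 : (PartrecToTM2.trList [2 ^ m]).reverse =
        PartrecToTM2.Γ'.cons :: PartrecToTM2.Γ'.bit1 :: List.replicate m PartrecToTM2.Γ'.bit0 := by
      simp [PartrecToTM2.trList, trNat_two_pow]
    unfold TM2to1.trInit
    rw [e1]
    change _ = (true, g .cons) :: (false, g .bit1) ::
      List.map (fun a => (false, g a)) (List.replicate m PartrecToTM2.Γ'.bit0)
    rw [List.map_replicate]
    rfl
  rw [e]
  refine Iff.trans ?_ (TM2to1.tr_eval_dom (M := PartrecToTM2.tr) (k := PartrecToTM2.K'.main) _).symm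
  have h := PartrecToTM2.tr_eval c [2 ^ m]
  have h1 : PartrecToTM2.init c [2 ^ m] =
      TM2.init PartrecToTM2.K'.main (PartrecToTM2.trList [2 ^ m]) := by
    unfold PartrecToTM2.init TM2.init
    congr 1
    funext k
    cases k <;> rfl
  rw [h1] at h
  change _ ↔ (StateTransition.eval _ _).Dom
  rw [h]
  rfl

end machine

theorem primrec_intCast : Primrec (fun n : ℕ => (n : ℤ)) := by
  have h : Primrec fun n : ℕ => Encodable.encode (n : ℤ) := by
    refine (Primrec.nat_mul.comp (Primrec.const 2) Primrec.id).of_eq ?_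
    intro n
    rfl
  exact Primrec.encode_iff.1 h

theorem primrec_startM {f : ℕ → ℕ} (hf : Primrec f) : Primrec fun m => startM (f m : ℤ) := by
  refine Primrec.fin_curry.2 ?_
  refine Primrec.fin_curry.2 ?_
  have hn : Primrec fun p : (ℕ × Fin 4) × Fin 4 => ((f p.1.1 : ℕ) : ℤ) :=
    primrec_intCast.comp (hf.comp (Primrec.fst.comp Primrec.fst))
  have hi : Primrec fun p : (ℕ × Fin 4) × Fin 4 => p.1.2 := Primrec.snd.comp Primrec.fst
  have hj : Primrec fun p : (ℕ × Fin 4) × Fin 4 => p.2 := Primrec.snd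
  exact Primrec.ite (Primrec.eq.comp hj (Primrec.const 3))
    (Primrec.ite (Primrec.eq.comp hi (Primrec.const 0)) hn
      (Primrec.ite (Primrec.eq.comp hi (Primrec.const 2)) (Primrec.const 1) (Primrec.const 0)))
    (Primrec.const 0)

theorem main : ¬ ComputablePred (fun inst : MGInstance =>
      MGAttackerWins inst.1 inst.2.1 inst.2.2) := by
  intro hcomp
  obtain ⟨Γ, Λ, i1, i2, M, S, A, B, C, hΓ, hS, ss, hM⟩ := exists_machine
  have hfin := TSym.finite Γ S
  obtain ⟨N, ⟨e⟩⟩ := Finite.exists_equiv_fin (TSym Γ S)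
  let k : ℕ := N + 1
  let d : TSym Γ S → ℕ := fun s => (e s).1 + 1
  have hd : Function.Injective d := by
    intro x y h
    simp only [d, add_left_inj] at h
    exact e.injective (Fin.ext h)
  have hd1 : ∀ s, 1 ≤ d s := fun s => Nat.le_add_left _ _
  have hd2 : ∀ s, d s < k := fun s => Nat.succ_lt_succ (e s).2
  have hR := rules_finite M S
  let R := hR.toFinset.toList
  have hRm : ∀ p, p ∈ R ↔ Rule M S p.1 p.2 := by
    intro p
    simp [R]
  let q0 : S := ⟨default, ss.1⟩
  let v : ℕ → ℕ := fun m => val k d (word S q0 [] (A :: B :: List.replicate m C))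
  have hv : Primrec v := by
    have h1 : Primrec fun m : ℕ =>
        val k d ([TSym.st q0, TSym.tp A, TSym.tp B] ++ List.replicate m (TSym.tp C)) := by
      refine (Primrec.nat_rec₁ (val k d [TSym.st q0, TSym.tp A, TSym.tp B])
        (f := fun _ x => k * x + d (TSym.tp C)) ?_).of_eq ?_
      · exact (Primrec.nat_add.comp (Primrec.nat_mul.comp (Primrec.const k) Primrec.snd)
          (Primrec.const _)).to₂
      · intro n
        induction n with
        | zero => simp
        | succ n ih =>
          rw [List.replicate_succ', ← List.append_assoc, val_snoc, ← ih]
    refine (Primrec.nat_add.comp (Primrec.nat_mul.comp (Primrec.const k) h1)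
      (Primrec.const (d TSym.hsh))).of_eq ?_
    intro m
    rw [← val_snoc]
    simp [v, word]
  have hred : (fun m : ℕ => (Nat.Partrec.Code.eval (Denumerable.ofNat Nat.Partrec.Code m) 0).Dom) ≤₀
      (fun inst : MGInstance => MGAttackerWins inst.1 inst.2.1 inst.2.2) := by
    refine ⟨fun m => (startM (v m : ℤ) :: finM :: R.map (ruleM k d), [idM], x0), ?_, ?_⟩
    · exact (Primrec.pair (Primrec.list_cons.comp (primrec_startM hv) (Primrec.const _))
        (Primrec.const _)).to_comp
    · intro m
      simp only [v]
      rw [hM m, game_iff k d hd hd1 hd2, ← match_iff ss q0 _ (by simp)]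
      simp only [hRm]
  have h1 := ComputablePred.computable_of_manyOneReducible hred hcomp
  refine ComputablePred.halting_problem 0 (ComputablePred.computable_of_manyOneReducible
    (q := fun m : ℕ => (Nat.Partrec.Code.eval (Denumerable.ofNat Nat.Partrec.Code m) 0).Dom)
    ⟨Encodable.encode, Computable.encode, fun c => ?_⟩ h1)
  change _ ↔ (Nat.Partrec.Code.eval (Denumerable.ofNat _ (Encodable.encode c)) 0).Dom
  rw [Denumerable.ofNat_encode]

end MGU

/-- It is undecidable whether Attacker has a winning strategy in the Matrix Game of
dimension four. -/
theorem matrix_game_dim4_undecidable :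
    ¬ ComputablePred (fun inst : MGInstance =>
      MGAttackerWins inst.1 inst.2.1 inst.2.2) := MGU.main
end
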